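/- arXiv:2103.15799 — 4 statements merged into one kernel-verified Lean document; each statement's English description precedes it below -/
import Mathlib

section
/- A complete first-order theory T is NIP if and only if for every family (aᵢ, b̄ᵢ : i ∈ ℚ) of tuples in a model of T in which each aᵢ is a single element, and which is L*-indiscernible when indexed by the random ordered bipartite graph G*, the two sequences (aᵢ : i ∈ ℚ) and (b̄ᵢ : i ∈ ℚ) are mutually indiscernible. -/
open FirstOrder FirstOrder.Language

universe u v

/-- An elementary extension of `M`: a structure together with an elementary embedding of `M`
into it. -/
structure ElemExt (L : FirstOrder.Language.{u, v}) (M : Type (max u v)) [L.Structure M] where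
  carrier : Type (max u v)
  [str : L.Structure carrier]
  emb : M ↪ₑ[L] carrier

attribute [instance] ElemExt.str

/-- A formula `φ(x̄; ȳ)` (without parameters) has the order property with respect to a theory
`T` if in some model of `T` there are sequences `(āᵢ : i < ω)` and `(b̄ⱼ : j < ω)` such that
`φ(āᵢ; b̄ⱼ)` holds iff `i < j`. -/
def FormulaHasOP {L : FirstOrder.Language.{u, v}} (T : L.Theory) {α β : Type*}
    (φ : L.Formula (α ⊕ β)) : Prop :=
  ∃ (N : FirstOrder.Language.Theory.ModelType.{u, v, max u v} T)
    (a : ℕ → α → N) (b : ℕ → β → N),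
    ∀ i j : ℕ, φ.Realize (Sum.elim (a i) (b j)) ↔ i < j

/-- A formula `φ(x̄; ȳ)` (without parameters) has the independence property with respect to a
theory `T` if in some model of `T` there are tuples `(āᵢ : i < ω)` and `(b̄_S : S ⊆ ω)` such
that `φ(āᵢ; b̄_S)` holds iff `i ∈ S`. -/
def FormulaHasIP {L : FirstOrder.Language.{u, v}} (T : L.Theory) {α β : Type*}
    (φ : L.Formula (α ⊕ β)) : Prop :=
  ∃ (N : FirstOrder.Language.Theory.ModelType.{u, v, max u v} T)
    (a : ℕ → α → N) (b : Set ℕ → β → N),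
    ∀ (i : ℕ) (S : Set ℕ), φ.Realize (Sum.elim (a i) (b S)) ↔ i ∈ S

/-- A formula `φ(x̄; ȳ)` with parameters `c` from `M` has the order property if in some
elementary extension of `M` there are sequences `(āᵢ : i < ω)` and `(b̄ⱼ : j < ω)` such that
`φ(āᵢ; b̄ⱼ; c)` holds iff `i < j`. -/
def HasOPWithParams {L : FirstOrder.Language.{u, v}} {M : Type (max u v)} [L.Structure M]
    {α β γ : Type*} (φ : L.Formula ((α ⊕ β) ⊕ γ)) (c : γ → M) : Prop :=
  ∃ (N : ElemExt L M) (a : ℕ → α → N.carrier) (b : ℕ → β → N.carrier),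
    ∀ i j : ℕ, φ.Realize (Sum.elim (Sum.elim (a i) (b j)) (N.emb ∘ c)) ↔ i < j

/-- A formula `φ(x̄; ȳ)` with parameters `c` from `M` has the independence property if in some
elementary extension of `M` there are tuples `(āᵢ : i < ω)` and `(b̄_S : S ⊆ ω)` such that
`φ(āᵢ; b̄_S; c)` holds iff `i ∈ S`. -/
def HasIPWithParams {L : FirstOrder.Language.{u, v}} {M : Type (max u v)} [L.Structure M]
    {α β γ : Type*} (φ : L.Formula ((α ⊕ β) ⊕ γ)) (c : γ → M) : Prop :=
  ∃ (N : ElemExt L M) (a : ℕ → α → N.carrier) (b : Set ℕ → β → N.carrier),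
    ∀ (i : ℕ) (S : Set ℕ), φ.Realize (Sum.elim (Sum.elim (a i) (b S)) (N.emb ∘ c)) ↔ i ∈ S

/-- The family of tuples `(c̄ᵢ : i ∈ ι)` is an indiscernible sequence over the set `A`:
any two strictly increasing tuples of indices realize the same formulas with parameters
from `A`. -/
def IsIndiscernibleOver {L : FirstOrder.Language.{u, v}} {M : Type (max u v)} [L.Structure M]
    {ι : Type*} [LinearOrder ι] {γ : Type*} (c : ι → γ → M) (A : Set M) : Prop :=
  ∀ (n m : ℕ) (i j : Fin n → ι), StrictMono i → StrictMono j →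
    ∀ p : Fin m → M, (∀ l, p l ∈ A) →
      ∀ φ : L.Formula (Fin n × γ ⊕ Fin m),
        φ.Realize (Sum.elim (fun v : Fin n × γ => c (i v.1) v.2) p) ↔
          φ.Realize (Sum.elim (fun v : Fin n × γ => c (j v.1) v.2) p)

/-- The family of tuples `(c̄ᵢ : i ∈ ι)` is an indiscernible sequence. -/
def IsIndiscernible {L : FirstOrder.Language.{u, v}} {M : Type (max u v)} [L.Structure M]
    {ι : Type*} [LinearOrder ι] {γ : Type*} (c : ι → γ → M) : Prop :=
  IsIndiscernibleOver (L := L) c ∅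

/-- Two families of tuples are mutually indiscernible if each is indiscernible over the union
of the tuples of the other. -/
def MutuallyIndiscernible {L : FirstOrder.Language.{u, v}} {M : Type (max u v)} [L.Structure M]
    {ι : Type*} [LinearOrder ι] {γ δ : Type*} (a : ι → γ → M) (b : ι → δ → M) : Prop :=
  IsIndiscernibleOver (L := L) a (⋃ i, Set.range (b i)) ∧
    IsIndiscernibleOver (L := L) b (⋃ i, Set.range (a i))

/-- The family of tuples `(c̄ᵢ : i ∈ ι)` is totally indiscernible: any two tuples of distinct
indices (in any order) realize the same formulas. -/
def IsTotallyIndiscernible {L : FirstOrder.Language.{u, v}} {M : Type (max u v)} [L.Structure M]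
    {ι : Type*} [LinearOrder ι] {γ : Type*} (c : ι → γ → M) : Prop :=
  ∀ (n : ℕ) (i j : Fin n → ι), Function.Injective i → Function.Injective j →
    ∀ φ : L.Formula (Fin n × γ),
      φ.Realize (fun v : Fin n × γ => c (i v.1) v.2) ↔
        φ.Realize (fun v : Fin n × γ => c (j v.1) v.2)

/-- A set in a linear order is dense (in the order) and unbounded above and below. -/
def DenseUnbounded {α : Type*} [LinearOrder α] (S : Set α) : Prop :=
  (∀ x y : α, x < y → ∃ z ∈ S, x < z ∧ z < y) ∧ (∀ x : α, ∃ z ∈ S, z < x) ∧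
    (∀ x : α, ∃ z ∈ S, x < z)

/-- `R : α → β → Prop` presents (a structure isomorphic to) the random ordered bipartite
graph `G*`, i.e. the Fraïssé limit of finite ordered bipartite graphs: both parts are
countable nonempty dense linear orders without endpoints and the edge relation is generic. -/
def IsRandomOBG {α β : Type*} [LinearOrder α] [LinearOrder β] (R : α → β → Prop) : Prop :=
  Countable α ∧ Countable β ∧ Nonempty α ∧ Nonempty β ∧
    (∀ F G : Finset β, Disjoint F G →
      DenseUnbounded {x : α | (∀ f ∈ F, R x f) ∧ ∀ g ∈ G, ¬R x g}) ∧
    (∀ F G : Finset α, Disjoint F G →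
      DenseUnbounded {y : β | (∀ f ∈ F, R f y) ∧ ∀ g ∈ G, ¬R g y})

/-- An element of the random ordered bipartite graph `G*`, whose two parts `U(G*)` and
`V(G*)` are both identified with `ℚ`: `Sum.inl` is the `U`-part, `Sum.inr` the `V`-part. -/
abbrev GStarIdx : Type := ℚ ⊕ ℚ

/-- The index of the pair `(s, q)`: in the `U`-part if `s = true`, in the `V`-part
otherwise. -/
def mkIdx {n : ℕ} (s : Fin n → Bool) (q : Fin n → ℚ) : Fin n → GStarIdx := fun k =>
  bif s k then Sum.inl (q k) else Sum.inr (q k)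

/-- Two pairs of elements of `G*` (with edge relation `R`) have the same quantifier-free
`L*`-type, where `L* = {U, ≤_U, V, ≤_V, R}`. -/
def SamePairType (R : ℚ → ℚ → Prop) :
    GStarIdx → GStarIdx → GStarIdx → GStarIdx → Prop
  | Sum.inl p, Sum.inl q, Sum.inl p', Sum.inl q' => (p ≤ q ↔ p' ≤ q') ∧ (q ≤ p ↔ q' ≤ p')
  | Sum.inr p, Sum.inr q, Sum.inr p', Sum.inr q' => (p ≤ q ↔ p' ≤ q') ∧ (q ≤ p ↔ q' ≤ p')
  | Sum.inl p, Sum.inr q, Sum.inl p', Sum.inr q' => R p q ↔ R p' q'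
  | Sum.inr q, Sum.inl p, Sum.inr q', Sum.inl p' => R p q ↔ R p' q'
  | _, _, _, _ => False

/-- Two tuples of elements of `G*` (with edge relation `R`) have the same quantifier-free
`L*`-type. -/
def SameQfType (R : ℚ → ℚ → Prop) {n : ℕ} (i j : Fin n → GStarIdx) : Prop :=
  ∀ k l : Fin n, SamePairType R (i k) (i l) (j k) (j l)

/-- The variables carried by a coordinate of a mixed tuple: a `U`-index carries an `x̄`-tuple
of length `da`, a `V`-index a `ȳ`-tuple of length `db`. -/
def MixVar (da db : ℕ) : Bool → Type
  | true => Fin da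
  | false => Fin db

/-- Choose the `a`-tuple or the `b`-tuple according to the side. -/
def pickSide {M : Type*} {da db : ℕ} (a : Fin da → M) (b : Fin db → M) :
    (s : Bool) → MixVar da db s → M
  | true, w => a w
  | false, w => b w

/-- The family `(āᵢ : i ∈ U(G*) ≅ ℚ) ∪ (b̄ⱼ : j ∈ V(G*) ≅ ℚ)`, indexed by the random ordered
bipartite graph `G*` with edge relation `R`, is `L*`-indiscernible: index tuples with the same
quantifier-free `L*`-type in `G*` realize the same `L`-formulas in `M`. -/
def IsLStarIndiscernible {L : FirstOrder.Language.{u, v}} {M : Type (max u v)} [L.Structure M]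
    (R : ℚ → ℚ → Prop) {da db : ℕ} (a : ℚ → Fin da → M) (b : ℚ → Fin db → M) : Prop :=
  ∀ (n : ℕ) (s : Fin n → Bool) (q q' : Fin n → ℚ),
    SameQfType R (mkIdx s q) (mkIdx s q') →
      ∀ φ : L.Formula ((k : Fin n) × MixVar da db (s k)),
        φ.Realize (fun v => pickSide (a (q v.1)) (b (q v.1)) (s v.1) v.2) ↔
          φ.Realize (fun v => pickSide (a (q' v.1)) (b (q' v.1)) (s v.1) v.2)

namespace NipRamsey

/-- Infinite Ramsey theorem for increasing `K`-tuples. -/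
theorem ramsey_inf {κ : Type} [Finite κ] : ∀ (K : ℕ) (c : (Fin K → ℕ) → κ),
    ∃ H : ℕ → ℕ, StrictMono H ∧ ∃ k : κ, ∀ h : Fin K → ℕ, StrictMono h → c (H ∘ h) = k
  | 0, c => ⟨id, strictMono_id, c Fin.elim0, fun h _ => by
      congr 1; exact funext fun i => i.elim0⟩
  | K + 1, c => by
    have ih := ramsey_inf (κ := κ) K
    have hsucc : StrictMono Nat.succ := fun a b h => Nat.succ_lt_succ h
    -- one step
    have step : ∀ H : {H : ℕ → ℕ // StrictMono H}, ∃ (H' : {H : ℕ → ℕ // StrictMono H}) (k : κ),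
        (∃ G : ℕ → ℕ, StrictMono G ∧ H'.1 = H.1 ∘ Nat.succ ∘ G) ∧
        ∀ h : Fin K → ℕ, StrictMono h →
          c (Fin.cons (H.1 0) (H'.1 ∘ h)) = k := by
      intro H
      obtain ⟨G, hG, k, hk⟩ := ih (fun h => c (Fin.cons (H.1 0) (H.1 ∘ Nat.succ ∘ h)))
      refine ⟨⟨H.1 ∘ Nat.succ ∘ G, H.2.comp (hsucc.comp hG)⟩, k,
        ⟨G, hG, rfl⟩, fun h hh => ?_⟩
      exact hk h hh
    choose nxt col hnxt hcol using step
    let S : ℕ → {H : ℕ → ℕ // StrictMono H} := fun n => Nat.rec ⟨id, strictMono_id⟩ (fun _ H => nxt H) n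
    have hS : ∀ n, S (n + 1) = nxt (S n) := fun n => rfl
    let x : ℕ → ℕ := fun n => (S n).1 0
    -- later elements are in the earlier reservoirs
    have hres : ∀ n m, n ≤ m → ∃ G : ℕ → ℕ, StrictMono G ∧ (S m).1 = (S n).1 ∘ G := by
      intro n m hnm
      induction m, hnm using Nat.le_induction with
      | base => exact ⟨id, strictMono_id, rfl⟩
      | succ m _ ih =>
        obtain ⟨G, hG, e⟩ := ih
        obtain ⟨G', hG', e'⟩ := hnxt (S m)
        refine ⟨G ∘ Nat.succ ∘ G', hG.comp (hsucc.comp hG'), ?_⟩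
        rw [hS, e', e]; rfl
    have hx : StrictMono x := by
      refine strictMono_nat_of_lt_succ fun n => ?_
      obtain ⟨G', hG', e'⟩ := hnxt (S n)
      change (S n).1 0 < (S (n+1)).1 0
      rw [hS, e']
      exact (S n).2 (Nat.succ_pos _)
    -- main homogeneity
    have hom : ∀ n (h : Fin K → ℕ), StrictMono h → (∀ i, n < h i) →
        c (Fin.cons (x n) (x ∘ h)) = col (S n) := by
      intro n h hh hn
      have : ∀ i, ∃ z, x (h i) = (S (n+1)).1 z := by
        intro i
        obtain ⟨G, hG, e⟩ := hres (n+1) (h i) (hn i)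
        exact ⟨G 0, by change (S (h i)).1 0 = _; rw [e]; rfl⟩
      choose z hz using this
      have hzm : StrictMono z := by
        intro i j hij
        have h1 := hx (hh hij)
        rw [hz, hz] at h1
        exact (S (n+1)).2.lt_iff_lt.1 h1
      have := hcol (S n) z hzm
      rw [← this]
      congr 2
      funext i
      exact hz i
    obtain ⟨k, hk⟩ := Finite.exists_infinite_fiber (fun n => col (S n))
    have hinf : ({n | col (S n) = k} : Set ℕ).Infinite := Set.infinite_coe_iff.1 hk
    refine ⟨x ∘ Nat.nth (fun n => col (S n) = k), hx.comp (Nat.nth_strictMono hinf), k, fun h hh => ?_⟩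
    have e : ((x ∘ Nat.nth (fun n => col (S n) = k)) ∘ h) =
        Fin.cons (x (Nat.nth (fun n => col (S n) = k) (h 0)))
          (x ∘ (Nat.nth (fun n => col (S n) = k) ∘ (h ∘ Fin.succ))) := by
      funext i
      refine Fin.cases ?_ (fun j => ?_) i <;> rfl
    rw [e, hom]
    · exact Nat.nth_mem_of_infinite hinf _
    · exact (Nat.nth_strictMono hinf).comp (hh.comp (Fin.strictMono_succ))
    · intro i
      exact (Nat.nth_strictMono hinf) (hh (Fin.succ_pos i))

/-- Two partial maps into linear orders have the same order type. -/
def OEq {A X Y : Type} [LinearOrder X] [LinearOrder Y] (t : A → Option X) (t' : A → Option Y) : Prop :=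
  (∀ a, t a = none ↔ t' a = none) ∧
  ∀ a b x y x' y', t a = some x → t b = some y → t' a = some x' → t' b = some y' →
    (x ≤ y ↔ x' ≤ y')

/-- normal form of a finite partial map into `ℕ`. -/
noncomputable def rk {A : Type} [Fintype A] (t : A → Option ℕ) (a : A) : ℕ :=
  open Classical in
  ((Finset.univ.filter (fun b => ∃ x y, t b = some x ∧ t a = some y ∧ x < y)).image t).card

theorem rk_lt {A : Type} [Fintype A] (t : A → Option ℕ) (a : A) (x : ℕ) (h : t a = some x) :
    rk t a < Fintype.card A := by
  classical
  unfold rk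
  refine lt_of_le_of_lt Finset.card_image_le ?_
  refine Finset.card_lt_univ_of_notMem (x := a) ?_
  simp [h]

theorem card_image_congr' {A X Y : Type} [DecidableEq X] [DecidableEq Y] (S : Finset A)
    (f : A → X) (g : A → Y) (h : ∀ a ∈ S, ∀ b ∈ S, f a = f b → g a = g b) :
    (S.image g).card ≤ (S.image f).card := by
  classical
  have : ∀ x : S.image f, ∃ a ∈ S, f a = x.1 := fun x => Finset.mem_image.1 x.2
  choose s hs hf using this
  rw [← Fintype.card_coe (S.image f), ← Finset.card_univ]
  refine (Finset.card_le_card (t := Finset.univ.image (fun x : S.image f => g (s x))) ?_).trans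
    Finset.card_image_le
  intro y hy
  obtain ⟨a, ha, rfl⟩ := Finset.mem_image.1 hy
  refine Finset.mem_image.2 ⟨⟨f a, Finset.mem_image_of_mem f ha⟩, Finset.mem_univ _, ?_⟩
  exact h _ (hs _) _ ha (hf _)

theorem OEq.symm {A X Y : Type} [LinearOrder X] [LinearOrder Y] {t : A → Option X}
    {t' : A → Option Y} (h : OEq t t') : OEq t' t :=
  ⟨fun a => (h.1 a).symm, fun a b x y x' y' h1 h2 h3 h4 => (h.2 a b x' y' x y h3 h4 h1 h2).symm⟩

theorem OEq.ex {A X Y : Type} [LinearOrder X] [LinearOrder Y] {t : A → Option X}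
    {t' : A → Option Y} (h : OEq t t') {a : A} {x : X} (hx : t a = some x) : ∃ y, t' a = some y := by
  rw [← Option.ne_none_iff_exists', Ne, ← h.1 a, hx]; simp

theorem rk_le {A : Type} [Fintype A] {t t' : A → Option ℕ} (h : OEq t t') (a : A) :
    rk t' a ≤ rk t a := by
  classical
  unfold rk
  have : (Finset.univ.filter (fun b => ∃ x y, t' b = some x ∧ t' a = some y ∧ x < y)) =
     (Finset.univ.filter (fun b => ∃ x y, t b = some x ∧ t a = some y ∧ x < y)) := by
    ext b
    simp only [Finset.mem_filter, Finset.mem_univ, true_and]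
    constructor
    · rintro ⟨x, y, h1, h2, h3⟩
      obtain ⟨x', h1'⟩ := h.symm.ex h1
      obtain ⟨y', h2'⟩ := h.symm.ex h2
      refine ⟨x', y', h1', h2', ?_⟩
      have := h.2 a b _ _ _ _ h2' h1' h2 h1
      by_contra hc
      exact absurd (this.1 (not_lt.1 hc)) (not_le.2 h3)
    · rintro ⟨x, y, h1, h2, h3⟩
      obtain ⟨x', h1'⟩ := h.ex h1
      obtain ⟨y', h2'⟩ := h.ex h2
      refine ⟨x', y', h1', h2', ?_⟩
      have := h.2 a b _ _ _ _ h2 h1 h2' h1'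
      by_contra hc
      exact absurd (this.2 (not_lt.1 hc)) (not_le.2 h3)
  rw [this]
  refine card_image_congr' _ _ _ fun b hb b' hb' e => ?_
  simp only [Finset.mem_filter, Finset.mem_univ, true_and] at hb hb'
  obtain ⟨x, y, h1, -⟩ := hb
  obtain ⟨x', y', h2, -⟩ := hb'
  obtain ⟨z, hz⟩ := h.ex h1
  obtain ⟨z', hz'⟩ := h.ex h2
  have hxx : x = x' := by rw [h1, h2] at e; exact Option.some.inj e
  rw [hz, hz']
  congr 1
  exact le_antisymm ((h.2 _ _ _ _ _ _ h1 h2 hz hz').1 hxx.le) ((h.2 _ _ _ _ _ _ h2 h1 hz' hz).1 hxx.ge)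

theorem rk_eq {A : Type} [Fintype A] {t t' : A → Option ℕ} (h : OEq t t') (a : A) :
    rk t' a = rk t a := le_antisymm (rk_le h a) (rk_le h.symm a)

theorem exists_normal {A : Type} [Fintype A] (t : A → Option ℕ) :
    ∃ h : Fin (Fintype.card A) → ℕ, StrictMono h ∧
      ∀ a x (hx : t a = some x), h ⟨rk t a, rk_lt t a x hx⟩ = x := by
  classical
  let I : Set ℕ := {x | ∃ a, t a = some x}
  have hI : I.Finite := by
    have : I ⊆ Set.range (fun a => (t a).getD 0) := by
      rintro x ⟨a, ha⟩; exact ⟨a, by simp [ha]⟩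
    exact (Set.finite_range _).subset this
  obtain ⟨B, hB⟩ := hI.bddAbove
  let p : ℕ → Prop := fun x => x ∈ I ∨ B < x
  have hp : ({x | p x} : Set ℕ).Infinite := by
    refine (Set.Ioi_infinite B).mono fun x hx => Or.inr hx
  refine ⟨fun i => Nat.nth p i, fun i j hij => Nat.nth_strictMono hp hij, fun a x hx => ?_⟩
  have hpx : p x := Or.inl ⟨a, hx⟩
  have : rk t a = Nat.count p x := by
    rw [Nat.count_eq_card_filter_range]
    unfold rk
    symm
    refine (Finset.card_image_of_injective _ (Option.some_injective ℕ)).symm.trans ?_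
    congr 1
    ext y
    simp only [Finset.mem_image, Finset.mem_filter, Finset.mem_range, Finset.mem_univ, true_and]
    constructor
    · rintro ⟨z, ⟨hz, hz' | hz'⟩, rfl⟩
      · obtain ⟨b, hb⟩ := hz'
        exact ⟨b, ⟨z, x, hb, hx, hz⟩, hb⟩
      · exact absurd (hB (⟨a, hx⟩ : x ∈ I)) (by omega)
    · rintro ⟨b, ⟨z, x', hb, hx', hz⟩, rfl⟩
      rw [hx] at hx'
      obtain rfl := Option.some.inj hx'
      exact ⟨z, ⟨hz, Or.inl ⟨b, hb⟩⟩, hb.symm⟩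
  change Nat.nth p (rk t a) = x
  rw [this, Nat.nth_count hpx]

/-- Ramsey theorem for order types of partial maps. -/
theorem ramsey_maps {A κ : Type} [Finite A] [Finite κ] (c : (A → Option ℕ) → κ) :
    ∃ H : ℕ → ℕ, StrictMono H ∧ ∀ t t' : A → Option ℕ, OEq t t' →
      c (fun a => (t a).map H) = c (fun a => (t' a).map H) := by
  classical
  have := Fintype.ofFinite A
  obtain ⟨H, hH, k, hk⟩ := ramsey_inf (κ := (A → Option (Fin (Fintype.card A))) → κ)
    (Fintype.card A) (fun h π => c (fun a => (π a).map h))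
  refine ⟨H, hH, fun t t' e => ?_⟩
  have key : ∀ t : A → Option ℕ, c (fun a => (t a).map H) = k (fun a =>
      if hx : ∃ x, t a = some x then some ⟨rk t a, rk_lt t a _ hx.choose_spec⟩ else none) := by
    intro t
    obtain ⟨h, hh, e⟩ := exists_normal t
    rw [← hk h hh]
    congr 1
    funext a
    by_cases hx : ∃ x, t a = some x
    · beta_reduce
      rw [dif_pos hx]
      have := e a _ hx.choose_spec
      simp only [Option.map_some, Function.comp]
      rw [this]
      conv_lhs => rw [hx.choose_spec]
      rfl
    · beta_reduce
      rw [dif_neg hx]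
      have : t a = none := by
        by_contra hc; exact hx (Option.ne_none_iff_exists'.1 hc)
      rw [this]; rfl
  rw [key t, key t']
  congr 1
  funext a
  by_cases hx : ∃ x, t a = some x
  · have hx' := e.ex hx.choose_spec
    rw [dif_pos hx, dif_pos hx']
    congr 2
    exact (rk_eq e a).symm
  · rw [dif_neg hx, dif_neg]
    rintro ⟨x, h⟩
    exact hx (e.symm.ex h)

end NipRamsey
namespace NipRamsey

theorem OEq.joint {A B : Type} {l : ℕ} {n : ℕ} {τ τ' : A → Option (Fin l)} {ρ ρ' : B → Option (Fin n)}
    (h1 : OEq τ τ') (h2 : OEq ρ ρ') :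
    OEq (Sum.elim (fun a => Option.map (fun i : Fin l => (i : ℕ)) (τ a))
        (fun b => Option.map (fun j : Fin n => l + (j : ℕ)) (ρ b)))
      (Sum.elim (fun a => Option.map (fun i : Fin l => (i : ℕ)) (τ' a))
        (fun b => Option.map (fun j : Fin n => l + (j : ℕ)) (ρ' b))) := by
  constructor
  · rintro (a | b)
    · simpa using h1.1 a
    · simpa using h2.1 b
  · rintro (a | a) (b | b) x y x' y' hx hy hx' hy' <;>
      simp only [Sum.elim_inl, Sum.elim_inr, Option.map_eq_some_iff] at hx hy hx' hy' <;>
      obtain ⟨i, hi, rfl⟩ := hx <;> obtain ⟨j, hj, rfl⟩ := hy <;>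
      obtain ⟨i', hi', rfl⟩ := hx' <;> obtain ⟨j', hj', rfl⟩ := hy'
    · have := h1.2 _ _ _ _ _ _ hi hj hi' hj'
      simpa using this
    · have := i.2; have := i'.2; constructor <;> intro <;> omega
    · have := j.2; have := j'.2; constructor <;> intro <;> omega
    · have := h2.2 _ _ _ _ _ _ hi hj hi' hj'
      simpa using this

theorem ramsey_two_inf {A B κ : Type} [Finite A] [Finite B] [Finite κ] (l n : ℕ)
    (d : (A → Option ℕ) → (B → Option ℕ) → κ) :
    ∃ (f : Fin l → ℕ) (g : Fin n → ℕ), StrictMono f ∧ StrictMono g ∧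
      ∀ (τ τ' : A → Option (Fin l)) (ρ ρ' : B → Option (Fin n)), OEq τ τ' → OEq ρ ρ' →
        d (fun a => (τ a).map f) (fun b => (ρ b).map g) =
        d (fun a => (τ' a).map f) (fun b => (ρ' b).map g) := by
  obtain ⟨H, hH, h⟩ := ramsey_maps (A := A ⊕ B) (κ := κ)
    (fun t => d (fun a => t (Sum.inl a)) (fun b => t (Sum.inr b)))
  refine ⟨fun i => H i, fun j => H (l + j), fun i j hij => hH hij,
    fun i j hij => hH (Nat.add_lt_add_left hij l), fun τ τ' ρ ρ' h1 h2 => ?_⟩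
  have := h _ _ (h1.joint h2)
  simpa [Function.comp_def] using this

/-- truncation -/
def toFin (N : ℕ) (x : ℕ) : Option (Fin N) := if h : x < N then some ⟨x, h⟩ else none

theorem ramsey_two {A B κ : Type} [Finite A] [Finite B] [Finite κ] (l n : ℕ) :
    ∃ N : ℕ, ∀ d : (A → Option (Fin N)) → (B → Option (Fin N)) → κ,
    ∃ (f : Fin l → Fin N) (g : Fin n → Fin N), StrictMono f ∧ StrictMono g ∧
      ∀ (τ τ' : A → Option (Fin l)) (ρ ρ' : B → Option (Fin n)), OEq τ τ' → OEq ρ ρ' →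
        d (fun a => (τ a).map f) (fun b => (ρ b).map g) =
        d (fun a => (τ' a).map f) (fun b => (ρ' b).map g) := by
  by_contra hcon
  push Not at hcon
  choose d hd using hcon
  let D : ℕ → (A → Option ℕ) → (B → Option ℕ) → κ := fun N t r =>
    d N (fun a => (t a).bind (toFin N)) (fun b => (r b).bind (toFin N))
  have hlim : ∀ t r, ∃ k, ∀ᶠ N in (Filter.hyperfilter ℕ : Filter ℕ), D N t r = k := by
    intro t r
    have : ∀ᶠ N in (Filter.hyperfilter ℕ : Filter ℕ), ∃ k, D N t r = k :=
      Filter.Eventually.of_forall fun N => ⟨_, rfl⟩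
    exact Ultrafilter.eventually_exists_iff.1 this
  choose E hE using hlim
  obtain ⟨f, g, hf, hg, hfg⟩ := ramsey_two_inf l n E
  have h1 : ∀ᶠ N in (Filter.hyperfilter ℕ : Filter ℕ), ∀ (τ : A → Option (Fin l)) (ρ : B → Option (Fin n)),
      D N (fun a => (τ a).map f) (fun b => (ρ b).map g) =
        E (fun a => (τ a).map f) (fun b => (ρ b).map g) := by
    rw [Filter.eventually_all]; intro τ
    rw [Filter.eventually_all]; intro ρ
    exact hE _ _
  have hgt : ∀ m : ℕ, ∀ᶠ N in (Filter.hyperfilter ℕ : Filter ℕ), m < N := by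
    intro m
    have : ∀ᶠ N in Filter.cofinite, m < N := by
      rw [Nat.cofinite_eq_atTop]; exact Filter.eventually_gt_atTop m
    exact Filter.hyperfilter_le_cofinite this
  have h2 : ∀ᶠ N in (Filter.hyperfilter ℕ : Filter ℕ), ∀ i, f i < N := by
    rw [Filter.eventually_all]; exact fun i => hgt _
  have h3 : ∀ᶠ N in (Filter.hyperfilter ℕ : Filter ℕ), ∀ i, g i < N := by
    rw [Filter.eventually_all]; exact fun i => hgt _
  obtain ⟨N, h1, h2, h3⟩ := (h1.and (h2.and h3)).exists
  obtain ⟨τ, τ', ρ, ρ', e1, e2, hne⟩ := hd N (fun i => ⟨f i, h2 i⟩) (fun i => ⟨g i, h3 i⟩)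
    (fun i j hij => hf hij) (fun i j hij => hg hij)
  have key : ∀ (τ : A → Option (Fin l)) (ρ : B → Option (Fin n)),
      D N (fun a => (τ a).map f) (fun b => (ρ b).map g) =
      d N (fun a => (τ a).map (fun i => ⟨f i, h2 i⟩)) (fun b => (ρ b).map (fun i => ⟨g i, h3 i⟩)) := by
    intro τ ρ
    change d N _ _ = _
    congr 1
    · funext a
      rcases hta : τ a with _ | i <;> simp [toFin, h2, hta]
    · funext a
      rcases hta : ρ a with _ | i <;> simp [toFin, h3, hta]
  apply hne
  rw [← key, ← key, h1, h1]
  exact hfg _ _ _ _ e1 e2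

/-- The partite lemma, by iterating Hales-Jewett. -/
def PL (A S : Type) (η : Type) : Prop :=
  ∀ (κ : Type) [Finite κ], ∃ (W : Type), Finite W ∧ ∀ F : (A → Option W) → (W → S) → κ,
    ∃ (idx : W → S ⊕ η) (e : η → W), (∀ v, idx (e v) = Sum.inr v) ∧
      ∀ (τ : A → Option η) (σ σ' : η → S), (∀ a v, τ a = some v → σ v = σ' v) →
        F (fun a => (τ a).map e) (fun w => Sum.elim id σ (idx w)) =
        F (fun a => (τ a).map e) (fun w => Sum.elim id σ' (idx w))

theorem PL_empty (A S : Type) : PL A S PEmpty := by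
  intro κ _
  refine ⟨PEmpty, inferInstance, fun F => ⟨fun w => w.elim, fun w => w.elim, fun w => w.elim, ?_⟩⟩
  intro τ σ σ' _
  rw [show σ = σ' from funext fun w => w.elim]

theorem PL_option (A S η : Type) [Finite A] [Finite S] (ih : PL A S η) : PL A S (Option η) := by
  classical
  intro κ _
  obtain ⟨W', hW', hF'⟩ := ih ((A → Prop) → S → κ)
  obtain ⟨ι, hι, hHJ⟩ := Combinatorics.Line.exists_mono_in_high_dimension S
    ((A → Option W') → (W' → S) → κ)
  refine ⟨W' ⊕ ι, inferInstance, fun F => ?_⟩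
  obtain ⟨ℓ, col, hcol⟩ := hHJ (fun y t' x' => F (fun a => (t' a).map Sum.inl) (Sum.elim x' y))
  obtain ⟨i0, hi0⟩ := ℓ.proper
  obtain ⟨idx', e', he', hinv⟩ := hF' (fun t' x' D s =>
    F (fun a => if D a then some (Sum.inr i0) else (t' a).map Sum.inl) (Sum.elim x' (ℓ s)))
  let idx : W' ⊕ ι → S ⊕ Option η := Sum.elim (fun w => Sum.map id some (idx' w))
    (fun i => match ℓ.idxFun i with
      | some s => Sum.inl s
      | none => Sum.inr none)
  let e : Option η → W' ⊕ ι := fun v => match v with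
    | none => Sum.inr i0
    | some v => Sum.inl (e' v)
  refine ⟨idx, e, ?_, ?_⟩
  · rintro (_ | v)
    · simp [idx, e, hi0]
    · simp [idx, e, he']
  · intro τ σ σ' hag
    have hE : ∀ σ : Option η → S, (fun w => Sum.elim id σ (idx w)) =
        Sum.elim (fun w => Sum.elim id (fun v => σ (some v)) (idx' w)) (ℓ (σ none)) := by
      intro σ
      funext w
      rcases w with w | i
      · simp only [idx, Sum.elim_inl]
        cases idx' w <;> simp
      · simp only [idx, Sum.elim_inr]
        rw [Combinatorics.Line.coe_apply]
        cases ℓ.idxFun i <;> simp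
    obtain ⟨D, hDdef⟩ : ∃ D : A → Prop, ∀ a, D a ↔ τ a = some none := ⟨_, fun _ => Iff.rfl⟩
    have ht : (fun a => (τ a).map e) = fun a => if D a then some (Sum.inr i0) else
        (((τ a).join).map e').map Sum.inl := by
      funext a
      by_cases h : τ a = some none
      · simp [hDdef, h, e]
      · simp only [hDdef, h, if_false]
        rcases hta : τ a with _ | _ | v
        · rfl
        · exact absurd hta h
        · rfl
    rw [hE, hE, ht]
    have key := hinv (fun a => (τ a).join) (fun v => σ (some v)) (fun v => σ' (some v)) (by
      intro a v hv
      refine hag a (some v) ?_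
      rcases hta : τ a with _ | _ | v'
      · simp [hta] at hv
      · simp [hta] at hv
      · simp [hta] at hv; rw [hv])
    by_cases hD : ∃ a, D a
    · obtain ⟨a, ha⟩ := hD
      rw [← hag a none ((hDdef a).1 ha)]
      exact congrFun (congrFun key D) (σ none)
    · have hD' : ∀ a, ¬ D a := fun a ha => hD ⟨a, ha⟩
      have k1 := congrFun (congrFun key D) (σ none)
      simp only [hD', if_false] at k1 ⊢
      rw [k1]
      have k2 := congrFun (congrFun ((hcol (σ none)).trans (hcol (σ' none)).symm)
        (fun a => ((τ a).join).map e')) (fun w => Sum.elim id (fun v => σ' (some v)) (idx' w))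
      exact k2

theorem PL_equiv (A S : Type) {η η' : Type} (f : η ≃ η') (ih : PL A S η) : PL A S η' := by
  intro κ _
  obtain ⟨W, hW, h⟩ := ih κ
  refine ⟨W, hW, fun F => ?_⟩
  obtain ⟨idx, e, he, hF⟩ := h F
  refine ⟨fun w => Sum.map id f (idx w), fun v => e (f.symm v), fun v => by simp [he], ?_⟩
  intro τ σ σ' hag
  have := hF (fun a => (τ a).map f.symm) (σ ∘ f) (σ' ∘ f) (by
    intro a v hv
    rw [Option.map_eq_some_iff] at hv
    obtain ⟨w, hw, rfl⟩ := hv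
    simpa using hag a w hw)
  have hh : ∀ σ : η' → S, (fun w => Sum.elim id σ (Sum.map id f (idx w))) =
      fun w => Sum.elim id (σ ∘ f) (idx w) := by
    intro σ; funext w; cases idx w <;> rfl
  rw [hh, hh]
  simpa [Function.comp_def] using this

theorem PL_all (A S : Type) [Finite A] [Finite S] (η : Type) [Finite η] : PL A S η :=
  Finite.induction_empty_option (P := PL A S) (fun f h => PL_equiv A S f h) (PL_empty A S)
    (fun h => PL_option A S _ h) η

/-- Structural Ramsey theorem for ordered bipartite graphs. -/
theorem bip_ramsey {A B κ : Type} [Finite A] [Finite B] [Finite κ] (l n : ℕ)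
    (R0 : Fin l → Fin n → Prop) :
    ∃ W : Type, Finite W ∧ ∀ c : (A → Option W) → (B → Option (W → Prop)) → κ,
      ∃ (e : Fin l → W) (g : Fin n → (W → Prop)), (∀ i j, g j (e i) ↔ R0 i j) ∧
        ∀ (τ τ' : A → Option (Fin l)) (ρ ρ' : B → Option (Fin n)), OEq τ τ' → OEq ρ ρ' →
          (∀ a b i j i' j', τ a = some i → ρ b = some j → τ' a = some i' → ρ' b = some j' →
            (R0 i j ↔ R0 i' j')) →
          c (fun a => (τ a).map e) (fun b => (ρ b).map g) =
          c (fun a => (τ' a).map e) (fun b => (ρ' b).map g) := by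
  classical
  obtain ⟨N, hN⟩ := ramsey_two (A := A) (B := B) (κ := (A → B → Prop) → κ) l n
  obtain ⟨W, hW, hP⟩ := PL_all A (Fin N → Prop) (Fin N) ((B → Option (Fin N)) → κ)
  refine ⟨W, hW, fun c => ?_⟩
  obtain ⟨idx, e, he, hF⟩ := hP (fun t x ρ => c t (fun b => (ρ b).map (fun j w => x w j)))
  let E : (Fin N → Fin N → Prop) → W → Fin N → Prop := fun σ w => Sum.elim id σ (idx w)
  let C : (A → Option (Fin N)) → (B → Option (Fin N)) → (Fin N → Fin N → Prop) → κ :=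
    fun τ ρ σ => c (fun a => (τ a).map e) (fun b => (ρ b).map (fun j w => E σ w j))
  have hC : ∀ τ ρ σ σ', (∀ a b v j, τ a = some v → ρ b = some j → (σ v j ↔ σ' v j)) →
      C τ ρ σ = C τ ρ σ' := by
    intro τ ρ σ σ' h
    let σ'' : Fin N → Fin N → Prop := fun v j => if ∃ b, ρ b = some j then σ v j else σ' v j
    have h1 : C τ ρ σ = C τ ρ σ'' := by
      change c _ _ = c _ _
      congr 1
      funext b
      rcases hb : ρ b with _ | j
      · rfl
      · simp only [Option.map_some]
        congr 1
        funext w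
        simp only [E]
        cases idx w with
        | inl s => rfl
        | inr v => simp only [Sum.elim_inr, σ'', if_pos (⟨b, hb⟩ : ∃ b, ρ b = some j)]
    have h2 : C τ ρ σ'' = C τ ρ σ' := by
      refine congrFun (hF τ σ'' σ' ?_) ρ
      intro a v hv
      funext j
      simp only [σ'']
      split_ifs with hj
      · obtain ⟨b, hb⟩ := hj
        exact propext (h a b v j hv hb)
      · rfl
    rw [h1, h2]
  let σP : (A → Option (Fin N)) → (B → Option (Fin N)) → (A → B → Prop) → Fin N → Fin N → Prop :=
    fun τ ρ P v j => ∃ a b, τ a = some v ∧ ρ b = some j ∧ P a b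
  obtain ⟨f, g, hf, hg, hfg⟩ := hN (fun τ ρ P => C τ ρ (σP τ ρ P))
  let σ : Fin N → Fin N → Prop := fun v j => ∃ i k, f i = v ∧ g k = j ∧ R0 i k
  have hσ : ∀ i k, σ (f i) (g k) ↔ R0 i k := by
    intro i k
    constructor
    · rintro ⟨i', k', h1, h2, h3⟩
      rwa [← hf.injective h1, ← hg.injective h2]
    · exact fun h => ⟨i, k, rfl, rfl, h⟩
  refine ⟨fun i => e (f i), fun k w => E σ w (g k), ?_, ?_⟩
  · intro i j
    simp only [E, he, Sum.elim_inr]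
    exact hσ i j
  · intro τ τ' ρ ρ' h1 h2 h3
    let P : A → B → Prop := fun a b => ∃ i j, τ a = some i ∧ ρ b = some j ∧ R0 i j
    have hP' : ∀ a b i' j', τ' a = some i' → ρ' b = some j' → (P a b ↔ R0 i' j') := by
      intro a b i' j' ha hb
      obtain ⟨i, hi⟩ := h1.symm.ex ha
      obtain ⟨j, hj⟩ := h2.symm.ex hb
      rw [← h3 a b i j i' j' hi hj ha hb]
      constructor
      · rintro ⟨i1, j1, h4, h5, h6⟩
        rw [hi] at h4; rw [hj] at h5
        rwa [Option.some.inj h4, Option.some.inj h5]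
      · exact fun h => ⟨i, j, hi, hj, h⟩
    have hP0 : ∀ a b i' j', τ a = some i' → ρ b = some j' → (P a b ↔ R0 i' j') := by
      intro a b i' j' ha hb
      constructor
      · rintro ⟨i1, j1, h4, h5, h6⟩
        rw [ha] at h4; rw [hb] at h5
        rwa [Option.some.inj h4, Option.some.inj h5]
      · exact fun h => ⟨i', j', ha, hb, h⟩
    have main : ∀ (τ : A → Option (Fin l)) (ρ : B → Option (Fin n)),
        (∀ a b i' j', τ a = some i' → ρ b = some j' → (P a b ↔ R0 i' j')) →
        c (fun a => (τ a).map (fun i => e (f i))) (fun b => (ρ b).map (fun k w => E σ w (g k))) =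
        C (fun a => (τ a).map f) (fun b => (ρ b).map g)
          (σP (fun a => (τ a).map f) (fun b => (ρ b).map g) P) := by
      intro τ ρ hP
      rw [← hC _ _ σ]
      · simp only [C, Option.map_map]; rfl
      · intro a b v j ha hb
        simp only [Option.map_eq_some_iff] at ha hb
        obtain ⟨i, hi, rfl⟩ := ha
        obtain ⟨k, hk, rfl⟩ := hb
        rw [hσ]
        constructor
        · intro h
          exact ⟨a, b, by simp [hi], by simp [hk], (hP a b i k hi hk).2 h⟩
        · rintro ⟨a', b', h4, h5, h6⟩
          simp only [Option.map_eq_some_iff] at h4 h5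
          obtain ⟨i', hi', e1⟩ := h4
          obtain ⟨k', hk', e2⟩ := h5
          have := (hP a' b' i' k' hi' hk').1 h6
          rwa [hf.injective e1, hg.injective e2] at this
    rw [main τ ρ hP0, main τ' ρ' hP']
    exact congrFun (hfg τ τ' ρ ρ' h1 h2) P

end NipRamsey

namespace NipModel

open NipRamsey

/-- Compactness for sets of formulas in the variables `X`. -/
theorem compact_real {L : FirstOrder.Language.{u, v}} (T : L.Theory) {X : Type} (Γ : Set (L.Formula X))
    (h : ∀ Γ0 : Finset (L.Formula X), (Γ0 : Set (L.Formula X)) ⊆ Γ →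
      ∃ (M : FirstOrder.Language.Theory.ModelType.{u, v, max u v} T) (w : X → M),
        ∀ ψ ∈ Γ0, ψ.Realize w) :
    ∃ (M : FirstOrder.Language.Theory.ModelType.{u, v, max u v} T) (w : X → M),
        ∀ ψ ∈ Γ, ψ.Realize w := by
  classical
  let T' : (L[[X]]).Theory := (L.lhomWithConstants X).onTheory T ∪ Formula.equivSentence '' Γ
  have hsat : T'.IsSatisfiable := by
    rw [Theory.isSatisfiable_iff_isFinitelySatisfiable]
    intro T0 hT0
    obtain ⟨M, w, hw⟩ := h ((T0.image Formula.equivSentence.symm).filter (· ∈ Γ)) (by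
      intro x hx; simp at hx; exact hx.2)
    let : (constantsOn X).Structure M := constantsOn.structure w
    have h1 : M ⊨ (L.lhomWithConstants X).onTheory T := (LHom.onTheory_model _ _).2 inferInstance
    have h2 : M ⊨ (T0 : (L[[X]]).Theory) := by
      refine ⟨fun φ hφ => ?_⟩
      rcases hT0 hφ with h3 | ⟨ψ, hψ, rfl⟩
      · exact h1.realize_of_mem _ h3
      · rw [Formula.realize_equivSentence]
        refine hw ψ ?_
        simp only [Finset.mem_filter, Finset.mem_image]
        exact ⟨⟨_, hφ, by simp⟩, hψ⟩
    exact ⟨Theory.ModelType.of _ M⟩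
  obtain ⟨M⟩ := hsat
  let := (L.lhomWithConstants X).reduct M
  have hM : M ⊨ T := (LHom.onTheory_model (L.lhomWithConstants X) T).1
    (M.is_model.mono Set.subset_union_left)
  refine ⟨Theory.ModelType.of T M, fun x => (L.con x : M), fun ψ hψ => ?_⟩
  have := M.is_model.realize_of_mem (Formula.equivSentence ψ) (Or.inr ⟨ψ, hψ, rfl⟩)
  exact (Formula.realize_equivSentence M ψ).1 this

/-- Finite shattering implies the independence property. -/
theorem ip_of_finite {L : FirstOrder.Language.{u, v}} (T : L.Theory) {α β : Type}
    (φ : L.Formula (α ⊕ β))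
    (h : ∀ N : ℕ, ∃ (M : FirstOrder.Language.Theory.ModelType.{u, v, max u v} T)
      (a : Fin N → α → M) (b : Set (Fin N) → β → M),
      ∀ i S, φ.Realize (Sum.elim (a i) (b S)) ↔ i ∈ S) : FormulaHasIP T φ := by
  classical
  let f : ℕ × Set ℕ → L.Formula (ℕ × α ⊕ Set ℕ × β) := fun x =>
    let ψ := φ.relabel (Sum.map (fun y : α => (x.1, y)) (fun y : β => (x.2, y)))
    if x.1 ∈ x.2 then ψ else ψ.not
  have hf : ∀ (M : FirstOrder.Language.Theory.ModelType.{u, v, max u v} T) (w : ℕ × α ⊕ Set ℕ × β → M) x,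
      (f x).Realize w ↔ (φ.Realize (Sum.elim (fun y => w (Sum.inl (x.1, y)))
        (fun y => w (Sum.inr (x.2, y)))) ↔ x.1 ∈ x.2) := by
    intro M w x
    have e : (w ∘ (Sum.map (fun y : α => (x.1, y)) (fun y : β => (x.2, y)))) =
      (Sum.elim (fun y => w (Sum.inl (x.1, y))) (fun y => w (Sum.inr (x.2, y)))) := by
      funext y; cases y <;> rfl
    simp only [f]
    split_ifs with hx
    · rw [Formula.realize_relabel, e]; simp [hx]
    · rw [Formula.realize_not, Formula.realize_relabel, e]; simp [hx]
  obtain ⟨M, w, hw⟩ := compact_real T (Set.range f) (by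
    intro Γ0 hΓ0
    have : ∃ s : Finset (ℕ × Set ℕ), Γ0 = s.image f := by
      obtain ⟨s, hs⟩ := Finset.subset_set_image_iff.1 (by simpa using hΓ0 : (Γ0 : Set _) ⊆ f '' Set.univ)
      exact ⟨s, hs.2.symm⟩
    obtain ⟨s, rfl⟩ := this
    obtain ⟨N, hN⟩ : ∃ N, ∀ x ∈ s, x.1 < N := by
      refine ⟨s.sup (fun x => x.1) + 1, fun x hx => Nat.lt_succ_of_le ?_⟩
      exact Finset.le_sup (f := fun x : ℕ × Set ℕ => x.1) hx
    obtain ⟨M, a, b, hab⟩ := h N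
    have : Nonempty M := M.nonempty'
    refine ⟨M, Sum.elim (fun x => if hx : x.1 < N then a ⟨x.1, hx⟩ x.2 else this.some)
      (fun x => b {i | (i : ℕ) ∈ x.1} x.2), ?_⟩
    intro ψ hψ
    obtain ⟨x, hx, rfl⟩ := Finset.mem_image.1 hψ
    rw [hf]
    have := hab ⟨x.1, hN x hx⟩ {i | (i : ℕ) ∈ x.2}
    simpa [hN x hx] using this)
  exact ⟨M, fun i y => w (Sum.inl (i, y)), fun S y => w (Sum.inr (S, y)), fun i S =>
    (hf M w (i, S)).1 (hw _ ⟨_, rfl⟩)⟩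

/-- Under NIP no formula in finitely many variables is finitely shattering. -/
theorem no_shatter {L : FirstOrder.Language.{u, v}} (T : L.Theory) {m : ℕ}
    (hT : ∀ (n : ℕ) (φ : L.Formula (Fin m ⊕ Fin n)), ¬ FormulaHasIP T φ)
    {β : Type} [Finite β] (φ : L.Formula (Fin m ⊕ β))
    (h : ∀ N : ℕ, ∃ (M : FirstOrder.Language.Theory.ModelType.{u, v, max u v} T)
      (a : Fin N → Fin m → M) (b : Set (Fin N) → β → M),
      ∀ i S, φ.Realize (Sum.elim (a i) (b S)) ↔ i ∈ S) : False := by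
  obtain ⟨n, ⟨f⟩⟩ := Finite.exists_equiv_fin β
  refine hT n (φ.relabel (Sum.map id f)) (ip_of_finite T _ fun N => ?_)
  obtain ⟨M, a, b, hab⟩ := h N
  refine ⟨M, a, fun S y => b S (f.symm y), fun i S => ?_⟩
  rw [Formula.realize_relabel, ← hab i S]
  have : (Sum.elim (a i) (fun y => b S (f.symm y)) ∘ Sum.map id f) = Sum.elim (a i) (b S) := by
    funext y; cases y <;> simp
  rw [this]

end NipModel

namespace NipModel

theorem cond_open_dense (I : Set ℚ) (hI : I.Infinite) (σ : ℚ → ℚ → ℚ × ℚ)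
    (hσ : Function.Injective2 σ) (F G : Finset ℚ) (hFG : Disjoint F G) :
    IsOpen {R : ℚ × ℚ → Bool | ∃ z ∈ I, (∀ f ∈ F, R (σ z f) = true) ∧ ∀ g ∈ G, R (σ z g) = false} ∧
    Dense {R : ℚ × ℚ → Bool | ∃ z ∈ I, (∀ f ∈ F, R (σ z f) = true) ∧ ∀ g ∈ G, R (σ z g) = false} := by
  classical
  constructor
  · have : {R : ℚ × ℚ → Bool | ∃ z ∈ I, (∀ f ∈ F, R (σ z f) = true) ∧ ∀ g ∈ G, R (σ z g) = false} =
      ⋃ z ∈ I, ((⋂ f ∈ F, {R | R (σ z f) = true}) ∩ (⋂ g ∈ G, {R | R (σ z g) = false})) := by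
      ext R; simp only [Set.mem_ofPred_eq, Set.mem_iUnion, Set.mem_inter_iff, Set.mem_iInter, exists_prop]
    rw [this]
    have hc : ∀ (p : ℚ × ℚ) (b : Bool), IsOpen {R : ℚ × ℚ → Bool | R p = b} := by
      intro p b
      have h : Continuous (fun R : ℚ × ℚ → Bool => R p) := continuous_apply p
      exact (isOpen_discrete ({b} : Set Bool)).preimage h
    refine isOpen_biUnion fun z _ => IsOpen.inter ?_ ?_
    · exact isOpen_biInter_finset fun f _ => hc _ _
    · exact isOpen_biInter_finset fun f _ => hc _ _
  · rw [dense_iff_inter_open]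
    intro U hU ⟨R0, hR0⟩
    obtain ⟨s, u, hu, hsub⟩ := isOpen_pi_iff.1 hU R0 hR0
    have hfin : {z : ℚ | ∃ f ∈ F ∪ G, σ z f ∈ s}.Finite := by
      have : {z : ℚ | ∃ f ∈ F ∪ G, σ z f ∈ s} = ⋃ f ∈ F ∪ G, (fun z => σ z f) ⁻¹' (s : Set (ℚ × ℚ)) := by
        ext z; simp
      rw [this]
      refine Set.Finite.biUnion (Finset.finite_toSet _) fun f _ => ?_
      refine Set.Finite.preimage ?_ s.finite_toSet
      exact (fun a _ b _ h => (hσ h).1)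
    obtain ⟨z, hz, hz'⟩ := hI.exists_notMem_finite hfin
    let R1 : ℚ × ℚ → Bool := fun p => if p ∈ s then R0 p else if ∃ f ∈ F, p = σ z f then true else false
    have hns : ∀ f ∈ F ∪ G, σ z f ∉ s := fun f hf h => hz' ⟨f, hf, h⟩
    refine ⟨R1, hsub ?_, z, hz, ?_, ?_⟩
    · intro p hp
      have : R1 p = R0 p := if_pos hp
      rw [this]; exact (hu p hp).2
    · intro f hf
      have h1 := hns f (Finset.mem_union_left _ hf)
      simp only [R1, if_neg h1]
      rw [if_pos ⟨f, hf, rfl⟩]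
    · intro g hg
      have h1 := hns g (Finset.mem_union_right _ hg)
      simp only [R1, if_neg h1]
      rw [if_neg]
      rintro ⟨f, hf, h⟩
      have := (hσ h).2
      subst this
      exact Finset.disjoint_left.1 hFG hf hg

/-- The random ordered bipartite graph exists. -/
theorem exists_random : ∃ R : ℚ → ℚ → Prop, IsRandomOBG R := by
  classical
  let J : ℚ × ℚ ⊕ ℚ ⊕ ℚ → Set ℚ := Sum.elim (fun p => Set.Ioo p.1 p.2)
    (Sum.elim (fun x => Set.Iio x) (fun x => Set.Ioi x))
  let σ : Bool → ℚ → ℚ → ℚ × ℚ := fun s z f => if s then (z, f) else (f, z)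
  have hσ : ∀ s, Function.Injective2 (σ s) := by
    intro s a b c d h
    cases s <;> simp [σ] at h <;> tauto
  let O : Bool × (ℚ × ℚ ⊕ ℚ ⊕ ℚ) × Finset ℚ × Finset ℚ → Set (ℚ × ℚ → Bool) := fun x =>
    {R | (J x.2.1).Infinite → Disjoint x.2.2.1 x.2.2.2 →
      ∃ z ∈ J x.2.1, (∀ f ∈ x.2.2.1, R (σ x.1 z f) = true) ∧ ∀ g ∈ x.2.2.2, R (σ x.1 z g) = false}
  have hO : ∀ x, IsOpen (O x) ∧ Dense (O x) := by
    intro x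
    by_cases h1 : (J x.2.1).Infinite
    · by_cases h2 : Disjoint x.2.2.1 x.2.2.2
      · have := cond_open_dense _ h1 (σ x.1) (hσ _) _ _ h2
        simpa only [O, h1, h2, true_imp_iff, forall_true_left] using this
      · have : O x = Set.univ := by ext R; simp [O, h2]
        rw [this]; exact ⟨isOpen_univ, dense_univ⟩
    · have : O x = Set.univ := by ext R; simp [O, h1]
      rw [this]; exact ⟨isOpen_univ, dense_univ⟩
  obtain ⟨R, hR⟩ := (dense_iInter_of_isOpen (fun x => (hO x).1) (fun x => (hO x).2)).nonempty
  rw [Set.mem_iInter] at hR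
  refine ⟨fun x y => R (x, y) = true, inferInstance, inferInstance, inferInstance, inferInstance, ?_, ?_⟩
  · intro F G hFG
    refine ⟨fun x y hxy => ?_, fun x => ?_, fun x => ?_⟩
    · obtain ⟨z, hz, h⟩ := hR (true, Sum.inl (x, y), F, G) (Set.Ioo_infinite hxy) hFG
      exact ⟨z, by simpa [σ] using h, hz⟩
    · obtain ⟨z, hz, h⟩ := hR (true, Sum.inr (Sum.inl x), F, G) (Set.Iio_infinite x) hFG
      exact ⟨z, by simpa [σ] using h, hz⟩
    · obtain ⟨z, hz, h⟩ := hR (true, Sum.inr (Sum.inr x), F, G) (Set.Ioi_infinite x) hFG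
      exact ⟨z, by simpa [σ] using h, hz⟩
  · intro F G hFG
    refine ⟨fun x y hxy => ?_, fun x => ?_, fun x => ?_⟩
    · obtain ⟨z, hz, h⟩ := hR (false, Sum.inl (x, y), F, G) (Set.Ioo_infinite hxy) hFG
      exact ⟨z, by simpa [σ] using h, hz⟩
    · obtain ⟨z, hz, h⟩ := hR (false, Sum.inr (Sum.inl x), F, G) (Set.Iio_infinite x) hFG
      exact ⟨z, by simpa [σ] using h, hz⟩
    · obtain ⟨z, hz, h⟩ := hR (false, Sum.inr (Sum.inr x), F, G) (Set.Ioi_infinite x) hFG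
      exact ⟨z, by simpa [σ] using h, hz⟩

/-- Genericity in the form used below. -/
theorem generic_right {R : ℚ → ℚ → Prop} (hR : IsRandomOBG R) (X : Set ℚ) (hX : X.Finite)
    (P : ℚ → Prop) (x y : ℚ) (hxy : x < y) : ∃ z, x < z ∧ z < y ∧ ∀ u ∈ X, (R u z ↔ P u) := by
  classical
  obtain ⟨_, _, _, _, _, h⟩ := hR
  obtain ⟨z, ⟨h1, h2⟩, h3⟩ := (h (hX.toFinset.filter P) (hX.toFinset.filter (fun u => ¬ P u))
    (Finset.disjoint_filter_filter_not _ _ _)).1 x y hxy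
  refine ⟨z, h3.1, h3.2, fun u hu => ?_⟩
  by_cases hP : P u
  · simp only [hP, iff_true]; exact h1 u (by simp [hu, hP])
  · simp only [hP, iff_false]; exact h2 u (by simp [hu, hP])

end NipModel

namespace NipModel

open NipRamsey

/-- Position of a rational in a finite set. -/
noncomputable def lam (U : Finset ℚ) (o : Option ℚ) : Option (Fin U.card) :=
  o.bind (fun x => if h : x ∈ U then some ((U.orderIsoOfFin rfl).symm ⟨x, h⟩) else none)

theorem lam_none (U : Finset ℚ) : lam U none = none := rfl

theorem lam_some (U : Finset ℚ) (x : ℚ) (hx : x ∈ U) :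
    ∃ i, lam U (some x) = some i ∧ U.orderEmbOfFin rfl i = x := by
  refine ⟨(U.orderIsoOfFin rfl).symm ⟨x, hx⟩, by simp [lam, hx], ?_⟩
  rw [← Finset.coe_orderIsoOfFin_apply]
  simp

theorem lam_eq_some {U : Finset ℚ} {o : Option ℚ} {i : Fin U.card} (h : lam U o = some i) :
    o = some (U.orderEmbOfFin rfl i) := by
  rcases o with _ | x
  · simp [lam] at h
  · by_cases hx : x ∈ U
    · obtain ⟨j, hj, hj'⟩ := lam_some U x hx
      rw [hj] at h
      rw [← Option.some.inj h, hj']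
    · simp [lam, hx] at h

theorem OEq_lam {A : Type} {U : Finset ℚ} {p p' : A → Option ℚ} (h : OEq p p')
    (hp : ∀ a x, p a = some x → x ∈ U) (hp' : ∀ a x, p' a = some x → x ∈ U) :
    OEq (fun a => lam U (p a)) (fun a => lam U (p' a)) := by
  have key : ∀ (o : Option ℚ), (∀ x, o = some x → x ∈ U) → (lam U o = none ↔ o = none) := by
    intro o ho
    rcases o with _ | x
    · simp [lam]
    · obtain ⟨i, hi, _⟩ := lam_some U x (ho x rfl)
      simp [hi]
  refine ⟨fun a => ?_, fun a b x y x' y' h1 h2 h3 h4 => ?_⟩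
  · beta_reduce
    rw [key _ (hp a), key _ (hp' a)]; exact h.1 a
  · have := h.2 a b _ _ _ _ (lam_eq_some h1) (lam_eq_some h2) (lam_eq_some h3) (lam_eq_some h4)
    simpa using this

/-- An instance of indiscernibility. -/
structure Inst (L : FirstOrder.Language.{u, v}) (m n : ℕ) where
  K : ℕ
  ψ : L.Formula (Fin K × Fin m ⊕ Fin K × Fin n)
  p : Fin K → Option ℚ
  p' : Fin K → Option ℚ
  q : Fin K → Option ℚ
  q' : Fin K → Option ℚ

/-- The formula attached to an instance. -/
noncomputable def Inst.form {L : FirstOrder.Language.{u, v}} {m n : ℕ} (ι : Inst L m n) :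
    L.Formula (Option ℚ × Fin m ⊕ Option ℚ × Fin n) :=
  (ι.ψ.relabel (Sum.map (fun y => (ι.p y.1, y.2)) (fun y => (ι.q y.1, y.2)))).iff
    (ι.ψ.relabel (Sum.map (fun y => (ι.p' y.1, y.2)) (fun y => (ι.q' y.1, y.2))))

/-- Two index tuples of an instance have the same type. -/
def Inst.Good {L : FirstOrder.Language.{u, v}} {m n : ℕ} (R : ℚ → ℚ → Prop) (ι : Inst L m n) : Prop :=
  OEq ι.p ι.p' ∧ OEq ι.q ι.q' ∧ ∀ a b i j i' j', ι.p a = some i → ι.q b = some j →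
    ι.p' a = some i' → ι.q' b = some j' → (R i j ↔ R i' j')

theorem OEq_restrict {r : ℕ} {K : Fin r → ℕ} (r0 : Fin r) (P P' : (Σ i, Fin (K i)) → Option ℚ)
    (h : OEq (fun k => P ⟨r0, k⟩) (fun k => P' ⟨r0, k⟩)) :
    OEq (fun x : Σ i, Fin (K i) => if x.1 = r0 then P x else none)
      (fun x : Σ i, Fin (K i) => if x.1 = r0 then P' x else none) := by
  refine ⟨?_, ?_⟩
  · rintro ⟨a, k⟩
    by_cases ha : a = r0
    · subst ha; simpa using h.1 k
    · simp [ha]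
  · rintro ⟨a, k⟩ ⟨b, k'⟩ x y x' y' h1 h2 h3 h4
    by_cases ha : a = r0
    · by_cases hb : b = r0
      · subst ha; subst hb
        simp only [if_true] at h1 h2 h3 h4
        exact h.2 k k' x y x' y' h1 h2 h3 h4
      · simp [hb] at h2
    · simp [ha] at h1

/-- Finite approximation to the indiscernible family. -/
theorem finite_approx {L : FirstOrder.Language.{u, v}} (T : L.Theory) {m n : ℕ}
    (φ : L.Formula (Fin m ⊕ Fin n)) (hφ : FormulaHasIP T φ) (R : ℚ → ℚ → Prop)
    (E0 : Finset (ℚ × ℚ)) {r : ℕ} (ι : Fin r → Inst L m n) (hι : ∀ i, (ι i).Good R) :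
    ∃ (M : FirstOrder.Language.Theory.ModelType.{u, v, max u v} T)
      (w : Option ℚ × Fin m ⊕ Option ℚ × Fin n → M),
      (∀ x ∈ E0, (φ.Realize (Sum.elim (fun y => w (Sum.inl (some x.1, y)))
        (fun y => w (Sum.inr (some x.2, y)))) ↔ R x.1 x.2)) ∧
      ∀ i, (ι i).form.Realize w := by
  classical
  obtain ⟨M, a, b, hab⟩ := hφ
  let U : Finset ℚ := E0.image Prod.fst ∪ Finset.univ.biUnion (fun i : Fin r =>
    Finset.univ.biUnion (fun k : Fin (ι i).K => ((ι i).p k).toFinset ∪ ((ι i).p' k).toFinset))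
  let V : Finset ℚ := E0.image Prod.snd ∪ Finset.univ.biUnion (fun i : Fin r =>
    Finset.univ.biUnion (fun k : Fin (ι i).K => ((ι i).q k).toFinset ∪ ((ι i).q' k).toFinset))
  have hU0 : ∀ x ∈ E0, x.1 ∈ U := fun x hx =>
    Finset.mem_union_left _ (Finset.mem_image_of_mem _ hx)
  have hV0 : ∀ x ∈ E0, x.2 ∈ V := fun x hx =>
    Finset.mem_union_left _ (Finset.mem_image_of_mem _ hx)
  have hp : ∀ i k x, (ι i).p k = some x → x ∈ U := fun i k x hx => by
    refine Finset.mem_union_right _ ?_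
    simp only [Finset.mem_biUnion, Finset.mem_univ, true_and, Finset.mem_union, Option.mem_toFinset,
      Option.mem_def]
    exact ⟨i, k, Or.inl hx⟩
  have hp' : ∀ i k x, (ι i).p' k = some x → x ∈ U := fun i k x hx => by
    refine Finset.mem_union_right _ ?_
    simp only [Finset.mem_biUnion, Finset.mem_univ, true_and, Finset.mem_union, Option.mem_toFinset,
      Option.mem_def]
    exact ⟨i, k, Or.inr hx⟩
  have hq : ∀ i k x, (ι i).q k = some x → x ∈ V := fun i k x hx => by
    refine Finset.mem_union_right _ ?_
    simp only [Finset.mem_biUnion, Finset.mem_univ, true_and, Finset.mem_union, Option.mem_toFinset,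
      Option.mem_def]
    exact ⟨i, k, Or.inl hx⟩
  have hq' : ∀ i k x, (ι i).q' k = some x → x ∈ V := fun i k x hx => by
    refine Finset.mem_union_right _ ?_
    simp only [Finset.mem_biUnion, Finset.mem_univ, true_and, Finset.mem_union, Option.mem_toFinset,
      Option.mem_def]
    exact ⟨i, k, Or.inr hx⟩
  clear_value U V
  obtain ⟨W, hW, hc⟩ := bip_ramsey (A := Σ i, Fin (ι i).K) (B := Σ i, Fin (ι i).K)
    (κ := Fin r → Prop) U.card V.card
    (fun i j => R (U.orderEmbOfFin rfl i) (V.orderEmbOfFin rfl j))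
  obtain ⟨N, ⟨ε⟩⟩ := Finite.exists_equiv_fin W
  have : Nonempty M := M.nonempty'
  let d : M := this.some
  let aO : Option W → Fin m → M := fun o => o.elim (fun _ => d) (fun x => a (ε x))
  let bO : Option (W → Prop) → Fin n → M := fun o => o.elim (fun _ => d)
    (fun s => b {k : ℕ | ∃ x, s x ∧ (ε x : ℕ) = k})
  have hO : ∀ x s, φ.Realize (Sum.elim (aO (some x)) (bO (some s))) ↔ s x := by
    intro x s
    simp only [aO, bO, Option.elim_some]
    rw [hab]
    constructor
    · rintro ⟨y, hy, hyx⟩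
      rw [← ε.injective (Fin.ext hyx)]; exact hy
    · exact fun h => ⟨x, h, rfl⟩
  obtain ⟨e, g, heg, hinv⟩ := hc (fun t s i =>
    (ι i).ψ.Realize (Sum.elim (fun y => aO (t ⟨i, y.1⟩) y.2) (fun y => bO (s ⟨i, y.1⟩) y.2)))
  refine ⟨M, Sum.elim (fun y => aO ((lam U y.1).map e) y.2) (fun y => bO ((lam V y.1).map g) y.2),
    ?_, ?_⟩
  · intro x hx
    obtain ⟨i, hi, hi'⟩ := lam_some U x.1 (hU0 x hx)
    obtain ⟨j, hj, hj'⟩ := lam_some V x.2 (hV0 x hx)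
    simp only [Sum.elim_inl, Sum.elim_inr, hi, hj, Option.map_some]
    rw [hO, heg, hi', hj']
  · intro i0
    have h1 := OEq_lam (U := U) (OEq_restrict (K := fun i => (ι i).K) i0 (fun x => (ι x.1).p x.2)
      (fun x => (ι x.1).p' x.2) (hι i0).1)
      (by intro a x hx; split_ifs at hx; exact hp _ _ _ hx)
      (by intro a x hx; split_ifs at hx; exact hp' _ _ _ hx)
    have h2 := OEq_lam (U := V) (OEq_restrict (K := fun i => (ι i).K) i0 (fun x => (ι x.1).q x.2)
      (fun x => (ι x.1).q' x.2) (hι i0).2.1)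
      (by intro a x hx; split_ifs at hx; exact hq _ _ _ hx)
      (by intro a x hx; split_ifs at hx; exact hq' _ _ _ hx)
    have h3 := hinv _ _ _ _ h1 h2 (by
      rintro ⟨a, k⟩ ⟨b, k'⟩ i j i' j' e1 e2 e3 e4
      have e1 := lam_eq_some e1
      have e2 := lam_eq_some e2
      have e3 := lam_eq_some e3
      have e4 := lam_eq_some e4
      split_ifs at e1 e2 e3 e4 with ha hb
      change a = i0 at ha
      change b = i0 at hb
      subst ha
      subst hb
      exact (hι b).2.2 k k' _ _ _ _ (by assumption) (by assumption) (by assumption) (by assumption))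
    have h4 := congrFun h3 i0
    simp only [if_true] at h4
    rw [Inst.form, Formula.realize_iff, Formula.realize_relabel, Formula.realize_relabel]
    have h5 := iff_of_eq h4
    convert h5 using 2 <;>
    · funext y; cases y <;> rfl

/-- The variable of the product shape corresponding to a mixed variable. -/
def mixTo {K : Type} {m n : ℕ} (k : K) : (s : Bool) → MixVar m n s → (K × Fin m ⊕ K × Fin n)
  | true, w => Sum.inl (k, w)
  | false, w => Sum.inr (k, w)

theorem ip_indisc {L : FirstOrder.Language.{u, v}} (T : L.Theory) {m n : ℕ}
    (φ : L.Formula (Fin m ⊕ Fin n)) (hφ : FormulaHasIP T φ) (R : ℚ → ℚ → Prop) :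
    ∃ (M : FirstOrder.Language.Theory.ModelType.{u, v, max u v} T)
      (a : ℚ → Fin m → M) (b : ℚ → Fin n → M), IsLStarIndiscernible (L := L) R a b ∧
        ∀ i j, φ.Realize (Sum.elim (a i) (b j)) ↔ R i j := by
  classical
  let f : ℚ × ℚ → L.Formula (Option ℚ × Fin m ⊕ Option ℚ × Fin n) := fun x =>
    let ψ := φ.relabel (Sum.map (fun y : Fin m => (some x.1, y)) (fun y : Fin n => (some x.2, y)))
    if R x.1 x.2 then ψ else ψ.not
  have hf : ∀ (M : FirstOrder.Language.Theory.ModelType.{u, v, max u v} T)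
      (w : Option ℚ × Fin m ⊕ Option ℚ × Fin n → M) x,
      (f x).Realize w ↔ (φ.Realize (Sum.elim (fun y => w (Sum.inl (some x.1, y)))
        (fun y => w (Sum.inr (some x.2, y)))) ↔ R x.1 x.2) := by
    intro M w x
    have e : (w ∘ (Sum.map (fun y : Fin m => (some x.1, y)) (fun y : Fin n => (some x.2, y)))) =
      (Sum.elim (fun y => w (Sum.inl (some x.1, y))) (fun y => w (Sum.inr (some x.2, y)))) := by
      funext y; cases y <;> rfl
    simp only [f]
    split_ifs with hx
    · rw [Formula.realize_relabel, e]; simp [hx]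
    · rw [Formula.realize_not, Formula.realize_relabel, e]; simp [hx]
  let G : (ℚ × ℚ) ⊕ {ι : Inst L m n // ι.Good R} → L.Formula (Option ℚ × Fin m ⊕ Option ℚ × Fin n) :=
    Sum.elim f (fun ι => ι.1.form)
  obtain ⟨M, w, hw⟩ := compact_real T (Set.range G) (by
    intro Γ0 hΓ0
    have : ∃ s : Finset ((ℚ × ℚ) ⊕ {ι : Inst L m n // ι.Good R}), Γ0 = s.image G := by
      obtain ⟨s, hs⟩ := Finset.subset_set_image_iff.1 (by simpa using hΓ0 : (Γ0 : Set _) ⊆ G '' Set.univ)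
      exact ⟨s, hs.2.symm⟩
    obtain ⟨s, rfl⟩ := this
    obtain ⟨M, w, h1, h2⟩ := finite_approx T φ hφ R s.toLeft
      (fun i => ((s.toRight.equivFin.symm i).1).1) (fun i => ((s.toRight.equivFin.symm i).1).2)
    refine ⟨M, w, ?_⟩
    intro ψ hψ
    obtain ⟨x | x, hx, rfl⟩ := Finset.mem_image.1 hψ
    · exact (hf M w x).2 (h1 x (by simpa using hx))
    · have := h2 (s.toRight.equivFin ⟨x, by simpa using hx⟩)
      simpa [G] using this)
  refine ⟨M, fun i y => w (Sum.inl (some i, y)), fun i y => w (Sum.inr (some i, y)), ?_, fun i j =>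
    (hf M w (i, j)).1 (hw _ ⟨Sum.inl (i, j), rfl⟩)⟩
  intro K s q q' hqf ψ
  have hgood : (Inst.mk K (ψ.relabel (fun v => mixTo v.1 (s v.1) v.2))
      (fun k => if s k then some (q k) else none) (fun k => if s k then some (q' k) else none)
      (fun k => if s k then none else some (q k)) (fun k => if s k then none else some (q' k)) :
      Inst L m n).Good R := by
    refine ⟨⟨fun k => by by_cases h : s k <;> simp [h], ?_⟩,
      ⟨fun k => by by_cases h : s k <;> simp [h], ?_⟩, ?_⟩
    · intro k k' x y x' y' h1 h2 h3 h4
      have := hqf k k'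
      simp only at h1 h2 h3 h4
      split_ifs at h1 h2 h3 h4 with hk hk'
      simp only [Option.some.injEq] at h1 h2 h3 h4
      subst h1 h2 h3 h4
      simp only [mkIdx, hk, hk', cond_true, SamePairType] at this
      exact this.1
    · intro k k' x y x' y' h1 h2 h3 h4
      have := hqf k k'
      simp only at h1 h2 h3 h4
      split_ifs at h1 h2 h3 h4 with hk hk'
      simp only [Option.some.injEq] at h1 h2 h3 h4
      subst h1 h2 h3 h4
      simp only [Bool.not_eq_true] at hk hk'
      simp only [mkIdx, hk, hk', cond_false, SamePairType] at this
      exact this.1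
    · intro k k' x y x' y' h1 h2 h3 h4
      have := hqf k k'
      simp only at h1 h2 h3 h4
      split_ifs at h1 h2 h3 h4 with hk hk'
      simp only [Option.some.injEq] at h1 h2 h3 h4
      subst h1 h2 h3 h4
      simp only [Bool.not_eq_true] at hk'
      simp only [mkIdx, hk, hk', cond_true, cond_false, SamePairType] at this
      exact this
  have h1 := hw _ ⟨Sum.inr ⟨_, hgood⟩, rfl⟩
  simp only [G, Sum.elim_inr, Inst.form, Formula.realize_iff, Formula.realize_relabel] at h1
  have key : ∀ q : Fin K → ℚ, (((w ∘ Sum.map (fun y : Fin K × Fin m => (if s y.1 then some (q y.1) else none, y.2))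
      (fun y : Fin K × Fin n => (if s y.1 then none else some (q y.1), y.2))) ∘
        fun v : (k : Fin K) × MixVar m n (s k) => mixTo v.1 (s v.1) v.2)) =
      fun v => pickSide (fun y => w (Sum.inl (some (q v.1), y))) (fun y => w (Sum.inr (some (q v.1), y)))
        (s v.1) v.2 := by
    intro q
    funext v
    obtain ⟨k, y⟩ := v
    have : ∀ (σ : Bool) (_ : s k = σ) (y : MixVar m n σ),
        w (Sum.map (fun y : Fin K × Fin m => (if s y.1 then some (q y.1) else none, y.2))
      (fun y : Fin K × Fin n => (if s y.1 then none else some (q y.1), y.2)) (mixTo k σ y)) =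
        pickSide (fun y => w (Sum.inl (some (q k), y))) (fun y => w (Sum.inr (some (q k), y))) σ y := by
      intro σ hσ y
      cases σ <;> simp [mixTo, pickSide, hσ]
    exact this (s k) rfl y
  rw [key q, key q'] at h1
  exact h1

end NipModel

namespace NipModel

/-- Inclusion of mixed variables. -/
def mixInc {m n : ℕ} : (s : Bool) → MixVar 1 n s → MixVar (m + 1) n s
  | true, _ => (0 : Fin (m + 1))
  | false, w => w

theorem indisc_first {L : FirstOrder.Language.{u, v}} {M : Type (max u v)} [L.Structure M]
    {R : ℚ → ℚ → Prop} {m n : ℕ} {a : ℚ → Fin (m + 1) → M} {b : ℚ → Fin n → M}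
    (h : IsLStarIndiscernible (L := L) R a b) :
    IsLStarIndiscernible (L := L) R (fun i (_ : Fin 1) => a i 0) b := by
  intro K s q q' hqf φ
  have := h K s q q' hqf (φ.relabel (fun v => ⟨v.1, mixInc (s v.1) v.2⟩))
  rw [Formula.realize_relabel, Formula.realize_relabel] at this
  have key : ∀ q : Fin K → ℚ, ((fun v : (k : Fin K) × MixVar (m + 1) n (s k) =>
      pickSide (a (q v.1)) (b (q v.1)) (s v.1) v.2) ∘
      (fun v : (k : Fin K) × MixVar 1 n (s k) => ⟨v.1, mixInc (s v.1) v.2⟩)) =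
      fun v => pickSide (fun _ => a (q v.1) 0) (b (q v.1)) (s v.1) v.2 := by
    intro q
    funext ⟨k, y⟩
    have : ∀ (σ : Bool) (y : MixVar 1 n σ), pickSide (a (q k)) (b (q k)) σ (mixInc σ y) =
        pickSide (fun _ => a (q k) 0) (b (q k)) σ y := by
      intro σ y; cases σ <;> rfl
    exact this _ y
  rw [key, key] at this
  exact this

theorem nip_of_mi {L : FirstOrder.Language.{u, v}} (T : L.Theory)
    (h : ∀ (M : Type (max u v)) [L.Structure M] [Nonempty M], M ⊨ T →
        ∀ (db : ℕ) (a : ℚ → Fin 1 → M) (b : ℚ → Fin db → M) (R : ℚ → ℚ → Prop),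
          IsRandomOBG R → IsLStarIndiscernible (L := L) R a b →
            MutuallyIndiscernible (L := L) a b) :
    ∀ (m n : ℕ) (φ : L.Formula (Fin m ⊕ Fin n)), ¬ FormulaHasIP T φ := by
  classical
  intro m
  induction m with
  | zero =>
    rintro n φ ⟨M, a, b, hab⟩
    have h0 := (hab 0 {0}).2 rfl
    have h1 : ¬ φ.Realize (Sum.elim (a 1) (b {0})) := fun h => by
      have := (hab 1 {0}).1 h
      simp at this
    rw [show a 1 = a 0 from funext fun i => i.elim0] at h1
    exact h1 h0
  | succ m ih =>
    intro n φ hφ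
    obtain ⟨R, hR⟩ := exists_random
    obtain ⟨M, a, b, hind, hab⟩ := ip_indisc T φ hφ R
    have : Nonempty M := M.nonempty'
    have hMI := (h M M.is_model n _ b R hR (indisc_first hind)).2
    have dual : ∀ K : ℕ, ∃ x' : Set (Fin K) → Fin m → M, ∀ S (t : Fin K),
        φ.Realize (Sum.elim (Fin.cons (a 0 0) (x' S) : Fin (m + 1) → M) (b (t : ℕ))) ↔ t ∈ S := by
      intro K
      suffices ∀ S : Set (Fin K), ∃ x' : Fin m → M, ∀ t : Fin K,
          φ.Realize (Sum.elim (Fin.cons (a 0 0) x' : Fin (m + 1) → M) (b (t : ℕ))) ↔ t ∈ S from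
        ⟨fun S => (this S).choose, fun S => (this S).choose_spec⟩
      intro S
      have hv : ∀ t : Fin K, ∃ z : ℚ, ((t : ℕ) : ℚ) < z ∧ z < ((t : ℕ) : ℚ) + 1 ∧
          ∀ u ∈ ({0} : Set ℚ), (R u z ↔ t ∈ S) := fun t =>
        generic_right hR {0} (Set.finite_singleton _) (fun _ => t ∈ S) _ _ (by linarith)
      choose z hz1 hz2 hz3 using hv
      have hz : StrictMono z := by
        intro s t hst
        have : ((s : ℕ) : ℚ) + 1 ≤ ((t : ℕ) : ℚ) := by exact_mod_cast hst
        linarith [hz2 s, hz1 t]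
      have hnat : StrictMono (fun t : Fin K => ((t : ℕ) : ℚ)) := fun s t hst => by
        beta_reduce; exact_mod_cast hst
      let g : Fin K → (Fin (m + 1) ⊕ Fin n) → ((Fin K × Fin n ⊕ Fin 1) ⊕ Fin m) := fun t =>
        Sum.elim (Fin.cons (Sum.inl (Sum.inr 0)) (fun j => Sum.inr j))
          (fun y => Sum.inl (Sum.inl (t, y)))
      let χ : L.Formula (Fin K × Fin n ⊕ Fin 1) :=
        (Formula.iInf (fun t => if t ∈ S then φ.relabel (g t) else (φ.relabel (g t)).not)).iExs (Fin m)
      have hχ : ∀ zz : Fin K → ℚ, χ.Realize (Sum.elim (fun v : Fin K × Fin n => b (zz v.1) v.2)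
          (fun _ : Fin 1 => a 0 0)) ↔ ∃ x' : Fin m → M, ∀ t : Fin K,
          (φ.Realize (Sum.elim (Fin.cons (a 0 0) x' : Fin (m + 1) → M) (b (zz t))) ↔ t ∈ S) := by
        intro zz
        simp only [χ, Formula.realize_iExs, Formula.realize_iInf]
        refine exists_congr fun x' => forall_congr' fun t => ?_
        have e : (Sum.elim (Sum.elim (fun v : Fin K × Fin n => b (zz v.1) v.2)
          (fun _ : Fin 1 => a 0 0)) x') ∘ g t =
          Sum.elim (Fin.cons (a 0 0) x' : Fin (m + 1) → M) (b (zz t)) := by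
          funext y
          rcases y with y | y
          · refine Fin.cases ?_ (fun j => ?_) y <;> simp [g]
          · rfl
        split_ifs with ht
        · rw [Formula.realize_relabel, e]; simp [ht]
        · rw [Formula.realize_not, Formula.realize_relabel, e]; simp [ht]
      rw [← hχ (fun t => ((t : ℕ) : ℚ))]
      rw [← hMI K 1 z (fun t => ((t : ℕ) : ℚ)) hz hnat (fun _ => a 0 0)
        (fun _ => Set.mem_iUnion.2 ⟨0, 0, rfl⟩) χ]
      rw [hχ]
      refine ⟨fun j => a 0 j.succ, fun t => ?_⟩
      have : (Fin.cons (a 0 0) (fun j => a 0 j.succ) : Fin (m + 1) → M) = a 0 := by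
        funext y
        refine Fin.cases ?_ (fun j => ?_) y <;> simp
      rw [this, hab]
      exact hz3 t 0 rfl
    refine no_shatter T ih (β := Fin 1 ⊕ Fin n) (φ.relabel (Sum.elim
      (Fin.cons (Sum.inr (Sum.inl 0)) (fun j => Sum.inl j)) (fun y => Sum.inr (Sum.inr y)))) ?_
    intro N
    obtain ⟨K, ⟨e⟩⟩ := Finite.exists_equiv_fin (Set (Fin N))
    obtain ⟨x', hx'⟩ := dual K
    refine ⟨M, fun i => x' {t | i ∈ e.symm t}, fun S => Sum.elim (fun _ => a 0 0) (b ((e S : Fin K) : ℕ)),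
      fun i S => ?_⟩
    have := hx' {t | i ∈ e.symm t} (e S)
    rw [Formula.realize_relabel]
    have e1 : (Sum.elim (x' {t | i ∈ e.symm t}) (Sum.elim (fun _ : Fin 1 => a 0 0) (b ((e S : Fin K) : ℕ)))) ∘
      (Sum.elim (Fin.cons (Sum.inr (Sum.inl 0)) (fun j => Sum.inl j))
        (fun y => Sum.inr (Sum.inr y)) : Fin (m + 1) ⊕ Fin n → Fin m ⊕ (Fin 1 ⊕ Fin n)) =
        Sum.elim (Fin.cons (a 0 0) (x' {t | i ∈ e.symm t}) : Fin (m + 1) → M) (b ((e S : Fin K) : ℕ)) := by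
      funext y
      rcases y with y | y
      · refine Fin.cases ?_ (fun j => ?_) y <;> simp
      · rfl
    rw [e1, this]
    simp

end NipModel

namespace NipModel

/-- Product variables to mixed variables, `x`-side. -/
def fromT {da db : ℕ} {σ : Bool} (h : σ = true) (c : Fin da) : MixVar da db σ :=
  match σ, h with
  | true, _ => c

/-- Product variables to mixed variables, `y`-side. -/
def fromF {da db : ℕ} {σ : Bool} (h : σ = false) (c : Fin db) : MixVar da db σ :=
  match σ, h with
  | false, _ => c

theorem pick_fromT {M : Type*} {da db : ℕ} (A : Fin da → M) (B : Fin db → M) {σ : Bool}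
    (h : σ = true) (c : Fin da) : pickSide A B σ (fromT h c) = A c := by
  subst h; rfl

theorem pick_fromF {M : Type*} {da db : ℕ} (A : Fin da → M) (B : Fin db → M) {σ : Bool}
    (h : σ = false) (c : Fin db) : pickSide A B σ (fromF h c) = B c := by
  subst h; rfl

/-- Valuation. -/
def val {M : Type*} {da db k m : ℕ} (a : ℚ → Fin da → M) (b : ℚ → Fin db → M)
    (p : Fin k → ℚ) (q : Fin m → ℚ) : Fin k × Fin da ⊕ Fin m × Fin db → M :=
  Sum.elim (fun y => a (p y.1) y.2) (fun y => b (q y.1) y.2)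

theorem flex {L : FirstOrder.Language.{u, v}} {M : Type (max u v)} [L.Structure M]
    {R : ℚ → ℚ → Prop} {da db : ℕ} {a : ℚ → Fin da → M} {b : ℚ → Fin db → M}
    (h : IsLStarIndiscernible (L := L) R a b) {k m : ℕ}
    (φ : L.Formula (Fin k × Fin da ⊕ Fin m × Fin db)) (p p' : Fin k → ℚ) (q q' : Fin m → ℚ)
    (hp : StrictMono p) (hp' : StrictMono p') (hq : StrictMono q) (hq' : StrictMono q')
    (hR : ∀ i j, R (p i) (q j) ↔ R (p' i) (q' j)) :
    φ.Realize (val a b p q) ↔ φ.Realize (val a b p' q') := by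
  let s : Fin (k + m) → Bool := Fin.addCases (fun _ => true) (fun _ => false)
  have hs1 : ∀ i : Fin k, s (Fin.castAdd m i) = true := fun i => by simp [s]
  have hs2 : ∀ j : Fin m, s (Fin.natAdd k j) = false := fun i => by simp [s]
  have key : ∀ (p : Fin k → ℚ) (q : Fin m → ℚ),
      (fun v : (i : Fin (k + m)) × MixVar da db (s i) => pickSide (a ((Fin.addCases p q : Fin (k + m) → ℚ) v.1))
        (b ((Fin.addCases p q : Fin (k + m) → ℚ) v.1)) (s v.1) v.2) ∘
        (Sum.elim (fun y : Fin k × Fin da => ⟨Fin.castAdd m y.1, fromT (hs1 y.1) y.2⟩)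
          (fun y : Fin m × Fin db => ⟨Fin.natAdd k y.1, fromF (hs2 y.1) y.2⟩)) = val a b p q := by
    intro p q
    funext y
    rcases y with y | y
    · simp [pick_fromT, val]
    · simp [pick_fromF, val]
  have := h (k + m) s (Fin.addCases p q) (Fin.addCases p' q') ?_ (φ.relabel
    (Sum.elim (fun y : Fin k × Fin da => ⟨Fin.castAdd m y.1, fromT (hs1 y.1) y.2⟩)
          (fun y : Fin m × Fin db => ⟨Fin.natAdd k y.1, fromF (hs2 y.1) y.2⟩)))
  · rw [Formula.realize_relabel, Formula.realize_relabel, key, key] at this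
    exact this
  · intro x y
    induction x using Fin.addCases with
    | left i =>
      induction y using Fin.addCases with
      | left j =>
        simp only [mkIdx, hs1, Fin.addCases_left, cond_true, SamePairType, hp.le_iff_le, hp'.le_iff_le,
          and_self]
      | right j =>
        simp only [mkIdx, hs1, hs2, Fin.addCases_left, Fin.addCases_right, cond_true, cond_false,
          SamePairType]
        exact hR i j
    | right i =>
      induction y using Fin.addCases with
      | left j =>
        simp only [mkIdx, hs1, hs2, Fin.addCases_left, Fin.addCases_right, cond_true, cond_false,
          SamePairType]
        exact hR j i
      | right j =>
        simp only [mkIdx, hs2, Fin.addCases_right, cond_false, SamePairType, hq.le_iff_le, hq'.le_iff_le,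
          and_self]

theorem strictMono_of_step {k : ℕ} (p : Fin k → ℚ) (h : ∀ i : Fin k, ((i : ℕ) : ℚ) ≤ p i ∧
    p i < ((i : ℕ) : ℚ) + 1) : StrictMono p := by
  intro s t hst
  have : ((s : ℕ) : ℚ) + 1 ≤ ((t : ℕ) : ℚ) := by exact_mod_cast hst
  linarith [h s, h t]

theorem generic_inj {R : ℚ → ℚ → Prop} (hR : IsRandomOBG R) {X : Type} [Finite X] (f : X → ℚ)
    (hf : Function.Injective f) (P : X → Prop) {m : ℕ} (j : Fin m) :
    ∃ z, (((j : ℕ) : ℚ) ≤ z ∧ z < ((j : ℕ) : ℚ) + 1) ∧ ∀ u, (R (f u) z ↔ P u) := by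
  obtain ⟨z, h1, h2, h3⟩ := generic_right hR (Set.range f) (Set.finite_range f)
    (fun x => ∃ u, f u = x ∧ P u) ((j : ℕ) : ℚ) (((j : ℕ) : ℚ) + 1) (by linarith)
  refine ⟨z, ⟨h1.le, h2⟩, fun u => ?_⟩
  rw [h3 _ ⟨u, rfl⟩]
  constructor
  · rintro ⟨u', hu, h⟩; rwa [← hf hu]
  · exact fun h => ⟨u, rfl, h⟩

theorem pattern {R : ℚ → ℚ → Prop} (hR : IsRandomOBG R) {k m : ℕ} (E : Fin k → Fin m → Prop) :
    ∃ (p : Fin k → ℚ) (q : Fin m → ℚ), StrictMono p ∧ StrictMono q ∧ ∀ i j, R (p i) (q j) ↔ E i j := by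
  have hp : StrictMono (fun i : Fin k => ((i : ℕ) : ℚ)) := strictMono_of_step _ fun i =>
    ⟨le_rfl, by linarith⟩
  have := fun j : Fin m => generic_inj hR _ hp.injective (fun i => E i j) j
  choose q h1 h2 using this
  exact ⟨_, q, hp, strictMono_of_step _ h1, fun i j => h2 j i⟩

theorem flip {L : FirstOrder.Language.{u, v}} (T : L.Theory)
    (hT : ∀ (m n : ℕ) (φ : L.Formula (Fin m ⊕ Fin n)), ¬ FormulaHasIP T φ)
    {M : Type (max u v)} [L.Structure M] [Nonempty M] (hM : M ⊨ T)
    {R : ℚ → ℚ → Prop} (hR : IsRandomOBG R)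
    {da db : ℕ} {a : ℚ → Fin da → M} {b : ℚ → Fin db → M}
    (h : IsLStarIndiscernible (L := L) R a b) {k m : ℕ}
    (φ : L.Formula (Fin k × Fin da ⊕ Fin m × Fin db)) (p p' : Fin k → ℚ) (q q' : Fin m → ℚ)
    (hp : StrictMono p) (hp' : StrictMono p') (hq : StrictMono q) (hq' : StrictMono q')
    (i0 : Fin k) (j0 : Fin m)
    (hpq : ∀ i j, ¬ (i = i0 ∧ j = j0) → (R (p i) (q j) ↔ R (p' i) (q' j)))
    (h1 : φ.Realize (val a b p q)) : φ.Realize (val a b p' q') := by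
  classical
  by_contra h2
  by_cases hE : R (p i0) (q j0) ↔ R (p' i0) (q' j0)
  · refine h2 ((flex h φ p p' q q' hp hp' hq hq' ?_).1 h1)
    intro i j
    by_cases hij : i = i0 ∧ j = j0
    · rw [hij.1, hij.2]; exact hE
    · exact hpq i j hij
  refine no_shatter T (hT da) (β := Fin k × Fin da ⊕ Fin m × Fin db) (φ.relabel
    (Sum.elim (fun y => if y.1 = i0 then Sum.inl y.2 else Sum.inr (Sum.inl y))
      (fun y => Sum.inr (Sum.inr y)))) ?_
  intro N
  let f : Fin k × Fin (N + 1) → ℚ := fun x => ((x.1 : ℕ) : ℚ) + ((x.2 : ℕ) : ℚ) / (N + 1)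
  have hfr : ∀ x, ((x.1 : ℕ) : ℚ) ≤ f x ∧ f x < ((x.1 : ℕ) : ℚ) + 1 := by
    intro x
    have hN : (0 : ℚ) < (N : ℚ) + 1 := by positivity
    have h3 : ((x.2 : ℕ) : ℚ) / (N + 1) < 1 := by
      rw [div_lt_one hN]; exact_mod_cast x.2.2
    have h4 : (0 : ℚ) ≤ ((x.2 : ℕ) : ℚ) / (N + 1) := by positivity
    simp only [f]
    constructor <;> linarith
  have hf : Function.Injective f := by
    intro x y hxy
    have e1 : x.1 = y.1 := by
      have hx := hfr x
      have hy := hfr y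
      rw [hxy] at hx
      have l1 : ((x.1 : ℕ) : ℚ) < ((y.1 : ℕ) : ℚ) + 1 := by linarith
      have l2 : ((y.1 : ℕ) : ℚ) < ((x.1 : ℕ) : ℚ) + 1 := by linarith
      have l1 : (x.1 : ℕ) < (y.1 : ℕ) + 1 := by exact_mod_cast l1
      have l2 : (y.1 : ℕ) < (x.1 : ℕ) + 1 := by exact_mod_cast l2
      exact Fin.ext (by omega)
    have e2 : x.2 = y.2 := by
      simp only [f, e1, add_right_inj] at hxy
      have hN : ((N : ℚ) + 1) ≠ 0 := by positivity
      rw [div_left_inj' hN] at hxy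
      exact Fin.ext (by exact_mod_cast hxy)
    exact Prod.ext e1 e2
  have hQ : ∀ (S : Set (Fin N)) (j : Fin m), ∃ z, (((j : ℕ) : ℚ) ≤ z ∧ z < ((j : ℕ) : ℚ) + 1) ∧
      ∀ x, (R (f x) z ↔ if x.1 = i0 ∧ j = j0 then ((∃ t ∈ S, Fin.castSucc t = x.2) ↔ R (p i0) (q j0))
        else R (p x.1) (q j)) := fun S j => generic_inj hR f hf _ j
  choose Q hQ1 hQ2 using hQ
  let P : Fin N → Fin k → ℚ := fun t i => f (i, if i = i0 then Fin.castSucc t else 0)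
  have hP : ∀ t, StrictMono (P t) := fun t => strictMono_of_step _ fun i => hfr _
  have hQm : ∀ S, StrictMono (Q S) := fun S => strictMono_of_step _ (hQ1 S)
  have hne : ∀ t S i j, ¬ (i = i0 ∧ j = j0) → (R (P t i) (Q S j) ↔ R (p i) (q j)) := by
    intro t S i j hij
    simp only [P]
    rw [hQ2, if_neg hij]
  have heq : ∀ t S, R (P t i0) (Q S j0) ↔ (t ∈ S ↔ R (p i0) (q j0)) := by
    intro t S
    simp only [P]
    rw [hQ2, if_pos ⟨rfl, rfl⟩]
    simp only [if_true]
    have : (∃ t' ∈ S, Fin.castSucc t' = Fin.castSucc t) ↔ t ∈ S := by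
      simp
    rw [this]
  have main : ∀ t S, φ.Realize (val a b (P t) (Q S)) ↔ t ∈ S := by
    intro t S
    by_cases ht : t ∈ S
    · simp only [ht, iff_true]
      refine (flex h φ p (P t) q (Q S) hp (hP t) hq (hQm S) ?_).1 h1
      intro i j
      by_cases hij : i = i0 ∧ j = j0
      · rw [hij.1, hij.2, heq]; simp [ht]
      · exact (hne t S i j hij).symm
    · simp only [ht, iff_false]
      refine fun h3 => h2 ((flex h φ (P t) p' (Q S) q' (hP t) hp' (hQm S) hq' ?_).1 h3)
      intro i j
      by_cases hij : i = i0 ∧ j = j0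
      · rw [hij.1, hij.2, heq]; simp only [ht, false_iff]; tauto
      · exact (hne t S i j hij).trans (hpq i j hij)
  refine ⟨Theory.ModelType.of T M, fun t => a (f (i0, Fin.castSucc t)),
    fun S => Sum.elim (fun y => a (f (y.1, 0)) y.2) (fun y => b (Q S y.1) y.2), fun t S => ?_⟩
  rw [← main t S, Formula.realize_relabel]
  have e : (Sum.elim (a (f (i0, Fin.castSucc t)))
      (Sum.elim (fun y => a (f (y.1, 0)) y.2) (fun y => b (Q S y.1) y.2))) ∘
      (Sum.elim (fun y : Fin k × Fin da => if y.1 = i0 then Sum.inl y.2 else Sum.inr (Sum.inl y))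
      (fun y : Fin m × Fin db => Sum.inr (Sum.inr y))) = val a b (P t) (Q S) := by
    funext y
    rcases y with y | y
    · by_cases hy : y.1 = i0
      · simp [hy, val, P]
      · simp [hy, val, P]
    · rfl
  exact iff_of_eq (congrArg _ e)

theorem indep {L : FirstOrder.Language.{u, v}} (T : L.Theory)
    (hT : ∀ (m n : ℕ) (φ : L.Formula (Fin m ⊕ Fin n)), ¬ FormulaHasIP T φ)
    {M : Type (max u v)} [L.Structure M] [Nonempty M] (hM : M ⊨ T)
    {R : ℚ → ℚ → Prop} (hR : IsRandomOBG R)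
    {da db : ℕ} {a : ℚ → Fin da → M} {b : ℚ → Fin db → M}
    (h : IsLStarIndiscernible (L := L) R a b) {k m : ℕ}
    (φ : L.Formula (Fin k × Fin da ⊕ Fin m × Fin db)) (p p' : Fin k → ℚ) (q q' : Fin m → ℚ)
    (hp : StrictMono p) (hp' : StrictMono p') (hq : StrictMono q) (hq' : StrictMono q')
    (h1 : φ.Realize (val a b p q)) : φ.Realize (val a b p' q') := by
  classical
  suffices ∀ (D : Finset (Fin k × Fin m)) (p : Fin k → ℚ) (q : Fin m → ℚ), StrictMono p →
      StrictMono q → (∀ i j, (i, j) ∉ D → (R (p i) (q j) ↔ R (p' i) (q' j))) →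
      φ.Realize (val a b p q) → φ.Realize (val a b p' q') from
    this Finset.univ p q hp hq (fun i j hij => absurd (Finset.mem_univ _) hij) h1
  intro D
  induction D using Finset.induction_on with
  | empty =>
    intro p q hp hq hpq
    exact (flex h φ p p' q q' hp hp' hq hq' (fun i j => hpq i j (Finset.notMem_empty _))).1
  | insert x D hx ih =>
    intro p q hp hq hpq h1
    obtain ⟨p'', q'', hp'', hq'', hE⟩ := pattern hR (fun i j =>
      if i = x.1 ∧ j = x.2 then R (p' i) (q' j) else R (p i) (q j))
    have h2 := flip T hT hM hR h φ p p'' q q'' hp hp'' hq hq'' x.1 x.2 (by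
      intro i j hij
      rw [hE, if_neg hij]) h1
    refine ih p'' q'' hp'' hq'' ?_ h2
    intro i j hij
    rw [hE]
    split_ifs with hh
    · rfl
    · refine hpq i j ?_
      rw [Finset.mem_insert]
      rintro (h3 | h3)
      · exact hh ⟨by rw [← h3], by rw [← h3]⟩
      · exact hij h3

theorem indep_iff {L : FirstOrder.Language.{u, v}} (T : L.Theory)
    (hT : ∀ (m n : ℕ) (φ : L.Formula (Fin m ⊕ Fin n)), ¬ FormulaHasIP T φ)
    {M : Type (max u v)} [L.Structure M] [Nonempty M] (hM : M ⊨ T)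
    {R : ℚ → ℚ → Prop} (hR : IsRandomOBG R)
    {da db : ℕ} {a : ℚ → Fin da → M} {b : ℚ → Fin db → M}
    (h : IsLStarIndiscernible (L := L) R a b) {k m : ℕ}
    (φ : L.Formula (Fin k × Fin da ⊕ Fin m × Fin db)) (p p' : Fin k → ℚ) (q q' : Fin m → ℚ)
    (hp : StrictMono p) (hp' : StrictMono p') (hq : StrictMono q) (hq' : StrictMono q') :
    φ.Realize (val a b p q) ↔ φ.Realize (val a b p' q') :=
  ⟨indep T hT hM hR h φ p p' q q' hp hp' hq hq', indep T hT hM hR h φ p' p q' q hp' hp hq' hq⟩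

theorem params {M : Type*} {m d : ℕ} (b : ℚ → Fin d → M) (p : Fin m → M)
    (hp : ∀ l, p l ∈ ⋃ i, Set.range (b i)) :
    ∃ (n : ℕ) (g : Fin n → ℚ) (ρ : Fin m → Fin n) (w : Fin m → Fin d), StrictMono g ∧
      ∀ l, p l = b (g (ρ l)) (w l) := by
  classical
  have : ∀ l, ∃ r w, p l = b r w := fun l => by
    obtain ⟨r, w, hw⟩ := Set.mem_iUnion.1 (hp l)
    exact ⟨r, w, hw.symm⟩
  choose r w hw using this
  let V : Finset ℚ := Finset.univ.image r
  have hV : ∀ l, ∃ i, V.orderEmbOfFin rfl i = r l := by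
    intro l
    have : r l ∈ Set.range (V.orderEmbOfFin rfl) := by
      rw [Finset.range_orderEmbOfFin]
      exact Finset.mem_coe.2 (Finset.mem_image_of_mem _ (Finset.mem_univ _))
    exact this
  choose ρ hρ using hV
  exact ⟨V.card, V.orderEmbOfFin rfl, ρ, w, (V.orderEmbOfFin rfl).strictMono, fun l => by rw [hρ, hw]⟩

theorem mi_of_nip {L : FirstOrder.Language.{u, v}} (T : L.Theory)
    (hT : ∀ (m n : ℕ) (φ : L.Formula (Fin m ⊕ Fin n)), ¬ FormulaHasIP T φ)
    {M : Type (max u v)} [L.Structure M] [Nonempty M] (hM : M ⊨ T)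
    {R : ℚ → ℚ → Prop} (hR : IsRandomOBG R)
    {da db : ℕ} {a : ℚ → Fin da → M} {b : ℚ → Fin db → M}
    (h : IsLStarIndiscernible (L := L) R a b) : MutuallyIndiscernible (L := L) a b := by
  constructor
  · intro n m i j hi hj p hp φ
    obtain ⟨k, g, ρ, w, hg, hpg⟩ := params b p hp
    have := indep_iff T hT hM hR h (φ.relabel (Sum.map id (fun l => (ρ l, w l)))) i j g g hi hj hg hg
    rw [Formula.realize_relabel, Formula.realize_relabel] at this
    have key : ∀ i : Fin n → ℚ, val a b i g ∘ (Sum.map id (fun l => (ρ l, w l))) =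
        Sum.elim (fun v : Fin n × Fin da => a (i v.1) v.2) p := by
      intro i
      funext y
      rcases y with y | y
      · rfl
      · exact (hpg y).symm
    rw [key, key] at this
    exact this
  · intro n m i j hi hj p hp φ
    obtain ⟨k, g, ρ, w, hg, hpg⟩ := params a p hp
    have := indep_iff T hT hM hR h (φ.relabel (Sum.elim Sum.inr (fun l => Sum.inl (ρ l, w l))))
      g g i j hg hg hi hj
    rw [Formula.realize_relabel, Formula.realize_relabel] at this
    have key : ∀ i : Fin n → ℚ, val a b g i ∘ (Sum.elim Sum.inr (fun l => Sum.inl (ρ l, w l))) =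
        Sum.elim (fun v : Fin n × Fin db => b (i v.1) v.2) p := by
      intro i
      funext y
      rcases y with y | y
      · rfl
      · exact (hpg y).symm
    rw [key, key] at this
    exact this

end NipModel

/-- A complete theory `T` is NIP iff every `L*`-indiscernible family
`(aᵢ, b̄ᵢ : i ∈ ℚ)` in a model of `T` with the `aᵢ` single elements, indexed by the random
ordered bipartite graph `G*`, consists of two mutually indiscernible sequences. -/
theorem nip_iff_LStar_indiscernible_mutually_indiscernible_singleton
    {L : FirstOrder.Language.{u, v}} (T : L.Theory) (hT : T.IsComplete) :
    (∀ (m n : ℕ) (φ : L.Formula (Fin m ⊕ Fin n)), ¬ FormulaHasIP T φ) ↔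
      (∀ (M : Type (max u v)) [L.Structure M] [Nonempty M], M ⊨ T →
        ∀ (db : ℕ) (a : ℚ → Fin 1 → M) (b : ℚ → Fin db → M) (R : ℚ → ℚ → Prop),
          IsRandomOBG R → IsLStarIndiscernible (L := L) R a b →
            MutuallyIndiscernible (L := L) a b) := by
  exact ⟨fun h M _ _ hM db a b R hR hab => NipModel.mi_of_nip T h hM hR hab,
    fun h => NipModel.nip_of_mi T h⟩
end

section
/- Let T be a complete first-order theory and let n ≥ 1. If for every model M of T, every formula φ(x₁, …, xₙ) with parameters from M, where x₁, …, xₙ are single variables, is n-dependent, then T is n-dependent (i.e., every formula φ(x̄₁, …, x̄ₙ) without parameters, in finite tuples of variables, is n-dependent). -/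
open FirstOrder FirstOrder.Language

universe u v

/-- A parameter-free formula `φ(x̄₁, …, x̄ₘ; ȳ)` (in `m + 1` groups of variables, the `k`-th
group of size `d k` and the last of size `e`) has the `(m+1)`-independence property with
respect to `T` if in some model of `T` there are an array `(ā_{k,i} : k < m, i < ω)` and
tuples `(b̄_S : S ⊆ ω^m)` such that `φ(ā_{0,i₀}, …, ā_{m-1,i_{m-1}}; b̄_S)` holds iff
`(i₀, …, i_{m-1}) ∈ S`. -/
def FormulaHasnIP {L : FirstOrder.Language.{u, v}} (T : L.Theory) {m : ℕ} {d : Fin m → ℕ}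
    {e : ℕ} (φ : L.Formula ((Σ k : Fin m, Fin (d k)) ⊕ Fin e)) : Prop :=
  ∃ (N : FirstOrder.Language.Theory.ModelType.{u, v, max u v} T)
    (a : (k : Fin m) → ℕ → Fin (d k) → N) (b : Set (Fin m → ℕ) → Fin e → N),
    ∀ (i : Fin m → ℕ) (S : Set (Fin m → ℕ)),
      φ.Realize (Sum.elim (fun v : Σ k : Fin m, Fin (d k) => a v.1 (i v.1) v.2) (b S)) ↔ i ∈ S

/-- A formula `φ(x̄₁, …, x̄ₘ; ȳ)` with parameters `c` from `M` has the `(m+1)`-independence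
property if the above configuration exists in some elementary extension of `M`. -/
def HasnIPWithParams {L : FirstOrder.Language.{u, v}} {M : Type (max u v)} [L.Structure M]
    {m : ℕ} {d : Fin m → ℕ} {e : ℕ} {γ : Type*}
    (φ : L.Formula (((Σ k : Fin m, Fin (d k)) ⊕ Fin e) ⊕ γ)) (c : γ → M) : Prop :=
  ∃ (N : ElemExt L M) (a : (k : Fin m) → ℕ → Fin (d k) → N.carrier)
    (b : Set (Fin m → ℕ) → Fin e → N.carrier),
    ∀ (i : Fin m → ℕ) (S : Set (Fin m → ℕ)),
      φ.Realize (Sum.elim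
        (Sum.elim (fun v : Σ k : Fin m, Fin (d k) => a v.1 (i v.1) v.2) (b S))
        (N.emb ∘ c)) ↔ i ∈ S


/-- Systems: subsets of the partite box. -/
abbrev RSys (K T Y : Type) : Type := (K → T × Y) → Bool

/-- Restriction of a system to a transversal grid. -/
def RSys.pat {K T Y : Type} (S : RSys K T Y) (J : K → T → Y) : (K → T) → Bool :=
  fun p => S (fun k => (p k, J k (p k)))

def RamseyGood (K T C : Type) (H : Set ((K → T) → Bool)) : Prop :=
  ∀ (Y : Type), Finite Y → ∃ (Y₂ : Type), Finite Y₂ ∧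
    ∀ c : RSys K T Y₂ → (K → T → Y₂) → C,
      ∃ (ι : K → T → Y → Y₂) (e : RSys K T Y → RSys K T Y₂),
        (∀ (S : RSys K T Y) (x : K → T × Y),
          e S (fun k => ((x k).1, ι k (x k).1 (x k).2)) = S x) ∧
        ∀ η ∈ H, ∃ col : C, ∀ (S : RSys K T Y) (J : K → T → Y), S.pat J = η →
          c (e S) (fun k t => ι k t (J k t)) = col

theorem ramseyGood_insert {K T C : Type} [Finite K] [Finite T] [Finite C]
    (H : Set ((K → T) → Bool)) (hH : RamseyGood K T C H) (η : (K → T) → Bool) :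
    RamseyGood K T C (insert η H) := by
  classical
  intro Y hY
  let A : Type := {a : RSys K T Y × (K → T → Y) // a.1.pat a.2 = η}
  obtain ⟨D, _, hD⟩ := Combinatorics.Line.exists_mono_in_high_dimension A C
  obtain ⟨Y₂, hY₂, hg⟩ := hH (D → Y) inferInstance
  refine ⟨Y₂, hY₂, fun c => ?_⟩
  obtain ⟨ι₂, e₂, hext₂, hcol₂⟩ := hg c
  let E : (D → RSys K T Y) → RSys K T (D → Y) := fun σ x =>
    if ∀ d, σ d (fun k => ((x k).1, (x k).2 d)) = η (fun k => (x k).1)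
    then η (fun k => (x k).1) else !η (fun k => (x k).1)
  obtain ⟨l, col, hl⟩ := hD (fun w => c (e₂ (E (fun d => (w d).1.1)))
    (fun k t => ι₂ k t (fun d => (w d).1.2 k t)))
  let ι₁ : K → T → Y → (D → Y) := fun k t y d =>
    (l.idxFun d).elim y (fun a => a.1.2 k t)
  let e₁ : RSys K T Y → RSys K T (D → Y) := fun S =>
    E (fun d => (l.idxFun d).elim S (fun a => a.1.1))
  have hext₁ : ∀ (S : RSys K T Y) (x : K → T × Y),
      e₁ S (fun k => ((x k).1, ι₁ k (x k).1 (x k).2)) = S x := by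
    intro S x
    by_cases hS : S x = η (fun k => (x k).1)
    · have : ∀ d, (l.idxFun d).elim S (fun a => a.1.1)
          (fun k => ((x k).1, ι₁ k (x k).1 (x k).2 d)) = η (fun k => (x k).1) := by
        intro d
        cases hd : l.idxFun d with
        | none => simpa [ι₁, hd] using hS
        | some a =>
          have := congrFun a.2 (fun k => (x k).1)
          simpa [ι₁, hd, RSys.pat] using this
      simp only [e₁, E]
      rw [if_pos this, hS]
    · have : ¬ ∀ d, (l.idxFun d).elim S (fun a => a.1.1)
          (fun k => ((x k).1, ι₁ k (x k).1 (x k).2 d)) = η (fun k => (x k).1) := by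
        intro hall
        obtain ⟨d, hd⟩ := l.proper
        have := hall d
        simp [ι₁, hd] at this
        exact hS this
      simp only [e₁, E]
      rw [if_neg this]
      cases h1 : S x <;> cases h2 : η (fun k => (x k).1) <;> simp_all
  have hpat : ∀ S J, (e₁ S).pat (fun k t => ι₁ k t (J k t)) = S.pat J := by
    intro S J
    funext p
    exact hext₁ S (fun k => (p k, J k (p k)))
  refine ⟨fun k t y => ι₂ k t (ι₁ k t y), fun S => e₂ (e₁ S), ?_, ?_⟩
  · intro S x
    rw [← hext₁ S x, ← hext₂ (e₁ S)]
  · intro θ hθ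
    rcases hθ with rfl | hθ
    · refine ⟨col, fun S J hSJ => ?_⟩
      have := hl (⟨(S, J), hSJ⟩ : A)
      rw [← this]
      congr 1
      · simp only [e₁]
        congr 2
        funext d
        simp only [Combinatorics.Line.apply_def]
        cases hd : l.idxFun d <;> simp
      · funext k t
        refine congrArg (ι₂ k t) ?_
        funext d
        simp only [ι₁, Combinatorics.Line.apply_def]
        cases hd : l.idxFun d <;> simp
    · obtain ⟨col', h'⟩ := hcol₂ θ hθ
      refine ⟨col', fun S J hSJ => ?_⟩
      exact h' (e₁ S) (fun k t => ι₁ k t (J k t)) ((hpat S J).trans hSJ)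

theorem ramseyGood_all (K T C : Type) [Finite K] [Finite T] [Finite C] 
    (H : Set ((K → T) → Bool)) : RamseyGood K T C H := by
  classical
  refine Set.Finite.induction_on (motive := fun H _ => RamseyGood K T C H) H (Set.toFinite H) ?_ ?_
  · intro Y hY
    exact ⟨Y, hY, fun c => ⟨fun _ _ y => y, fun S => S, fun _ _ => rfl, by simp⟩⟩
  · intro a s _ _ ih
    exact ramseyGood_insert s ih a

theorem update_walk {A : Type} [Finite A] [DecidableEq A] (G : (A → Bool) → Prop)
    (h : ∀ θ p b, G (Function.update θ p b) ↔ G θ) (θ θ' : A → Bool) : G θ ↔ G θ' := by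
  classical
  have key : ∀ s : Set A, G (fun a => open Classical in if a ∈ s then θ' a else θ a) ↔ G θ := by
    intro s
    refine Set.Finite.induction_on (motive := fun s _ => G (fun a => open Classical in if a ∈ s then θ' a else θ a) ↔ G θ) s (Set.toFinite s) ?_ ?_
    · simp
    · intro a s ha _ ih
      refine Iff.trans (iff_of_eq ?_) ((h _ a (θ' a)).trans ih)
      congr 1
      funext x
      by_cases hx : x = a
      · subst hx; simp
      · rw [Function.update_of_ne hx]
        by_cases hxs : x ∈ s
        · rw [if_pos hxs, if_pos (Set.mem_insert_of_mem a hxs)]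
        · rw [if_neg hxs, if_neg (by simp [hx, hxs])]
  have := key Set.univ
  simpa using this.symm

section WeakIP

variable {K V Γ : Type} {N : Type*}

/-- Every `K`-partite hypergraph on `I` is coded by `P` with parameters `c`. -/
def Codes (β : V → K) (P : Set (V ⊕ Γ → N)) (I : Type) (c : Γ → N) : Prop :=
  ∀ E : Set (K → I), ∃ a : V → I → N,
    ∀ i : K → I, Sum.elim (fun v => a v (i (β v))) c ∈ P ↔ i ∈ E

def WeakIP (β : V → K) (P : Set (V ⊕ Γ → N)) : Prop :=
  ∀ I : Type, Finite I → ∃ c : Γ → N, Codes β P I c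

theorem Codes.mono {β : V → K} {P : Set (V ⊕ Γ → N)} {I I' : Type} {c : Γ → N}
    (h : Codes β P I' c) (f : I → I') (hf : Function.Injective f) : Codes β P I c := by
  intro E
  obtain ⟨a, ha⟩ := h {i' | ∃ i ∈ E, i' = f ∘ i}
  refine ⟨fun v j => a v (f j), fun i => ?_⟩
  refine (ha (f ∘ i)).trans ⟨?_, fun hi => ⟨i, hi, rfl⟩⟩
  rintro ⟨i', hi', h⟩
  rwa [hf.comp_left h]

variable [DecidableEq V] [DecidableEq K] {T : Type}

/-- Combine: the value `α` at `v0`, `x` on the rest of the block `k0`, `b` elsewhere. -/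
def mixv (β : V → K) (k0 : K) (v0 : V) (α : N) (x : V → N)
    (b : {v : V // β v ≠ k0} → T → N) (p : {k : K // k ≠ k0} → T) : V → N := fun v =>
  if v = v0 then α else if h : β v = k0 then x v else b ⟨v, h⟩ (p ⟨β v, h⟩)

/-- The patterns realized over `α`. -/
def Realz (β : V → K) (k0 : K) (v0 : V) (P : Set (V ⊕ Γ → N)) (c : Γ → N) (α : N)
    (b : {v : V // β v ≠ k0} → T → N) : Set (({k : K // k ≠ k0} → T) → Bool) :=
  {η | ∃ x : V → N, ∀ p, Sum.elim (mixv β k0 v0 α x b p) c ∈ P ↔ η p = true}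

def mapA (v0 : V) : V ⊕ Γ → {v : V // v ≠ v0} ⊕ (Γ ⊕ Unit)
  | Sum.inl v => if h : v = v0 then Sum.inr (Sum.inr ()) else Sum.inl ⟨v, h⟩
  | Sum.inr g => Sum.inr (Sum.inl g)

theorem caseA {β : V → K} {k0 : K} {v0 : V} (hv0 : β v0 = k0) {P : Set (V ⊕ Γ → N)}
    (hno : ∀ c, ¬ Codes (fun v : {v : V // v ≠ v0} => β v)
      ((fun g : _ → N => g ∘ mapA (Γ := Γ) v0) ⁻¹' P) T c)
    (c : Γ → N) (α : N) (b : {v : V // β v ≠ k0} → T → N) :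
    ∃ η, η ∉ Realz β k0 v0 P c α b := by
  classical
  by_contra hall
  push Not at hall
  choose X hX using hall
  apply hno (Sum.elim c (fun _ => α))
  intro E
  let ext : T → ({k : K // k ≠ k0} → T) → K → T := fun j p k =>
    if h : k = k0 then j else p ⟨k, h⟩
  refine ⟨fun v j => if h : β v = k0 then X (fun p => decide (ext j p ∈ E)) v
    else b ⟨v, h⟩ j, fun i => ?_⟩
  have key := hX (fun p => decide (ext (i k0) p ∈ E)) (fun k => i k)
  have h1 : ext (i k0) (fun k => i k) = i := by
    funext k
    by_cases h : k = k0
    · subst h; simp [ext]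
    · simp [ext, h]
  rw [h1, decide_eq_true_iff] at key
  rw [← key, Set.mem_preimage]
  apply iff_of_eq
  congr 1
  funext s
  rcases s with v | g
  · by_cases hv : v = v0
    · subst hv; simp [mapA, mixv]
    · by_cases hb : β v = k0
      · simp [mapA, mixv, hv, hb]
      · simp [mapA, mixv, hv, hb]
  · simp [mapA]

variable [DecidableEq T]

/-- The new relation of case B. -/
def relB (β : V → K) (k0 : K) (v0 : V) (P : Set (V ⊕ Γ → N))
    (η : ({k : K // k ≠ k0} → T) → Bool) (p0 : {k : K // k ≠ k0} → T) :
    Set ({v : V // β v ≠ k0 ∨ v = v0} ⊕ (Γ ⊕ {v : V // β v ≠ k0} × T) → N) :=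
  {g | η ∈ Realz β k0 v0 P (fun γ => g (Sum.inr (Sum.inl γ))) (g (Sum.inl ⟨v0, Or.inr rfl⟩))
    (fun v t => if t = p0 ⟨β v, v.2⟩ then g (Sum.inl ⟨v, Or.inl v.2⟩)
      else g (Sum.inr (Sum.inr (v, t))))}

def mapB (β : V → K) (k0 : K) (v0 : V) (p0 : {k : K // k ≠ k0} → T)
    (p : {k : K // k ≠ k0} → T) : V ⊕ Γ →
      ({v : V // β v ≠ k0 ∨ v = v0} ⊕ (Γ ⊕ {v : V // β v ≠ k0} × T)) ⊕ V
  | Sum.inl v => if v = v0 then Sum.inl (Sum.inl ⟨v0, Or.inr rfl⟩) else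
      if h : β v = k0 then Sum.inr v else
        if p ⟨β v, h⟩ = p0 ⟨β v, h⟩ then Sum.inl (Sum.inl ⟨v, Or.inl h⟩)
        else Sum.inl (Sum.inr (Sum.inr (⟨v, h⟩, p ⟨β v, h⟩)))
  | Sum.inr g => Sum.inl (Sum.inr (Sum.inl g))

theorem relB_definable [Finite K] [Finite V] [Finite T]
    {L : FirstOrder.Language} [L.Structure N] (β : V → K) (k0 : K) (v0 : V)
    (P : Set (V ⊕ Γ → N)) (hP : (∅ : Set N).Definable L P)
    (η : ({k : K // k ≠ k0} → T) → Bool) (p0 : {k : K // k ≠ k0} → T) :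
    (∅ : Set N).Definable L (relB β k0 v0 P η p0) := by
  have h1 : ∀ p, (∅ : Set N).Definable L
      {g : _ → N | g ∘ mapB (Γ := Γ) β k0 v0 p0 p ∈ P ↔ η p = true} := by
    intro p
    have := hP.preimage_comp (mapB (Γ := Γ) β k0 v0 p0 p)
    cases hη : η p
    · convert this.compl using 1
      ext g; simp
    · convert this using 1
      ext g; simp
  have h2 := (Set.definable_iInter_of_finite h1).exists_of_finite
  convert h2 using 1
  ext g
  simp only [relB, Realz, Set.mem_ofPred_eq, Set.mem_iInter]
  refine exists_congr fun x => forall_congr' fun p => ?_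
  refine iff_congr (iff_of_eq ?_) Iff.rfl
  congr 1
  funext s
  rcases s with v | g
  · by_cases hv : v = v0
    · subst hv; simp [mapB, mixv]
    · by_cases hb : β v = k0
      · simp [mapB, mixv, hv, hb]
      · by_cases hp : p ⟨β v, hb⟩ = p0 ⟨β v, hb⟩
        · simp [mapB, mixv, hv, hb, hp]
        · simp [mapB, mixv, hv, hb, hp]
  · simp [mapB]

def relBs (β : V → K) (k0 : K) (v0 : V) (P : Set (V ⊕ Γ → N))
    (η : ({k : K // k ≠ k0} → T) → Bool) (p0 : {k : K // k ≠ k0} → T) (s : Bool) :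
    Set ({v : V // β v ≠ k0 ∨ v = v0} ⊕ (Γ ⊕ {v : V // β v ≠ k0} × T) → N) :=
  {g | g ∈ relB β k0 v0 P η p0 ↔ s = true}

theorem relBs_definable [Finite K] [Finite V] [Finite T]
    {L : FirstOrder.Language} [L.Structure N] (β : V → K) (k0 : K) (v0 : V)
    (P : Set (V ⊕ Γ → N)) (hP : (∅ : Set N).Definable L P)
    (η : ({k : K // k ≠ k0} → T) → Bool) (p0 : {k : K // k ≠ k0} → T) (s : Bool) :
    (∅ : Set N).Definable L (relBs β k0 v0 P η p0 s) := by
  have := relB_definable β k0 v0 P hP η p0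
  cases s
  · convert this.compl using 1
    ext g; simp [relBs]
  · convert this using 1
    ext g; simp [relBs]

theorem caseB_finite [Finite K] [Finite T] {β : V → K} {k0 : K} {v0 : V}
    (hv0 : β v0 = k0) {P : Set (V ⊕ Γ → N)} (hW : WeakIP β P)
    (hA : ∀ (c : Γ → N) (α : N) (b : {v : V // β v ≠ k0} → T → N),
      ∃ η, η ∉ Realz β k0 v0 P c α b)
    (I : Type) (hI : Finite I) :
    ∃ (η : ({k : K // k ≠ k0} → T) → Bool) (p0 : {k : K // k ≠ k0} → T) (s : Bool),
      ∃ c', Codes (fun v : {v : V // β v ≠ k0 ∨ v = v0} => β v)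
        (relBs β k0 v0 P η p0 s) I c' := by
  classical
  obtain ⟨Y₂, hY₂, hR⟩ := ramseyGood_all {k : K // k ≠ k0} T
    (Set (({k : K // k ≠ k0} → T) → Bool)) Set.univ (Option I) inferInstance
  obtain ⟨c, hc⟩ := hW (RSys {k : K // k ≠ k0} T Y₂ ⊕ T × Y₂) inferInstance
  obtain ⟨a, ha⟩ := hc {i | ∃ S, i k0 = Sum.inl S ∧ ∃ x : {k : K // k ≠ k0} → T × Y₂,
    (∀ k : {k : K // k ≠ k0}, i k = Sum.inr (x k)) ∧ S x = true}
  let color : RSys {k : K // k ≠ k0} T Y₂ → ({k : K // k ≠ k0} → T → Y₂) →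
      Set (({k : K // k ≠ k0} → T) → Bool) := fun S J =>
    Realz β k0 v0 P c (a v0 (Sum.inl S)) (fun v t => a v (Sum.inr (t, J ⟨β v, v.2⟩ t)))
  have hself : ∀ S J, S.pat J ∈ color S J := by
    intro S J
    refine ⟨fun v => a v (Sum.inl S), fun p => ?_⟩
    let i : K → RSys {k : K // k ≠ k0} T Y₂ ⊕ T × Y₂ := fun k =>
      if h : k = k0 then Sum.inl S else Sum.inr (p ⟨k, h⟩, J ⟨k, h⟩ (p ⟨k, h⟩))
    have h0 : i k0 = Sum.inl S := by simp [i]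
    have h1 : ∀ k : {k : K // k ≠ k0}, i k = Sum.inr (p k, J k (p k)) := by
      intro k; simp [i, k.2]
    have h2 := ha i
    have h3 : Sum.elim (mixv β k0 v0 (a v0 (Sum.inl S)) (fun v => a v (Sum.inl S))
        (fun (v : {v : V // β v ≠ k0}) t => a v (Sum.inr (t, J ⟨β v, v.2⟩ t))) p) c =
        Sum.elim (fun v => a v (i (β v))) c := by
      congr 1
      funext v
      by_cases hv : v = v0
      · subst hv; simp [mixv, hv0, h0]
      · by_cases hb : β v = k0
        · simp [mixv, hv, hb, h0]
        · simp [mixv, hv, hb, i]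
    rw [h3, h2]
    constructor
    · rintro ⟨S', hS', x, hx, hSx⟩
      rw [h0] at hS'
      cases hS'
      have : x = fun k => (p k, J k (p k)) := by
        funext k
        have := (hx k).symm.trans (h1 k)
        exact Sum.inr_injective this
      rw [this] at hSx
      exact hSx
    · intro h
      exact ⟨S, h0, _, h1, h⟩
  obtain ⟨ι, e, hext, hcol⟩ := hR color
  choose F hF using fun η => hcol η (Set.mem_univ η)
  have hpat : ∀ S J, (e S).pat (fun k t => ι k t (J k t)) = S.pat J := by
    intro S J
    funext p
    exact hext S (fun k => (p k, J k (p k)))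
  have hex : ∀ η : ({k : K // k ≠ k0} → T) → Bool,
      ∃ (S : RSys {k : K // k ≠ k0} T (Option I)) (J : {k : K // k ≠ k0} → T → Option I),
        S.pat J = η :=
    fun η => ⟨fun x => η (fun k => (x k).1), fun _ _ => none, rfl⟩
  have hFself : ∀ η, η ∈ F η := by
    intro η
    obtain ⟨S, J, hSJ⟩ := hex η
    rw [← hF η S J hSJ]
    have := hself (e S) (fun k t => ι k t (J k t))
    rwa [hpat, hSJ] at this
  obtain ⟨ηs, hηs⟩ : ∃ ηs, ηs ∉ F (fun _ => false) := by
    obtain ⟨S, J, hSJ⟩ := hex (fun _ => false)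
    rw [← hF _ S J hSJ]
    exact hA _ _ _
  obtain ⟨θ, p, s, hs⟩ : ∃ (θ : ({k : K // k ≠ k0} → T) → Bool) (p : {k : K // k ≠ k0} → T)
      (s : Bool), ∀ b, ηs ∈ F (Function.update θ p b) ↔ b = s := by
    by_contra hcon
    apply hηs
    refine (update_walk (fun θ => ηs ∈ F θ) ?_ ηs (fun _ => false)).1 (hFself ηs)
    intro θ p b
    by_contra hne
    apply hcon
    refine ⟨θ, p, if ηs ∈ F (Function.update θ p true) then true else false, ?_⟩
    have hθ : Function.update θ p (θ p) = θ := Function.update_eq_self p θ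
    have h2 : ¬ (ηs ∈ F (Function.update θ p b) ↔ ηs ∈ F (Function.update θ p (θ p))) := by
      rwa [hθ]
    generalize θ p = b' at h2
    intro b''
    cases b <;> cases b' <;> cases b'' <;> simp at h2 ⊢ <;> tauto
  refine ⟨ηs, p, s, Sum.elim c (fun z => a z.1 (Sum.inr (z.2, ι ⟨β z.1, z.1.2⟩ z.2 none))), ?_⟩
  intro E
  let Sj : I → RSys {k : K // k ≠ k0} T (Option I) := fun j x =>
    if (fun k => (x k).1) = p then
      decide (∃ i ∈ E, i k0 = j ∧ ∀ k : {k : K // k ≠ k0}, (x k).2 = some (i k))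
    else θ (fun k => (x k).1)
  refine ⟨fun v j => if h : β v = k0 then a v0 (Sum.inl (e (Sj j))) else
    a v (Sum.inr (p ⟨β v, h⟩, ι ⟨β v, h⟩ (p ⟨β v, h⟩) (some j))), fun i => ?_⟩
  let J : {k : K // k ≠ k0} → T → Option I := fun k t => if t = p k then some (i k) else none
  have hJ : (Sj (i k0)).pat J = Function.update θ p (decide (i ∈ E)) := by
    funext r
    by_cases hr : r = p
    · subst hr
      simp only [RSys.pat, Sj, J, if_true, Function.update_self]
      congr 1
      apply propext
      constructor
      · rintro ⟨i', hi', h0, h1⟩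
        have : i = i' := by
          funext k
          by_cases hk : k = k0
          · subst hk; exact h0.symm
          · exact Option.some_injective _ (h1 ⟨k, hk⟩)
        rwa [this]
      · intro hi
        exact ⟨i, hi, rfl, fun _ => rfl⟩
    · simp [RSys.pat, Sj, hr]
  have hcolor := hF _ _ _ hJ
  have hmem := hs (decide (i ∈ E))
  rw [← hcolor] at hmem
  have hrel : Sum.elim (fun v : {v : V // β v ≠ k0 ∨ v = v0} =>
      (fun v j => if h : β v = k0 then a v0 (Sum.inl (e (Sj j))) else
        a v (Sum.inr (p ⟨β v, h⟩, ι ⟨β v, h⟩ (p ⟨β v, h⟩) (some j)))) (v : V) (i (β v)))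
      (Sum.elim c (fun z : {v : V // β v ≠ k0} × T =>
        a z.1 (Sum.inr (z.2, ι ⟨β z.1, z.1.2⟩ z.2 none)))) ∈ relB β k0 v0 P ηs p ↔
      ηs ∈ color (e (Sj (i k0))) (fun k t => ι k t (J k t)) := by
    simp only [relB, color, Set.mem_ofPred_eq, Sum.elim_inl, Sum.elim_inr]
    apply iff_of_eq
    congr 2
    · simp [hv0]
    · funext v t
      by_cases ht : t = p ⟨β v, v.2⟩
      · subst ht
        simp [J, v.2]
      · simp [J, ht]
  simp only [relBs, Set.mem_ofPred_eq]
  refine (iff_congr (hrel.trans hmem) Iff.rfl).trans ?_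
  cases s <;> simp

theorem caseB [Finite K] [Finite T] {β : V → K} {k0 : K} {v0 : V}
    (hv0 : β v0 = k0) {P : Set (V ⊕ Γ → N)} (hW : WeakIP β P)
    (hA : ∀ (c : Γ → N) (α : N) (b : {v : V // β v ≠ k0} → T → N),
      ∃ η, η ∉ Realz β k0 v0 P c α b) :
    ∃ (η : ({k : K // k ≠ k0} → T) → Bool) (p0 : {k : K // k ≠ k0} → T) (s : Bool),
      WeakIP (fun v : {v : V // β v ≠ k0 ∨ v = v0} => β v) (relBs β k0 v0 P η p0 s) := by
  classical
  by_contra hcon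
  simp only [WeakIP] at hcon
  push Not at hcon
  choose I hI hbad using hcon
  let Z := (({k : K // k ≠ k0} → T) → Bool) × ({k : K // k ≠ k0} → T) × Bool
  have : ∀ z : Z, Finite (I z.1 z.2.1 z.2.2) := fun z => hI _ _ _
  obtain ⟨η, p, s, c', hc'⟩ := caseB_finite hv0 hW hA (Σ z : Z, I z.1 z.2.1 z.2.2) inferInstance
  refine hbad η p s c' (hc'.mono (fun y => ⟨(η, p, s), y⟩) ?_)
  intro y y' h
  simpa using h

end WeakIP

theorem weakIP_reduce {K : Type} [Finite K] {N : Type*} {L : FirstOrder.Language}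
    [L.Structure N] (n : ℕ) : ∀ (V Γ : Type) [Finite V] [Finite Γ] (β : V → K)
    (P : Set (V ⊕ Γ → N)), Nat.card V = n → (∅ : Set N).Definable L P → WeakIP β P →
    ∃ (V' Γ' : Type) (_ : Finite V') (_ : Finite Γ') (β' : V' → K) (P' : Set (V' ⊕ Γ' → N)),
      Function.Injective β' ∧ (∅ : Set N).Definable L P' ∧ WeakIP β' P' := by
  classical
  induction n using Nat.strong_induction_on with
  | _ n ih =>
  intro V Γ _ _ β P hcard hP hW
  by_cases hinj : Function.Injective β
  · exact ⟨V, Γ, inferInstance, inferInstance, β, P, hinj, hP, hW⟩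
  simp only [Function.Injective] at hinj
  push Not at hinj
  obtain ⟨v0, v1, hv, hne⟩ := hinj
  by_cases hA : WeakIP (fun v : {v : V // v ≠ v0} => β v)
      ((fun g : _ → N => g ∘ mapA (Γ := Γ) v0) ⁻¹' P)
  · refine ih _ ?_ {v : V // v ≠ v0} (Γ ⊕ Unit) _ _ rfl (hP.preimage_comp _) hA
    rw [← hcard]
    exact Finite.card_subtype_lt (x := v0) (by simp)
  · simp only [WeakIP] at hA
    push Not at hA
    obtain ⟨T, hT, hT'⟩ := hA
    obtain ⟨η, p, s, h⟩ := caseB (k0 := β v0) rfl hW (caseA rfl hT')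
    refine ih _ ?_ {v : V // β v ≠ β v0 ∨ v = v0} _ _ _ rfl
      (relBs_definable β (β v0) v0 P hP η p s) h
    rw [← hcard]
    exact Finite.card_subtype_lt (x := v1) (by simp [hv, hne.symm])

section Final

open FirstOrder FirstOrder.Language

theorem weakIP_of_formulaHasnIP {L : FirstOrder.Language.{u, v}} (T : L.Theory) {m : ℕ}
    {d : Fin m → ℕ} {e : ℕ} (φ : L.Formula ((Σ k : Fin m, Fin (d k)) ⊕ Fin e))
    (h : FormulaHasnIP T φ) :
    ∃ (N : FirstOrder.Language.Theory.ModelType.{u, v, max u v} T) (V Γ : Type)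
      (_ : Finite V) (_ : Finite Γ) (β : V → Option (Fin m)) (P : Set (V ⊕ Γ → N)),
      (∅ : Set N).Definable L P ∧ WeakIP β P := by
  classical
  obtain ⟨N, a, b, hab⟩ := h
  refine ⟨N, (Σ k : Fin m, Fin (d k)) ⊕ Fin e, Empty, inferInstance, inferInstance,
    Sum.elim (fun v => some v.1) (fun _ => none),
    (fun g : _ → N => g ∘ Sum.inl) ⁻¹' (Set.ofPred φ.Realize), ?_, ?_⟩
  · apply Set.Definable.preimage_comp
    exact Set.empty_definable_iff.2 ⟨φ, rfl⟩
  · intro I hI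
    refine ⟨Empty.elim, fun E => ?_⟩
    obtain ⟨f, hf⟩ : ∃ f : I → ℕ, Function.Injective f := by
      obtain ⟨n, ⟨eq⟩⟩ := Finite.exists_equiv_fin I
      exact ⟨fun i => (eq i : ℕ), fun x y hxy => eq.injective (Fin.ext hxy)⟩
    refine ⟨fun v j => Sum.elim (fun w : Σ k : Fin m, Fin (d k) => a w.1 (f j) w.2)
      (b {t | ∃ i ∈ E, i none = j ∧ ∀ k, t k = f (i (some k))}) v, fun i => ?_⟩
    have := hab (fun k => f (i (some k))) {t | ∃ i' ∈ E, i' none = i none ∧ ∀ k, t k = f (i' (some k))}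
    have h2 : (fun k => f (i (some k))) ∈
        {t | ∃ i' ∈ E, i' none = i none ∧ ∀ k, t k = f (i' (some k))} ↔ i ∈ E := by
      constructor
      · rintro ⟨i', hi', h0, h1⟩
        have : i = i' := by
          funext k
          cases k with
          | none => exact h0.symm
          | some k => exact hf (h1 k)
        rwa [this]
      · intro hi
        exact ⟨i, hi, rfl, fun _ => rfl⟩
    rw [← h2, ← this]
    apply iff_of_eq
    change φ.Realize _ = φ.Realize _
    congr 1
    funext v
    rcases v with v | v <;> rfl

theorem hasnIPWithParams_of_weakIP {L : FirstOrder.Language.{u, v}} (T : L.Theory) {m : ℕ}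
    (N : FirstOrder.Language.Theory.ModelType.{u, v, max u v} T) (V Γ : Type)
    [Finite V] [Finite Γ] (β : V → Option (Fin m)) (P : Set (V ⊕ Γ → N))
    (hβ : Function.Injective β) (hP : (∅ : Set N).Definable L P) (hW : WeakIP β P) :
    ∃ (M : Type (max u v)) (_ : L.Structure M) (_ : Nonempty M) (_ : M ⊨ T) (k : ℕ)
      (φ : L.Formula (((Σ _ : Fin m, Fin 1) ⊕ Fin 1) ⊕ Fin k))
      (c : Fin k → M), HasnIPWithParams φ c := by
  classical
  obtain ⟨φ, rfl⟩ := Set.empty_definable_iff.1 hP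
  obtain ⟨k, ⟨eΓ⟩⟩ := Finite.exists_equiv_fin Γ
  let r : V ⊕ Γ → ((Σ _ : Fin m, Fin 1) ⊕ Fin 1) ⊕ Fin k :=
    Sum.map (fun v => (β v).elim (Sum.inr 0) (fun j => Sum.inl ⟨j, 0⟩)) eΓ
  let J : ℕ → Type := fun q => Fin (q + 1) ⊕ Set (Fin m → Fin (q + 1))
  choose c hc using fun q : ℕ => hW (J q) inferInstance
  choose a ha using fun q : ℕ => hc q {i | ∃ S, i none = Sum.inr S ∧ ∃ f : Fin m → Fin (q + 1),
    (∀ j, i (some j) = Sum.inl (f j)) ∧ f ∈ S}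
  let A : ∀ q, Option (Fin m) → J q → N := fun q =>
    Function.extend β (a q) (fun _ _ => Classical.arbitrary N)
  have hA : ∀ q v, A q (β v) = a q v := fun q v => hβ.extend_apply _ _ v
  let U : Ultrafilter ℕ := Filter.hyperfilter ℕ
  let M := (U : Filter ℕ).Product (fun _ => (N : Type (max u v)))
  have hMT : M ⊨ T := by
    refine ⟨fun ψ hψ => ?_⟩
    rw [FirstOrder.Language.Ultraproduct.sentence_realize]
    exact Filter.Eventually.of_forall fun _ => Theory.realize_sentence_of_mem T hψ
  refine ⟨M, inferInstance, inferInstance, hMT, k, φ.relabel r,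
    fun γ => ((fun q => c q (eΓ.symm γ) : ∀ _ : ℕ, N) : M), ⟨M, ElementaryEmbedding.refl L M⟩,
    fun k i _ => ((fun q => A q (some k) (Sum.inl (Fin.ofNat (q + 1) i)) : ∀ _ : ℕ, N) : M),
    fun S _ => ((fun q => A q none (Sum.inr {f | (fun j => (f j : ℕ)) ∈ S}) : ∀ _ : ℕ, N) : M),
    fun i S => ?_⟩
  rw [Formula.realize_relabel]
  let x : V ⊕ Γ → ∀ _ : ℕ, N := Sum.elim
    (fun v q => a q v ((β v).elim (Sum.inr {f | (fun j => (f j : ℕ)) ∈ S})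
      (fun k => Sum.inl (Fin.ofNat (q + 1) (i k))))) (fun γ q => c q γ)
  have hx := FirstOrder.Language.Ultraproduct.realize_formula_cast (u := U) φ x
  have hev : ∀ᶠ q in (U : Filter ℕ), ((φ.Realize fun s => x s q) ↔ i ∈ S) := by
    have hbig : ∀ᶠ q in (U : Filter ℕ), ∀ k, i k ≤ q := by
      have : ∀ᶠ q in Filter.atTop, ∀ k, i k ≤ q :=
        Filter.eventually_all.2 fun k => Filter.eventually_ge_atTop (i k)
      exact (Nat.hyperfilter_le_atTop) this
    filter_upwards [hbig] with q hq
    have h1 := ha q (fun o => o.elim (Sum.inr {f | (fun j => (f j : ℕ)) ∈ S})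
      (fun k => Sum.inl (Fin.ofNat (q + 1) (i k))))
    have h2 : (fun s => x s q) = Sum.elim (fun v => a q v ((β v).elim
        (Sum.inr {f | (fun j => (f j : ℕ)) ∈ S})
        (fun k => Sum.inl (Fin.ofNat (q + 1) (i k))))) (c q) := by
      funext s
      rcases s with v | γ <;> rfl
    have h3 : (fun j => ((Fin.ofNat (q + 1) (i j) : Fin (q + 1)) : ℕ)) = i := by
      funext j
      simp [Fin.ofNat, Nat.mod_eq_of_lt (Nat.lt_succ_of_le (hq j))]
    rw [h2]
    refine h1.trans ?_
    constructor
    · rintro ⟨S', hS', f, hf, hfS⟩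
      have hS'' := Sum.inr_injective hS'
      subst hS''
      have : f = fun j => Fin.ofNat (q + 1) (i j) := by
        funext j
        exact (Sum.inl_injective (hf j)).symm
      subst this
      simpa only [Set.mem_ofPred_eq, h3] using hfS
    · intro hi
      refine ⟨_, rfl, fun j => Fin.ofNat (q + 1) (i j), fun _ => rfl, ?_⟩
      simpa only [Set.mem_ofPred_eq, h3] using hi
  have hfin : (∀ᶠ q in (U : Filter ℕ), φ.Realize fun s => x s q) ↔ i ∈ S := by
    rw [Filter.eventually_congr hev]
    exact Filter.eventually_const
  rw [← hfin, ← hx]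
  apply iff_of_eq
  congr 1
  funext s
  rcases s with v | γ
  · simp only [r, x, Function.comp_apply, Sum.map_inl, Sum.elim_inl]
    cases hv : β v with
    | none =>
      have e1 : ∀ q, A q none = a q v := fun q => by rw [← hv]; exact hA q v
      exact congrArg (fun g : ℕ → N => (g : M)) (funext fun q => congrFun (e1 q) _)
    | some j =>
      have e1 : ∀ q, A q (some j) = a q v := fun q => by rw [← hv]; exact hA q v
      exact congrArg (fun g : ℕ → N => (g : M)) (funext fun q => congrFun (e1 q) _)
  · exact congrArg (fun g : ℕ → N => (g : M))
      (funext fun q => congrArg (c q) (eΓ.symm_apply_apply γ))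

end Final

/-- If, in every model `M` of the complete theory `T`, every formula
`φ(x₁, …, xₙ)` in `n` single variables with parameters from `M` is `n`-dependent, then `T` is
`n`-dependent: every parameter-free formula `φ(x̄₁, …, x̄ₙ)` in `n` finite groups of variables
is `n`-dependent. -/
theorem n_dependent_of_single_variables_with_params {L : FirstOrder.Language.{u, v}}
    (T : L.Theory) (hT : T.IsComplete) (n : ℕ) (hn : 1 ≤ n)
    (h : ∀ (M : Type (max u v)) [L.Structure M] [Nonempty M], M ⊨ T →
      ∀ (k : ℕ) (φ : L.Formula (((Σ _ : Fin (n - 1), Fin 1) ⊕ Fin 1) ⊕ Fin k))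
        (c : Fin k → M), ¬ HasnIPWithParams φ c) :
    ∀ (d : Fin (n - 1) → ℕ) (e : ℕ)
      (φ : L.Formula ((Σ k : Fin (n - 1), Fin (d k)) ⊕ Fin e)),
      ¬ FormulaHasnIP T φ := by
  intro d e φ hφ
  obtain ⟨N, V, Γ, hV, hΓ, β, P, hP, hW⟩ := weakIP_of_formulaHasnIP T φ hφ
  obtain ⟨V', Γ', hV', hΓ', β', P', hβ', hP', hW'⟩ :=
    weakIP_reduce (L := L) _ V Γ β P rfl hP hW
  obtain ⟨M, i1, i2, hM, k, ψ, c, hc⟩ :=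
    hasnIPWithParams_of_weakIP T N V' Γ' β' P' hβ' hP' hW'
  exact h M hM k ψ c hc
end

section
/- The class of finite ordered bipartite graphs (finite L*-structures where U and V partition the domain, (U, ≤_U) and (V, ≤_V) are linear orders, and R ⊆ U × V) is a Ramsey class: for all finite ordered bipartite graphs A and B and every k ≥ 1, there is a finite ordered bipartite graph C such that for every coloring of the embeddings of A into C with k colors, there is an embedding of B into C such that all embeddings of A into C factoring through it receive the same color. -/
open FirstOrder FirstOrder.Language

universe u v

/-- An ordered bipartite graph: an `L*`-structure where `U` and `V` partition the domain,
`(U, ≤_U)` and `(V, ≤_V)` are linear orders, and `R ⊆ U × V`. -/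
structure OBG where
  U : Type
  V : Type
  [lu : LinearOrder U]
  [lv : LinearOrder V]
  R : U → V → Prop

attribute [instance] OBG.lu OBG.lv

/-- An ordered bipartite graph is finite if both parts are finite. -/
def OBG.Fin (A : OBG) : Prop := Finite A.U ∧ Finite A.V

/-- An embedding of ordered bipartite graphs: order-embeddings of the two parts which
preserve and reflect the edge relation. -/
@[ext]
structure OBGEmb (A B : OBG) where
  fu : A.U ↪o B.U
  fv : A.V ↪o B.V
  hR : ∀ u v, B.R (fu u) (fv v) ↔ A.R u v

/-- Composition of embeddings of ordered bipartite graphs. -/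
def OBGEmb.comp {A B C : OBG} (g : OBGEmb B C) (f : OBGEmb A B) : OBGEmb A C where
  fu := (f.fu).trans g.fu
  fv := (f.fv).trans g.fv
  hR := fun u v => by
    simpa using (g.hR (f.fu u) (f.fv v)).trans (f.hR u v)

namespace OBGRamsey

/-- Finite Ramsey theorem for `a`-subsets. -/
def RamseyAt (a : ℕ) : Prop :=
  ∀ (κ : Type) [Finite κ] [Nonempty κ] (m : ℕ), ∃ N : ℕ, ∀ (α : Type) [LinearOrder α]
    (X : Finset α), N ≤ X.card → ∀ χ : Finset α → κ, ∃ Y ⊆ X, Y.card = m ∧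
      ∃ c, ∀ S ⊆ Y, S.card = a → χ S = c

lemma ramseyAt_zero : RamseyAt 0 := by
  intro κ _ _ m
  refine ⟨m, fun α _ X hX χ => ?_⟩
  obtain ⟨Y, hY, hc⟩ := Finset.exists_subset_card_eq hX
  refine ⟨Y, hY, hc, χ ∅, fun S _ hS => ?_⟩
  rw [Finset.card_eq_zero.1 hS]

lemma prehom {a : ℕ} (h : RamseyAt a) (κ : Type) [Finite κ] [Nonempty κ] (m : ℕ) :
    ∃ N : ℕ, ∀ (α : Type) [LinearOrder α]
    (X : Finset α), N ≤ X.card → ∀ χ : Finset α → κ, ∃ Y ⊆ X, Y.card = m ∧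
      ∃ g : α → κ, ∀ S ⊆ Y, S.card = a → ∀ y ∈ Y, (∀ s ∈ S, y < s) → χ (insert y S) = g y := by
  induction m with
  | zero =>
    refine ⟨0, fun α _ X hX χ => ⟨∅, by simp, rfl, fun _ => Classical.arbitrary κ, ?_⟩⟩
    simp
  | succ m ih =>
    obtain ⟨N, hN⟩ := ih
    obtain ⟨N', hN'⟩ := h κ N
    refine ⟨N' + 1, fun α _ X hX χ => ?_⟩
    have hne : X.Nonempty := by
      rw [← Finset.card_pos]; omega
    set x := X.min' hne with hx
    have hxX : x ∈ X := Finset.min'_mem _ _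
    obtain ⟨Y', hY', hc', c, hc⟩ := hN' α (X.erase x)
      (by rw [Finset.card_erase_of_mem hxX]; omega) (fun S => χ (insert x S))
    obtain ⟨Y, hY, hcY, g, hg⟩ := hN α Y' hc'.ge χ
    have hlt : ∀ y ∈ Y, x < y := by
      intro y hy
      have := hY' (hY hy)
      rw [Finset.mem_erase] at this
      exact lt_of_le_of_ne (Finset.min'_le _ _ this.2) (Ne.symm this.1)
    have hxY : x ∉ Y := fun hh => lt_irrefl _ (hlt x hh)
    refine ⟨insert x Y, ?_, by rw [Finset.card_insert_of_notMem hxY, hcY], 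
      fun y => if y = x then c else g y, ?_⟩
    · intro y hy
      rcases Finset.mem_insert.1 hy with rfl | hy
      · exact hxX
      · exact Finset.mem_of_mem_erase (hY' (hY hy))
    · intro S hS hSa y hy hys
      have hxS : x ∉ S := by
        intro hh
        have h1 := hys x hh
        rcases Finset.mem_insert.1 hy with rfl | hy
        · exact lt_irrefl _ h1
        · exact lt_asymm h1 (hlt y hy)
      have hSY : S ⊆ Y := by
        intro s hs
        rcases Finset.mem_insert.1 (hS hs) with rfl | h2
        · exact absurd hs hxS
        · exact h2
      rcases Finset.mem_insert.1 hy with rfl | hy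
      · simp only [if_true]
        exact hc S (hSY.trans hY) hSa
      · have : y ≠ x := (hlt y hy).ne'
        simp only [this, if_false]
        exact hg S hSY hSa y hy hys

lemma ramseyAt_succ {a : ℕ} (h : RamseyAt a) : RamseyAt (a + 1) := by
  classical
  intro κ _ _ m
  haveI := Fintype.ofFinite κ
  obtain ⟨N, hN⟩ := prehom h κ (Fintype.card κ * m)
  refine ⟨N, fun α _ X hX χ => ?_⟩
  obtain ⟨Y, hY, hc, g, hg⟩ := hN α X hX χ
  obtain ⟨c, -, hcm⟩ := Finset.exists_le_card_fiber_of_mul_le_card_of_maps_to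
    (s := Y) (t := (Finset.univ : Finset κ)) (f := g) (n := m) (by simp)
    Finset.univ_nonempty (by rw [hc, Finset.card_univ])
  obtain ⟨Z, hZ, hZm⟩ := Finset.exists_subset_card_eq hcm
  have hZY : Z ⊆ Y := hZ.trans (Finset.filter_subset _ _)
  refine ⟨Z, hZY.trans hY, hZm, c, fun S hS hSa => ?_⟩
  have hne : S.Nonempty := by
    rw [← Finset.card_pos]; omega
  have hm := Finset.min'_mem S hne
  have h1 := hg (S.erase (S.min' hne)) ((Finset.erase_subset _ _).trans (hS.trans hZY))
    (by rw [Finset.card_erase_of_mem hm]; omega) (S.min' hne) (hZY (hS hm))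
    (fun s hs => Finset.min'_lt_of_mem_erase_min' _ _ hs)
  rw [Finset.insert_erase hm] at h1
  rw [h1]
  exact (Finset.mem_filter.1 (hZ (hS hm))).2

lemma ramseyAt (a : ℕ) : RamseyAt a := by
  induction a with
  | zero => exact ramseyAt_zero
  | succ a ih => exact ramseyAt_succ ih

/-- Ramsey theorem for finite linear orders and embeddings. -/
lemma ramsey_emb (A B : Type) [LinearOrder A] [LinearOrder B] [Finite A] [Finite B]
    (κ : Type) [Finite κ] [Nonempty κ] :
    ∃ N : ℕ, ∀ χ : (A ↪o Fin N) → κ, ∃ e : B ↪o Fin N, ∃ c, ∀ f : A ↪o B,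
      χ (f.trans e) = c := by
  classical
  haveI := Fintype.ofFinite A
  haveI := Fintype.ofFinite B
  obtain ⟨N, hN⟩ := ramseyAt (Fintype.card A) κ (Fintype.card B)
  refine ⟨N, fun χ => ?_⟩
  obtain ⟨Y, -, hYc, c, hc⟩ := hN (Fin N) Finset.univ (by simp) (fun S =>
    if h : ∃ f : A ↪o Fin N, Finset.univ.map f.toEmbedding = S then χ h.choose
      else Classical.arbitrary κ)
  refine ⟨(Fintype.orderIsoFinOfCardEq B rfl).symm.toOrderEmbedding.trans
    (Y.orderEmbOfFin hYc), c, fun f => ?_⟩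
  set e := (Fintype.orderIsoFinOfCardEq B rfl).symm.toOrderEmbedding.trans
    (Y.orderEmbOfFin hYc) with he
  have h1 := hc (Finset.univ.map (f.trans e).toEmbedding) (by
    intro y hy
    obtain ⟨b, -, rfl⟩ := Finset.mem_map.1 hy
    exact Finset.orderEmbOfFin_mem Y hYc _) (by simp)
  have hex : ∃ g : A ↪o Fin N, Finset.univ.map g.toEmbedding
      = Finset.univ.map (f.trans e).toEmbedding := ⟨_, rfl⟩
  rw [dif_pos hex] at h1
  have h2 : hex.choose = f.trans e := by
    rw [← OrderEmbedding.range_inj]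
    have h3 := congrArg (fun s : Finset (Fin N) => (s : Set (Fin N))) hex.choose_spec
    simpa using h3
  rw [← h2]; exact h1

lemma ramsey_prod (A A' B B' : Type) [LinearOrder A] [LinearOrder B] [Finite A] [Finite B]
    [LinearOrder A'] [LinearOrder B'] [Finite A'] [Finite B']
    (κ : Type) [Finite κ] [Nonempty κ] :
    ∃ N M : ℕ, ∀ χ : (A ↪o Fin N) → (A' ↪o Fin M) → κ, ∃ (e : B ↪o Fin N) (e' : B' ↪o Fin M),
      ∃ c, ∀ (f : A ↪o B) (f' : A' ↪o B'), χ (f.trans e) (f'.trans e') = c := by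
  obtain ⟨N, hN⟩ := ramsey_emb A B κ
  haveI : Finite (A ↪o Fin N) := Finite.of_injective (fun f => (f : A → Fin N))
    DFunLike.coe_injective
  obtain ⟨M, hM⟩ := ramsey_emb A' B' ((A ↪o Fin N) → κ)
  refine ⟨N, M, fun χ => ?_⟩
  obtain ⟨e', g, hg⟩ := hM (fun f' f => χ f f')
  obtain ⟨e, c, hc⟩ := hN g
  exact ⟨e, e', c, fun f f' => by rw [← hc f, ← hg f']⟩

/-- A partite system over a pair of index sets. -/
structure PS (N M : Type) where
  X : Type
  Y : Type
  p : X → N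
  q : Y → M
  R : X → Y → Prop
  fX : Finite X
  fY : Finite Y

/-- Embeddings of partite systems (injectivity is not needed). -/
structure PEmb {N M : Type} (P Q : PS N M) where
  f : P.X → Q.X
  g : P.Y → Q.Y
  hp : ∀ x, Q.p (f x) = P.p x
  hq : ∀ y, Q.q (g y) = P.q y
  hR : ∀ x y, Q.R (f x) (g y) ↔ P.R x y

/-- Sections of `P` over the copy `(ju, jv)` of `A`. -/
def IsSec {N M : Type} (A : OBG) (P : PS N M) (ju : A.U → N) (jv : A.V → M)
    (su : A.U → P.X) (sv : A.V → P.Y) : Prop :=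
  (∀ u, P.p (su u) = ju u) ∧ (∀ v, P.q (sv v) = jv v) ∧ ∀ u v, P.R (su u) (sv v) ↔ A.R u v

lemma IsSec.map {N M : Type} {A : OBG} {P Q : PS N M} {ju : A.U → N} {jv : A.V → M}
    {su : A.U → P.X} {sv : A.V → P.Y} (h : IsSec A P ju jv su sv) (e : PEmb P Q) :
    IsSec A Q ju jv (e.f ∘ su) (e.g ∘ sv) :=
  ⟨fun u => (e.hp _).trans (h.1 u), fun v => (e.hq _).trans (h.2.1 v),
    fun u v => (e.hR _ _).trans (h.2.2 u v)⟩

/-- The partite power. -/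
def power {N M : Type} (A : OBG) [Finite A.U] [Finite A.V] (P : PS N M) (ju : A.U → N)
    (jv : A.V → M) (ι : Type) [Finite ι] : PS N M where
  X := (A.U × (ι → P.X)) ⊕ (P.X × ι)
  Y := (A.V × (ι → P.Y)) ⊕ (P.Y × ι)
  p := Sum.elim (fun a => ju a.1) (fun a => P.p a.1)
  q := Sum.elim (fun a => jv a.1) (fun a => P.q a.1)
  R a b := match a, b with
    | Sum.inl (u, x), Sum.inl (v, y) =>
      (A.R u v ∧ ∀ t, P.R (x t) (y t)) ∨ (¬ A.R u v ∧ ∃ t, P.R (x t) (y t))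
    | Sum.inl (_, x), Sum.inr (y, j) => P.R (x j) y
    | Sum.inr (x, i), Sum.inl (_, y) => P.R x (y i)
    | Sum.inr (x, _), Sum.inr (y, _) => P.R x y
  fX := by
    haveI := P.fX
    infer_instance
  fY := by
    haveI := P.fY
    infer_instance

lemma step {N M : Type} (A : OBG) [Finite A.U] [Finite A.V] (P : PS N M) (ju : A.U → N)
    (jv : A.V → M) (hju : Function.Injective ju) (hjv : Function.Injective jv)
    (κ : Type) [Finite κ] :
    ∃ Q : PS N M, ∀ χ : (A.U → Q.X) → (A.V → Q.Y) → κ, ∃ e : PEmb P Q, ∃ c,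
      ∀ su sv, IsSec A P ju jv su sv → χ (e.f ∘ su) (e.g ∘ sv) = c := by
  classical
  haveI := P.fX
  haveI := P.fY
  let α : Type := {s : (A.U → P.X) × (A.V → P.Y) // IsSec A P ju jv s.1 s.2}
  obtain ⟨ι, _, hι⟩ := Combinatorics.Line.exists_mono_in_high_dimension α κ
  refine ⟨power A P ju jv ι, fun χ => ?_⟩
  obtain ⟨l, c, hc⟩ := hι (fun S => χ (fun u => Sum.inl (u, fun t => (S t).1.1 u))
    (fun v => Sum.inl (v, fun t => (S t).1.2 v)))
  obtain ⟨i, hi⟩ := l.proper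
  let cx : P.X → A.U → ι → P.X := fun x u t => (l.idxFun t).elim x (fun s => s.1.1 u)
  let cy : P.Y → A.V → ι → P.Y := fun y v t => (l.idxFun t).elim y (fun s => s.1.2 v)
  have hcx : ∀ x u, cx x u i = x := fun x u => by simp [cx, hi]
  have hcy : ∀ y v, cy y v i = y := fun y v => by simp [cy, hi]
  let F : P.X → (power A P ju jv ι).X := fun x =>
    if h : ∃ u, ju u = P.p x then Sum.inl (h.choose, cx x h.choose) else Sum.inr (x, i)
  let G : P.Y → (power A P ju jv ι).Y := fun y =>
    if h : ∃ v, jv v = P.q y then Sum.inl (h.choose, cy y h.choose) else Sum.inr (y, i)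
  have hF1 : ∀ x u, ju u = P.p x → F x = Sum.inl (u, cx x u) := by
    intro x u h
    have hex : ∃ u, ju u = P.p x := ⟨u, h⟩
    have : hex.choose = u := hju (hex.choose_spec.trans h.symm)
    have hd : F x = Sum.inl (hex.choose, cx x hex.choose) := dif_pos hex
    rw [hd, this]
  have hF2 : ∀ x, (¬ ∃ u, ju u = P.p x) → F x = Sum.inr (x, i) := by
    intro x h
    exact dif_neg h
  have hG1 : ∀ y v, jv v = P.q y → G y = Sum.inl (v, cy y v) := by
    intro y v h
    have hex : ∃ v, jv v = P.q y := ⟨v, h⟩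
    have : hex.choose = v := hjv (hex.choose_spec.trans h.symm)
    have hd : G y = Sum.inl (hex.choose, cy y hex.choose) := dif_pos hex
    rw [hd, this]
  have hG2 : ∀ y, (¬ ∃ v, jv v = P.q y) → G y = Sum.inr (y, i) := by
    intro y h
    exact dif_neg h
  refine ⟨⟨F, G, ?_, ?_, ?_⟩, c, ?_⟩
  · intro x
    by_cases h : ∃ u, ju u = P.p x
    · obtain ⟨u, h⟩ := h
      rw [hF1 x u h]; exact h
    · rw [hF2 x h]; rfl
  · intro y
    by_cases h : ∃ v, jv v = P.q y
    · obtain ⟨v, h⟩ := h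
      rw [hG1 y v h]; exact h
    · rw [hG2 y h]; rfl
  · intro x y
    by_cases h : ∃ u, ju u = P.p x
    · obtain ⟨u, h⟩ := h
      by_cases h' : ∃ v, jv v = P.q y
      · obtain ⟨v, h'⟩ := h'
        rw [hF1 x u h, hG1 y v h']
        change ((A.R u v ∧ ∀ t, P.R (cx x u t) (cy y v t)) ∨
          (¬ A.R u v ∧ ∃ t, P.R (cx x u t) (cy y v t))) ↔ _
        have key : ∀ t, (P.R (cx x u t) (cy y v t) ↔ P.R x y) ∨
            (P.R (cx x u t) (cy y v t) ↔ A.R u v) := by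
          intro t
          rcases ht : l.idxFun t with _ | s
          · left; simp [cx, cy, ht]
          · right; simpa [cx, cy, ht] using s.2.2.2 u v
        have hki : P.R (cx x u i) (cy y v i) ↔ P.R x y := by rw [hcx, hcy]
        constructor
        · rintro (⟨_, h2⟩ | ⟨h1, t, h2⟩)
          · exact hki.1 (h2 i)
          · rcases key t with h3 | h3
            · exact h3.1 h2
            · exact absurd (h3.1 h2) h1
        · intro hxy
          by_cases hA : A.R u v
          · left
            refine ⟨hA, fun t => ?_⟩
            rcases key t with h3 | h3
            · exact h3.2 hxy
            · exact h3.2 hA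
          · exact Or.inr ⟨hA, i, hki.2 hxy⟩
      · rw [hF1 x u h, hG2 y h']
        change P.R (cx x u i) y ↔ _
        rw [hcx]
    · by_cases h' : ∃ v, jv v = P.q y
      · obtain ⟨v, h'⟩ := h'
        rw [hF2 x h, hG1 y v h']
        change P.R x (cy y v i) ↔ _
        rw [hcy]
      · rw [hF2 x h, hG2 y h']
        exact Iff.rfl
  · intro su sv hs
    rw [← hc ⟨(su, sv), hs⟩]
    congr 1
    · funext u
      change F (su u) = _
      rw [hF1 (su u) u (hs.1 u).symm]
      congr 2
      funext t
      rcases ht : l.idxFun t with _ | s <;> simp [cx, ht, Combinatorics.Line.apply_def]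
    · funext v
      change G (sv v) = _
      rw [hG1 (sv v) v (hs.2.1 v).symm]
      congr 2
      funext t
      rcases ht : l.idxFun t with _ | s <;> simp [cy, ht, Combinatorics.Line.apply_def]

lemma steps {N M : Type} (A : OBG) [Finite A.U] [Finite A.V] (κ : Type) [Finite κ]
    (J : List {j : (A.U → N) × (A.V → M) // Function.Injective j.1 ∧ Function.Injective j.2})
    (P : PS N M) :
    ∃ Q : PS N M, ∀ χ : (A.U → Q.X) → (A.V → Q.Y) → κ, ∃ e : PEmb P Q, ∀ j ∈ J, ∃ c,
      ∀ su sv, IsSec A P j.1.1 j.1.2 su sv → χ (e.f ∘ su) (e.g ∘ sv) = c := by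
  induction J generalizing P with
  | nil =>
    exact ⟨P, fun χ => ⟨⟨id, id, fun _ => rfl, fun _ => rfl, fun _ _ => Iff.rfl⟩, by simp⟩⟩
  | cons j J ih =>
    obtain ⟨Q, hQ⟩ := step A P j.1.1 j.1.2 j.2.1 j.2.2 κ
    obtain ⟨Q', hQ'⟩ := ih Q
    refine ⟨Q', fun χ => ?_⟩
    obtain ⟨e', he'⟩ := hQ' χ
    obtain ⟨e, c, he⟩ := hQ (fun su sv => χ (e'.f ∘ su) (e'.g ∘ sv))
    refine ⟨⟨e'.f ∘ e.f, e'.g ∘ e.g, fun x => (e'.hp _).trans (e.hp x),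
      fun y => (e'.hq _).trans (e.hq y), fun x y => (e'.hR _ _).trans (e.hR x y)⟩, ?_⟩
    intro j' hj'
    rcases List.mem_cons.1 hj' with rfl | hj'
    · exact ⟨c, he⟩
    · obtain ⟨c', hc'⟩ := he' j' hj'
      exact ⟨c', fun su sv hs => hc' _ _ (hs.map e)⟩

/-- The ordered bipartite graph built from a partite system. -/
noncomputable def toOBG {N M : ℕ} (Q : PS (Fin N) (Fin M)) : OBG :=
  letI : LinearOrder Q.X := IsWellOrder.linearOrder WellOrderingRel
  letI : LinearOrder Q.Y := IsWellOrder.linearOrder WellOrderingRel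
  { U := Fin N ×ₗ Q.X
    V := Fin M ×ₗ Q.Y
    R := fun a b => Q.R (ofLex a).2 (ofLex b).2 }

lemma toOBG_fin {N M : ℕ} (Q : PS (Fin N) (Fin M)) : (toOBG Q).Fin := by
  haveI := Q.fX
  haveI := Q.fY
  exact ⟨inferInstanceAs (Finite (Fin N × Q.X)), inferInstanceAs (Finite (Fin M × Q.Y))⟩

/-- The embedding given by a section. -/
noncomputable def mkEmb {N M : ℕ} {Q : PS (Fin N) (Fin M)} {B : OBG} (ju : B.U ↪o Fin N)
    (jv : B.V ↪o Fin M) (su : B.U → Q.X) (sv : B.V → Q.Y)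
    (h : ∀ u v, Q.R (su u) (sv v) ↔ B.R u v) : OBGEmb B (toOBG Q) :=
  letI : LinearOrder Q.X := IsWellOrder.linearOrder WellOrderingRel
  letI : LinearOrder Q.Y := IsWellOrder.linearOrder WellOrderingRel
  { fu := OrderEmbedding.ofStrictMono
      (fun u => (toLex (ju u, su u) : Fin N ×ₗ Q.X))
      (fun _ _ h => Prod.Lex.toLex_lt_toLex.2 (Or.inl (ju.strictMono h)))
    fv := OrderEmbedding.ofStrictMono
      (fun u => (toLex (jv u, sv u) : Fin M ×ₗ Q.Y))
      (fun _ _ h => Prod.Lex.toLex_lt_toLex.2 (Or.inl (jv.strictMono h)))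
    hR := h }

end OBGRamsey

open OBGRamsey

/-- The class of finite ordered bipartite graphs is a Ramsey class: for all
finite ordered bipartite graphs `A`, `B` and every `k ≥ 1` there is a finite ordered
bipartite graph `C` such that for every `k`-coloring of the embeddings of `A` into `C` there
is an embedding `e` of `B` into `C` such that all embeddings of `A` into `C` factoring
through `e` get the same color. -/
theorem finite_ordered_bipartite_graphs_ramsey :
    ∀ A B : OBG, A.Fin → B.Fin → ∀ k : ℕ, 1 ≤ k →
      ∃ C : OBG, C.Fin ∧ ∀ χ : OBGEmb A C → Fin k,
        ∃ e : OBGEmb B C, ∀ f g : OBGEmb A B, χ (e.comp f) = χ (e.comp g) := by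
  classical
  intro A B hA hB k hk
  haveI := hA.1
  haveI := hA.2
  haveI := hB.1
  haveI := hB.2
  haveI : Nonempty (Fin k) := ⟨⟨0, hk⟩⟩
  obtain ⟨N, M, hNM⟩ := ramsey_prod A.U A.V B.U B.V (Fin k)
  let P : PS (Fin N) (Fin M) :=
    { X := B.U × Fin N
      Y := B.V × Fin M
      p := Prod.snd
      q := Prod.snd
      R := fun a b => B.R a.1 b.1
      fX := inferInstance
      fY := inferInstance }
  haveI := Fintype.ofFinite {j : (A.U → Fin N) × (A.V → Fin M) //
    Function.Injective j.1 ∧ Function.Injective j.2}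
  obtain ⟨Q, hQ⟩ := steps A (Fin k) (Finset.univ : Finset {j : (A.U → Fin N) × (A.V → Fin M) //
    Function.Injective j.1 ∧ Function.Injective j.2}).toList P
  refine ⟨toOBG Q, toOBG_fin Q, fun χ => ?_⟩
  obtain ⟨e, he⟩ := hQ (fun su sv =>
    if h : ∃ (ju : A.U ↪o Fin N) (jv : A.V ↪o Fin M), IsSec A Q ju jv su sv
      then χ (mkEmb h.choose h.choose_spec.choose su sv h.choose_spec.choose_spec.2.2)
      else Classical.arbitrary _)
  have he2 : ∀ (ju : A.U ↪o Fin N) (jv : A.V ↪o Fin M), ∃ c, ∀ su sv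
      (hs : IsSec A P ju jv su sv),
      χ (mkEmb ju jv (e.f ∘ su) (e.g ∘ sv) (hs.map e).2.2) = c := by
    intro ju jv
    obtain ⟨c, hc⟩ := he ⟨(ju, jv), ju.injective, jv.injective⟩ (by simp)
    refine ⟨c, fun su sv hs => ?_⟩
    have h1 := hc su sv hs
    have hex : ∃ (ju : A.U ↪o Fin N) (jv : A.V ↪o Fin M),
      IsSec A Q ju jv (e.f ∘ su) (e.g ∘ sv) := ⟨ju, jv, hs.map e⟩
    rw [dif_pos hex] at h1
    rw [← h1]
    have e1 : ju = hex.choose := by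
      ext u : 1
      rw [← (hs.map e).1 u, hex.choose_spec.choose_spec.1 u]
    have e2 : jv = hex.choose_spec.choose := by
      ext v : 1
      rw [← (hs.map e).2.1 v, hex.choose_spec.choose_spec.2.1 v]
    congr 2
  choose col hcol using he2
  obtain ⟨eu, ev, c, hc⟩ := hNM col
  have hB : IsSec B P eu ev (fun u => (u, eu u)) (fun v => (v, ev v)) :=
    ⟨fun _ => rfl, fun _ => rfl, fun _ _ => Iff.rfl⟩
  refine ⟨mkEmb eu ev (e.f ∘ fun u => (u, eu u)) (e.g ∘ fun v => (v, ev v)) (hB.map e).2.2, ?_⟩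
  suffices H : ∀ f : OBGEmb A B, χ ((mkEmb eu ev (e.f ∘ fun u => (u, eu u))
      (e.g ∘ fun v => (v, ev v)) (hB.map e).2.2).comp f) = c by
    intro f g
    rw [H f, H g]
  intro f
  rw [← hc f.fu f.fv]
  have hs : IsSec A P (f.fu.trans eu) (f.fv.trans ev) (fun u => (f.fu u, eu (f.fu u)))
      (fun v => (f.fv v, ev (f.fv v))) :=
    ⟨fun _ => rfl, fun _ => rfl, fun u v => f.hR u v⟩
  rw [← hcol _ _ _ _ hs]
  rfl
end

section
/- Let T be a complete first-order theory. If for every model M of T every formula φ(x;y) with parameters from M, where x and y are single variables, does not have the order property, then T is NIP; and consequently (by the argument via totally indiscernible sequences) T is stable. In other words, the stable case of the main theorem follows from the NIP case: if T is NIP and every formula in two single variables with parameters lacks the order property, then T is stable. -/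
open FirstOrder FirstOrder.Language

universe u v

namespace StableTwoVar

open Filter

/-- The iterated product of the ultrafilter `U` with itself. -/
noncomputable def prodU (U : Ultrafilter ℕ) : (n : ℕ) → Ultrafilter (Fin n → ℕ)
  | 0 => pure Fin.elim0
  | n + 1 => U.bind fun j => (prodU U n).map (Fin.cons (α := fun _ => ℕ) j)

theorem eventually_prodU_succ (U : Ultrafilter ℕ) (n : ℕ) (P : (Fin (n + 1) → ℕ) → Prop) :
    (∀ᶠ v in (prodU U (n + 1) : Filter _), P v) ↔
      ∀ᶠ j in (U : Filter ℕ), ∀ᶠ v in (prodU U n : Filter _), P (Fin.cons j v) :=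
  Iff.rfl

/-- The quantifier `∀ᵁ j₀ … ∀ᵁ j_{p-1} ∀ᵁ i ∀ᵁ j_p … ∀ᵁ j_{n-1}`. -/
def GenI (U : Ultrafilter ℕ) : (p n : ℕ) → (ℕ → (Fin n → ℕ) → Prop) → Prop
  | 0, n, R => ∀ᶠ i in (U : Filter ℕ), ∀ᶠ v in (prodU U n : Filter _), R i v
  | _ + 1, 0, _ => False
  | p + 1, n + 1, R => ∀ᶠ j in (U : Filter ℕ), GenI U p n fun i v => R i (Fin.cons j v)

theorem GenI.mono {U : Ultrafilter ℕ} : ∀ {p n : ℕ} {R S : ℕ → (Fin n → ℕ) → Prop},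
    (∀ i v, R i v → S i v) → GenI U p n R → GenI U p n S
  | 0, _, _, _, h, hR => by
      unfold GenI at *
      exact hR.mono fun i hi => hi.mono fun v hv => h i v hv
  | _ + 1, 0, _, _, _, hR => by simp [GenI] at hR
  | p + 1, n + 1, _, _, h, hR => by
      unfold GenI at *
      exact hR.mono fun j hj => GenI.mono (fun i v hv => h i _ hv) hj

/-- A finite ladder in the relation `A` from failure of commutation of limits. -/
theorem ladder_of_not_comm (U : Ultrafilter ℕ) (A : ℕ → ℕ → Prop)
    (h1 : ∀ᶠ j in (U : Filter ℕ), ∀ᶠ i in (U : Filter ℕ), A i j)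
    (h2 : ∀ᶠ i in (U : Filter ℕ), ∀ᶠ j in (U : Filter ℕ), ¬ A i j) (N : ℕ) :
    ∃ ii jj : ℕ → ℕ, (∀ s < N, ∀ᶠ j in (U : Filter ℕ), ¬ A (ii s) j) ∧
      (∀ t < N, ∀ᶠ i in (U : Filter ℕ), A i (jj t)) ∧
      ∀ s < N, ∀ t < N, (A (ii s) (jj t) ↔ t < s) := by
  induction N with
  | zero => exact ⟨id, id, by simp, by simp, by simp⟩
  | succ N ih =>
    obtain ⟨ii, jj, hi, hj, hA⟩ := ih
    have e1 : ∀ᶠ i in (U : Filter ℕ), ∀ t ∈ Set.Iio N, A i (jj t) :=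
      (eventually_all_finite (Set.finite_Iio N)).2 hj
    obtain ⟨i', hi1, hi2⟩ := (e1.and h2).exists
    have e2 : ∀ᶠ j in (U : Filter ℕ), ∀ s ∈ Set.Iio N, ¬ A (ii s) j :=
      (eventually_all_finite (Set.finite_Iio N)).2 hi
    obtain ⟨j', ⟨hj1, hj2⟩, hj3⟩ := ((e2.and h1).and hi2).exists
    refine ⟨Function.update ii N i', Function.update jj N j', ?_, ?_, ?_⟩
    · intro s hs
      rcases Nat.lt_succ_iff_lt_or_eq.1 hs with h | rfl
      · rw [Function.update_of_ne h.ne]; exact hi s h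
      · rw [Function.update_self]; exact hi2
    · intro s hs
      rcases Nat.lt_succ_iff_lt_or_eq.1 hs with h | rfl
      · rw [Function.update_of_ne h.ne]; exact hj s h
      · rw [Function.update_self]; exact hj2
    · intro s hs t ht
      rcases Nat.lt_succ_iff_lt_or_eq.1 hs with h | rfl
      · rcases Nat.lt_succ_iff_lt_or_eq.1 ht with h' | rfl
        · rw [Function.update_of_ne h.ne, Function.update_of_ne h'.ne]; exact hA s h t h'
        · rw [Function.update_of_ne h.ne, Function.update_self]
          exact iff_of_false (hj1 s h) (by omega)
      · rcases Nat.lt_succ_iff_lt_or_eq.1 ht with h' | rfl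
        · rw [Function.update_self, Function.update_of_ne h'.ne]
          exact iff_of_true (hi1 t h') h'
        · rw [Function.update_self, Function.update_self]
          exact iff_of_false hj3 (by omega)

/-- A relation has a ladder of length `N`. -/
def Ladder (N : ℕ) (A : ℕ → ℕ → Prop) : Prop :=
  ∃ ii jj : ℕ → ℕ, ∀ s < N, ∀ t < N, (A (ii s) (jj t) ↔ s < t)

theorem comm_lim (U : Ultrafilter ℕ) {X : Type*} (V : Ultrafilter X) (R : ℕ → ℕ → X → Prop)
    (N : ℕ) (hN : ∀ v, ¬ Ladder N fun i j => R i j v)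
    (h1 : ∀ᶠ j in (U : Filter ℕ), ∀ᶠ i in (U : Filter ℕ), ∀ᶠ v in (V : Filter X), R i j v) :
    ∀ᶠ i in (U : Filter ℕ), ∀ᶠ j in (U : Filter ℕ), ∀ᶠ v in (V : Filter X), R i j v := by
  by_contra hcon
  have h2 : ∀ᶠ i in (U : Filter ℕ), ∀ᶠ j in (U : Filter ℕ), ¬ ∀ᶠ v in (V : Filter X), R i j v := by
    rw [← Ultrafilter.eventually_not] at hcon
    exact hcon.mono fun i hi => Ultrafilter.eventually_not.2 hi
  obtain ⟨ii, jj, -, -, hA⟩ := ladder_of_not_comm U _ h1 h2 N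
  have e : ∀ᶠ v in (V : Filter X), ∀ s ∈ Set.Iio N, ∀ t ∈ Set.Iio N,
      (R (ii s) (jj t) v ↔ t < s) := by
    refine (eventually_all_finite (Set.finite_Iio N)).2 fun s hs => ?_
    refine (eventually_all_finite (Set.finite_Iio N)).2 fun t ht => ?_
    by_cases hts : t < s
    · exact ((hA s hs t ht).2 hts).mono fun v hv => iff_of_true hv hts
    · have := mt (hA s hs t ht).1 hts
      exact (Ultrafilter.eventually_not.2 this).mono fun v hv => iff_of_false hv hts
  obtain ⟨v, hv⟩ := e.exists
  refine hN v ⟨fun s => ii (N - 1 - s), fun t => jj (N - 1 - t), fun s hs t ht => ?_⟩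
  beta_reduce
  rw [hv (N - 1 - s) (by simp; omega) (N - 1 - t) (by simp; omega)]
  omega

theorem GenI.to_zero (U : Ultrafilter ℕ) : ∀ (p n : ℕ) (R : ℕ → (Fin n → ℕ) → Prop),
    (∀ m : Fin n, ∃ N, ∀ v, ¬ Ladder N fun i j => R i (Function.update v m j)) →
    GenI U p n R → GenI U 0 n R
  | 0, _, _, _, h => h
  | _ + 1, 0, _, _, h => by simp [GenI] at h
  | p + 1, n + 1, R, hR, h => by
      have h' : ∀ᶠ j in (U : Filter ℕ), GenI U 0 n fun i v => R i (Fin.cons j v) := by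
        unfold GenI at h
        refine h.mono fun j hj => GenI.to_zero U p n _ (fun m => ?_) hj
        obtain ⟨N, hN⟩ := hR m.succ
        refine ⟨N, fun v => ?_⟩
        have := hN (Fin.cons j v)
        simpa only [← Fin.cons_update] using this
      unfold GenI at h' ⊢
      obtain ⟨N, hN⟩ := hR 0
      refine comm_lim U (prodU U n) (fun i j v => R i (Fin.cons j v)) N (fun v => ?_) h'
      have := hN (Fin.cons 0 v)
      simpa only [Fin.update_cons_zero] using this

theorem eventually_prodU_lt (U : Ultrafilter ℕ) (hU : (U : Filter ℕ) ≤ atTop) (i : ℕ) :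
    ∀ n : ℕ, ∀ᶠ v in (prodU U n : Filter (Fin n → ℕ)), ∀ m : Fin n, i < v m
  | 0 => Eventually.of_forall fun v m => m.elim0
  | n + 1 => by
      rw [eventually_prodU_succ]
      refine ((eventually_gt_atTop i).filter_mono hU).mono fun j hj => ?_
      refine (eventually_prodU_lt U hU i n).mono fun v hv m => ?_
      refine Fin.cases ?_ (fun m => ?_) m
      · simpa using hj
      · simpa using hv m

theorem genI_order (U : Ultrafilter ℕ) (hU : (U : Filter ℕ) ≤ atTop) :
    ∀ (p n : ℕ) (_ : p ≤ n) (C : ℕ), GenI U p n fun i v =>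
      C ≤ i ∧ ∀ m : Fin n, (i < v m ↔ p ≤ (m : ℕ))
  | 0, n, _, C => by
      unfold GenI
      refine ((eventually_ge_atTop C).filter_mono hU).mono fun i hi => ?_
      exact (eventually_prodU_lt U hU i n).mono fun v hv => ⟨hi, fun m => by simp [hv m]⟩
  | p + 1, 0, h, _ => by omega
  | p + 1, n + 1, h, C => by
      unfold GenI
      refine Eventually.of_forall fun j => ?_
      refine GenI.mono ?_ (genI_order U hU p n (by omega) (max C j))
      rintro i v ⟨hC, hv⟩
      refine ⟨le_trans (le_max_left _ _) hC, fun m => ?_⟩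
      refine Fin.cases ?_ (fun m => ?_) m
      · simpa using le_trans (le_max_right _ _) hC
      · simpa using hv m

/-- `φ` has ladders of length `n` in some model of `T`, for some parameters. -/
def HasLad {L : FirstOrder.Language.{u, v}} (T : L.Theory) {α β γ : Type}
    (φ : L.Formula ((α ⊕ β) ⊕ γ)) (n : ℕ) : Prop :=
  ∃ (M : FirstOrder.Language.Theory.ModelType.{u, v, max u v} T) (c : γ → M)
    (a : ℕ → α → M) (b : ℕ → β → M), ∀ i < n, ∀ j < n,
      (φ.Realize (Sum.elim (Sum.elim (a i) (b j)) c) ↔ i < j)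

/-- Some formula with parameters in variables `α`, `β` has arbitrarily long ladders. -/
def Unst {L : FirstOrder.Language.{u, v}} (T : L.Theory) (α β : Type) : Prop :=
  ∃ (γ : Type) (_ : Finite γ) (φ : L.Formula ((α ⊕ β) ⊕ γ)), ∀ n, HasLad T φ n

theorem infinite_ladder {L : FirstOrder.Language.{u, v}} (T : L.Theory) {α β γ : Type}
    (φ : L.Formula ((α ⊕ β) ⊕ γ)) (h : ∀ n, HasLad T φ n) :
    ∃ (M : FirstOrder.Language.Theory.ModelType.{u, v, max u v} T) (c : γ → M)
    (a : ℕ → α → M) (b : ℕ → β → M), ∀ i j,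
      (φ.Realize (Sum.elim (Sum.elim (a i) (b j)) c) ↔ i < j) := by
  choose M c a b hab using h
  let U : Ultrafilter ℕ := hyperfilter ℕ
  let P := (U : Filter ℕ).Product fun n => (M n : Type (max u v))
  haveI : P ⊨ T := by
    refine ⟨fun σ hσ => ?_⟩
    refine (Ultraproduct.sentence_realize (u := U) (M := fun n => (M n : Type (max u v))) σ).2 ?_
    exact Eventually.of_forall fun n => Theory.realize_sentence_of_mem T hσ
  haveI : Nonempty P := Ultraproduct.Product.instNonempty
  refine ⟨⟨P⟩, fun z => Quotient.mk _ fun n => c n z, fun i x => Quotient.mk _ fun n => a n i x,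
    fun j y => Quotient.mk _ fun n => b n j y, fun i j => ?_⟩
  have key := Ultraproduct.realize_formula_cast (u := U) (M := fun n => (M n : Type (max u v))) φ
    (Sum.elim (Sum.elim (fun x n => a n i x) (fun y n => b n j y)) (fun z n => c n z))
  have e1 : (fun w => (Quotient.mk _ ((Sum.elim (Sum.elim (fun x n => a n i x)
      (fun y n => b n j y)) (fun z n => c n z) : _ → ∀ n, M n) w) : P)) =
      Sum.elim (Sum.elim (fun x => Quotient.mk _ fun n => a n i x)
        (fun y => Quotient.mk _ fun n => b n j y)) (fun z => Quotient.mk _ fun n => c n z) := by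
    funext w
    rcases w with (w | w) | w <;> rfl
  have e2 : ∀ n, (fun w => (Sum.elim (Sum.elim (fun x n => a n i x)
      (fun y n => b n j y)) (fun z n => c n z) : _ → ∀ n, M n) w n) =
      Sum.elim (Sum.elim (a n i) (b n j)) (c n) := by
    intro n
    funext w
    rcases w with (w | w) | w <;> rfl
  refine Iff.trans (iff_of_eq (congrArg _ e1.symm)) (key.trans ?_)
  simp only [e2]
  have ev : ∀ᶠ n in (U : Filter ℕ), max i j < n :=
    Nat.hyperfilter_le_atTop (eventually_gt_atTop _)
  constructor
  · intro hh
    obtain ⟨n, h1, h2⟩ := (hh.and ev).exists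
    exact (hab n i (lt_of_le_of_lt (le_max_left _ _) h2) j
      (lt_of_le_of_lt (le_max_right _ _) h2)).1 h1
  · intro hij
    exact ev.mono fun n h2 => (hab n i (lt_of_le_of_lt (le_max_left _ _) h2) j
      (lt_of_le_of_lt (le_max_right _ _) h2)).2 hij

/-- The variable assignment used in `chi`. -/
def chiVar {α β γ δ : Type} {n : ℕ} (m : Fin n) :
    ((α ⊕ δ) ⊕ β) ⊕ γ → (α ⊕ ((Fin n × β) ⊕ γ)) ⊕ δ
  | .inl (.inl (.inl x)) => .inl (.inl x)
  | .inl (.inl (.inr w)) => .inr w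
  | .inl (.inr y) => .inl (.inr (.inl (m, y)))
  | .inr z => .inl (.inr (.inr z))

open Classical in
/-- The formula saying that there is `w` such that `φ(x w; y_m; z)` holds iff `k < m`. -/
noncomputable def chi {L : FirstOrder.Language.{u, v}} {α β γ δ : Type} [Finite δ]
    (φ : L.Formula (((α ⊕ δ) ⊕ β) ⊕ γ)) (n k : ℕ) : L.Formula (α ⊕ ((Fin n × β) ⊕ γ)) :=
  Formula.iExs δ (Formula.iInf fun m : Fin n =>
    if k < (m : ℕ) then φ.relabel (chiVar m) else (φ.relabel (chiVar m)).not)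

theorem realize_chi {L : FirstOrder.Language.{u, v}} {α β γ δ : Type} [Finite δ]
    (φ : L.Formula (((α ⊕ δ) ⊕ β) ⊕ γ)) (n k : ℕ) {M : Type*} [L.Structure M]
    (x : α → M) (y : Fin n → β → M) (z : γ → M) :
    (chi φ n k).Realize (Sum.elim x (Sum.elim (fun q => y q.1 q.2) z)) ↔
      ∃ w : δ → M, ∀ m : Fin n,
        (φ.Realize (Sum.elim (Sum.elim (Sum.elim x w) (y m)) z) ↔ k < (m : ℕ)) := by
  unfold chi
  rw [Formula.realize_iExs]
  refine exists_congr fun w => ?_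
  rw [Formula.realize_iInf]
  refine forall_congr' fun m => ?_
  have e : (Sum.elim (Sum.elim x (Sum.elim (fun q : Fin n × β => y q.1 q.2) z)) w) ∘ chiVar m =
      Sum.elim (Sum.elim (Sum.elim x w) (y m)) z := by
    funext q
    rcases q with ((q | q) | q) | q <;> rfl
  split_ifs with hk
  · rw [Formula.realize_relabel, e]; simp [hk]
  · rw [Formula.realize_not, Formula.realize_relabel, e]; simp [hk]

open Classical in
/-- Separate the `m`-th block of `y`-variables. -/
noncomputable def sepVar {α β γ : Type} {n : ℕ} (m : Fin n) :
    α ⊕ ((Fin n × β) ⊕ γ) → (α ⊕ β) ⊕ ((Fin n × β) ⊕ γ)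
  | .inl x => .inl (.inl x)
  | .inr (.inl q) => if q.1 = m then .inl (.inr q.2) else .inr (.inl q)
  | .inr (.inr z) => .inr (.inr z)

/-- The variable assignment moving `α` to the parameters. -/
def movVar {α β γ δ : Type} : ((α ⊕ δ) ⊕ β) ⊕ γ → (δ ⊕ β) ⊕ (α ⊕ γ)
  | .inl (.inl (.inl x)) => .inr (.inl x)
  | .inl (.inl (.inr w)) => .inl (.inl w)
  | .inl (.inr y) => .inl (.inr y)
  | .inr z => .inr (.inr z)

theorem unst_step {L : FirstOrder.Language.{u, v}} (T : L.Theory) {α β δ : Type}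
    [Finite β] [Finite α] [Finite δ] (h : Unst T (α ⊕ δ) β) (hα : ¬ Unst T α β) :
    Unst T δ β := by
  obtain ⟨γ, hγ, φ, hφ⟩ := h
  obtain ⟨M, c, a, b, hab⟩ := infinite_ladder T φ hφ
  refine ⟨α ⊕ γ, inferInstance, φ.relabel movVar, fun n => ?_⟩
  let U : Ultrafilter ℕ := hyperfilter ℕ
  have hU : (U : Filter ℕ) ≤ atTop := Nat.hyperfilter_le_atTop
  let R : ℕ → ℕ → (Fin n → ℕ) → Prop := fun k i v =>
    (chi φ n k).Realize (Sum.elim (fun x => a i (.inl x))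
      (Sum.elim (fun q : Fin n × β => b (v q.1) q.2) c))
  have hR : ∀ k i v, R k i v ↔ ∃ w : δ → M, ∀ m : Fin n,
        (φ.Realize (Sum.elim (Sum.elim (Sum.elim (fun x => a i (.inl x)) w) (b (v m))) c) ↔
          k < (m : ℕ)) := fun k i v =>
    realize_chi φ n k (fun x => a i (.inl x)) (fun m => b (v m)) c
  have hbound : ∀ k (m : Fin n), ∃ N, ∀ v,
      ¬ Ladder N fun i j => R k i (Function.update v m j) := by
    intro k m
    by_contra hcon
    push Not at hcon
    refine hα ⟨(Fin n × β) ⊕ γ, inferInstance, (chi φ n k).relabel (sepVar m), fun N => ?_⟩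
    obtain ⟨v, ii, jj, hl⟩ := hcon N
    refine ⟨M, Sum.elim (fun q : Fin n × β => b (v q.1) q.2) c, fun s x => a (ii s) (.inl x),
      fun t => b (jj t), fun s hs t ht => ?_⟩
    rw [← hl s hs t ht, Formula.realize_relabel]
    refine iff_of_eq (congrArg _ ?_)
    funext q
    rcases q with q | ⟨m', y⟩ | q
    · rfl
    · by_cases hm : m' = m
      · subst hm; simp [sepVar]
      · simp [sepVar, hm]
    · rfl
  have hgen : ∀ k < n, GenI U 0 n (R k) := by
    intro k hk
    refine GenI.to_zero U (k + 1) n (R k) (hbound k) ?_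
    refine GenI.mono ?_ (genI_order U hU (k + 1) n hk 0)
    rintro i v ⟨-, hv⟩
    rw [hR]
    refine ⟨fun w => a i (.inr w), fun m => ?_⟩
    have e : (Sum.elim (fun x => a i (.inl x)) (fun w => a i (.inr w))) = a i := by
      funext q; rcases q with q | q <;> rfl
    rw [e, hab, hv m]
    omega
  have hall : ∀ᶠ i in (U : Filter ℕ), ∀ k ∈ Set.Iio n,
      ∀ᶠ v in (prodU U n : Filter _), R k i v :=
    (eventually_all_finite (Set.finite_Iio n)).2 fun k hk => by
      have := hgen k hk
      unfold GenI at this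
      exact this
  obtain ⟨i, hi⟩ := hall.exists
  obtain ⟨v, hv⟩ := ((eventually_all_finite (Set.finite_Iio n)).2 hi).exists
  have hv' : ∀ k, ∃ w : δ → M, k < n → ∀ m : Fin n,
        (φ.Realize (Sum.elim (Sum.elim (Sum.elim (fun x => a i (.inl x)) w) (b (v m))) c) ↔
          k < (m : ℕ)) := by
    intro k
    by_cases hk : k < n
    · obtain ⟨w, hw⟩ := (hR k i v).1 (hv k hk)
      exact ⟨w, fun _ => hw⟩
    · exact ⟨fun w => a 0 (.inr w), fun h => absurd h hk⟩
  choose w hw using hv'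
  refine ⟨M, Sum.elim (fun x => a i (.inl x)) c, w,
    fun j => if hj : j < n then b (v ⟨j, hj⟩) else b 0, fun k hk j hj => ?_⟩
  rw [← hw k hk ⟨j, hj⟩, Formula.realize_relabel]
  beta_reduce
  rw [dif_pos hj]
  refine iff_of_eq (congrArg _ ?_)
  funext q
  rcases q with ((q | q) | q) | q <;> rfl

theorem unst_swap {L : FirstOrder.Language.{u, v}} (T : L.Theory) {α β : Type}
    (h : Unst T α β) : Unst T β α := by
  obtain ⟨γ, hγ, φ, hφ⟩ := h
  refine ⟨γ, hγ, φ.relabel (Sum.map Sum.swap id), fun n => ?_⟩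
  obtain ⟨M, c, a, b, hab⟩ := hφ n
  refine ⟨M, c, fun i => b (n - 1 - i), fun j => a (n - 1 - j), fun i hi j hj => ?_⟩
  rw [Formula.realize_relabel]
  have e : Sum.elim (Sum.elim (b (n - 1 - i)) (a (n - 1 - j))) c ∘ Sum.map Sum.swap id =
      Sum.elim (Sum.elim (a (n - 1 - j)) (b (n - 1 - i))) c := by
    funext q
    rcases q with (q | q) | q <;> rfl
  rw [e, hab _ (by omega) _ (by omega)]
  omega

theorem unst_equiv {L : FirstOrder.Language.{u, v}} (T : L.Theory) {α α' β : Type}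
    (e : α ≃ α') (h : Unst T α β) : Unst T α' β := by
  obtain ⟨γ, hγ, φ, hφ⟩ := h
  refine ⟨γ, hγ, φ.relabel (Sum.map (Sum.map e id) id), fun n => ?_⟩
  obtain ⟨M, c, a, b, hab⟩ := hφ n
  refine ⟨M, c, fun i => a i ∘ e.symm, b, fun i hi j hj => ?_⟩
  rw [Formula.realize_relabel, ← hab i hi j hj]
  refine iff_of_eq (congrArg _ ?_)
  funext q
  rcases q with (q | q) | q <;> simp

theorem not_unst_empty {L : FirstOrder.Language.{u, v}} (T : L.Theory) {α β : Type}
    [IsEmpty α] : ¬ Unst T α β := by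
  rintro ⟨γ, hγ, φ, hφ⟩
  obtain ⟨M, c, a, b, hab⟩ := hφ 2
  have h1 := (hab 0 (by omega) 1 (by omega)).2 (by omega)
  rw [Subsingleton.elim (a 0) (a 1), hab 1 (by omega) 1 (by omega)] at h1
  omega

theorem unst_one {L : FirstOrder.Language.{u, v}} (T : L.Theory) {β : Type} [Finite β] (p : ℕ)
    (h : Unst T (Fin p) β) : Unst T (Fin 1) β := by
  induction p with
  | zero => exact absurd h (not_unst_empty T)
  | succ p ih =>
    by_cases h' : Unst T (Fin p) β
    · exact ih h'
    · exact unst_step T (unst_equiv T finSumFinEquiv.symm h) h'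

theorem not_op {L : FirstOrder.Language.{u, v}} (T : L.Theory)
    (h : ∀ (M : Type (max u v)) [L.Structure M] [Nonempty M], M ⊨ T →
      ∀ (k : ℕ) (φ : L.Formula ((Fin 1 ⊕ Fin 1) ⊕ Fin k)) (c : Fin k → M),
        ¬ HasOPWithParams φ c)
    (m n : ℕ) (φ : L.Formula (Fin m ⊕ Fin n)) : ¬ FormulaHasOP T φ := by
  rintro ⟨N, a, b, hab⟩
  have h0 : Unst T (Fin m) (Fin n) := by
    refine ⟨Fin 0, inferInstance, φ.relabel Sum.inl, fun l => ⟨N, Fin.elim0, a, b, ?_⟩⟩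
    intro i _ j _
    rw [Formula.realize_relabel, Sum.elim_comp_inl]
    exact hab i j
  obtain ⟨γ, hγ, ψ, hψ⟩ := unst_one T n (unst_swap T (unst_one T m h0))
  obtain ⟨M, c, a, b, hab⟩ := infinite_ladder T ψ hψ
  obtain ⟨k, ⟨e⟩⟩ := Finite.exists_equiv_fin γ
  refine h M M.is_model k (ψ.relabel (Sum.map id e)) (c ∘ e.symm)
    ⟨⟨M, ElementaryEmbedding.refl L M⟩, a, b, fun i j => ?_⟩
  rw [Formula.realize_relabel, ← hab i j]
  refine iff_of_eq (congrArg _ ?_)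
  funext q
  rcases q with (q | q) | q <;> simp

end StableTwoVar

/-- If in every model `M` of the complete theory `T` no formula `φ(x; y)` in two
single variables with parameters from `M` has the order property, then `T` is NIP, and
consequently `T` is stable. -/
theorem nip_and_stable_of_two_single_variables_no_order_property
    {L : FirstOrder.Language.{u, v}} (T : L.Theory) (hT : T.IsComplete)
    (h : ∀ (M : Type (max u v)) [L.Structure M] [Nonempty M], M ⊨ T →
      ∀ (k : ℕ) (φ : L.Formula ((Fin 1 ⊕ Fin 1) ⊕ Fin k)) (c : Fin k → M),
        ¬ HasOPWithParams φ c) :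
    (∀ (m n : ℕ) (φ : L.Formula (Fin m ⊕ Fin n)), ¬ FormulaHasIP T φ) ∧
      (∀ (m n : ℕ) (φ : L.Formula (Fin m ⊕ Fin n)), ¬ FormulaHasOP T φ) := by
  refine ⟨fun m n φ hIP => ?_, StableTwoVar.not_op T h⟩
  obtain ⟨N, a, b, hab⟩ := hIP
  exact StableTwoVar.not_op T h m n φ
    ⟨N, a, fun j => b {i | i < j}, fun i j => by rw [hab]; exact Iff.rfl⟩
end
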